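/- arXiv:2302.12300 — 9 statements merged into one kernel-verified Lean document; each statement's English description precedes it below -/
import Mathlib

section
/- Let μ₁ be a finite Borel measure on ℝ with compact support and let μ₂ be a diffuse finite Borel measure on ℝ with compact support (μ₂({x}) = 0 for every x). Let 1 < p ≤ q < ∞ with p' = p/(p−1) and q' = q/(q−1). If B := sup_{r∈ℝ} μ₂([r,+∞))^{1/q} μ₁((−∞,r))^{1/p'} is finite, then for every Borel measurable function f : ℝ → [0,+∞], (∫_ℝ (∫_{(−∞,r)} f dμ₁)^q dμ₂(r))^{1/q} ≤ min((p')^{1/p'} p^{1/q}, (q')^{1/p'} q^{1/q}) B (∫_ℝ f^p dμ₁)^{1/p}. In particular, μ₁ is allowed to have atoms. -/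
open MeasureTheory ENNReal
open scoped NNReal

theorem hh_small (μ : Measure ℝ) [IsFiniteMeasure μ] (S : Set ℝ) (hS : MeasurableSet S)
    (t : ℝ≥0∞) (h : ∀ s ∈ S, μ (Set.Iic s) ≤ t) : μ S ≤ t := by
  by_contra hc
  push Not at hc
  obtain ⟨K, hKS, hK, hlt⟩ := hS.exists_lt_isCompact hc
  have hne : K.Nonempty := by
    rcases Set.eq_empty_or_nonempty K with h0 | h0
    · simp [h0] at hlt
    · exact h0
  obtain ⟨x, hx⟩ := hK.exists_isGreatest hne
  have : μ K ≤ μ (Set.Iic x) := measure_mono fun y hy => hx.2 hy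
  exact absurd (this.trans (h x (hKS hx.1))) (not_le.2 hlt)

theorem hh_mono (μ : Measure ℝ) : Monotone fun s => μ (Set.Iic s) :=
  fun _ _ h => measure_mono (Set.Iic_subset_Iic.2 h)

theorem hh_ae_ne (μ : Measure ℝ) [IsFiniteMeasure μ] : ∀ᵐ s ∂μ, μ (Set.Iic s) ≠ 0 := by
  rw [ae_iff]
  have hm : MeasurableSet {s | ¬ μ (Set.Iic s) ≠ 0} := by
    simp only [not_not]
    exact (hh_mono μ).measurable (measurableSet_singleton 0)
  refine le_antisymm (hh_small μ _ hm 0 fun s hs => ?_) bot_le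
  simp only [not_not, Set.mem_ofPred_eq] at hs
  exact hs.le

theorem hh_layer (μ : Measure ℝ) [IsFiniteMeasure μ] (b : ℝ) (hb0 : 0 < b) (hb1 : b < 1) (r : ℝ) :
    ∫⁻ s in Set.Iio r, μ (Set.Iic s) ^ (-b) ∂μ ≤
      ENNReal.ofReal (1 / (1 - b)) * μ (Set.Iio r) ^ (1 - b) := by
  set m : ℝ := (μ (Set.Iio r)).toReal with hm
  have hm0 : 0 ≤ m := ENNReal.toReal_nonneg
  have hmm : μ (Set.Iio r) = ENNReal.ofReal m := (ENNReal.ofReal_toReal (measure_ne_top _ _)).symm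
  have hGm : Measurable fun s => (μ (Set.Iic s)).toReal ^ (-b) :=
    ((hh_mono μ).measurable.ennreal_toReal).pow_const _
  have e1 : ∫⁻ s in Set.Iio r, μ (Set.Iic s) ^ (-b) ∂μ
      = ∫⁻ s in Set.Iio r, ENNReal.ofReal ((μ (Set.Iic s)).toReal ^ (-b)) ∂μ := by
    apply lintegral_congr_ae
    filter_upwards [ae_restrict_of_ae (hh_ae_ne μ)] with s hs
    rw [← ENNReal.ofReal_rpow_of_pos (ENNReal.toReal_pos hs (measure_ne_top _ _)),
      ENNReal.ofReal_toReal (measure_ne_top _ _)]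
  have e2 : ∫⁻ x in Set.Ioo 0 m, ENNReal.ofReal (x ^ (-b)) =
      ENNReal.ofReal (1 / (1 - b)) * μ (Set.Iio r) ^ (1 - b) := by
    have hi : IntervalIntegrable (fun x : ℝ => x ^ (-b)) volume 0 m :=
      intervalIntegral.intervalIntegrable_rpow' (by linarith)
    rw [intervalIntegrable_iff_integrableOn_Ioo_of_le hm0] at hi
    rw [← ofReal_integral_eq_lintegral_ofReal hi, ← integral_Ioc_eq_integral_Ioo,
      ← intervalIntegral.integral_of_le hm0, integral_rpow (Or.inl (by linarith)), hmm,
      ENNReal.ofReal_rpow_of_nonneg hm0 (by linarith), ← ENNReal.ofReal_mul (by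
        apply div_nonneg <;> linarith)]
    · congr 1
      rw [Real.zero_rpow (by linarith), show -b + 1 = 1 - b by ring]
      ring
    · filter_upwards [ae_restrict_mem measurableSet_Ioo] with x hx
      exact Real.rpow_nonneg hx.1.le _
  rw [e1, ← e2]
  rw [lintegral_eq_lintegral_meas_lt _ (Filter.Eventually.of_forall fun s =>
      Real.rpow_nonneg ENNReal.toReal_nonneg _) hGm.aemeasurable,
    lintegral_eq_lintegral_meas_lt _ (by
      filter_upwards [ae_restrict_mem measurableSet_Ioo] with x hx
      exact Real.rpow_nonneg hx.1.le _) (by fun_prop)]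
  apply setLIntegral_mono' measurableSet_Ioi
  intro t ht
  have ht : 0 < t := ht
  rw [Measure.restrict_apply (measurableSet_lt measurable_const hGm),
    Measure.restrict_apply (measurableSet_lt measurable_const (by fun_prop))]
  have key : ∀ x : ℝ, 0 < x → (t < x ^ (-b) ↔ x < t ^ (-b)⁻¹) := fun x hx => by
    rw [Real.lt_rpow_inv_iff_of_neg hx ht (by linarith)]
  have hset : {a : ℝ | t < a ^ (-b)} ∩ Set.Ioo 0 m = Set.Ioo 0 (min m (t ^ (-b)⁻¹)) := by
    ext x
    simp only [Set.mem_inter_iff, Set.mem_ofPred_eq, Set.mem_Ioo, lt_min_iff]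
    constructor
    · rintro ⟨h1, h2, h3⟩
      exact ⟨h2, h3, (key x h2).1 h1⟩
    · rintro ⟨h2, h3, h1⟩
      exact ⟨(key x h2).2 h1, h2, h3⟩
  rw [hset, Real.volume_Ioo, sub_zero]
  rw [Monotone.map_min (f := ENNReal.ofReal) (fun _ _ h => ENNReal.ofReal_le_ofReal h), ← hmm]
  apply le_min (measure_mono Set.inter_subset_right)
  apply hh_small _ _ ((measurableSet_lt measurable_const hGm).inter measurableSet_Iio)
  rintro s ⟨hs, -⟩
  have hs : t < (μ (Set.Iic s)).toReal ^ (-b) := hs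
  rw [← ENNReal.ofReal_toReal (measure_ne_top μ (Set.Iic s))]
  apply ENNReal.ofReal_le_ofReal
  rcases (ENNReal.toReal_nonneg (a := μ (Set.Iic s))).eq_or_lt with h0 | h0
  · rw [← h0]; positivity
  · exact ((key _ h0).1 hs).le

theorem hh_refl (μ : Measure ℝ) (s : Set ℝ) : (μ.map Neg.neg) s = μ (Neg.neg ⁻¹' s) :=
  (MeasurableEquiv.neg ℝ).map_apply s

theorem hh_layer' (μ : Measure ℝ) [IsFiniteMeasure μ] (b : ℝ) (hb0 : 0 < b) (hb1 : b < 1) (r : ℝ) :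
    ∫⁻ s in Set.Ioi r, μ (Set.Ici s) ^ (-b) ∂μ ≤
      ENNReal.ofReal (1 / (1 - b)) * μ (Set.Ioi r) ^ (1 - b) := by
  have h := hh_layer (μ.map Neg.neg) b hb0 hb1 (-r)
  have hme : MeasurableEmbedding (Neg.neg : ℝ → ℝ) := (MeasurableEquiv.neg ℝ).measurableEmbedding
  rw [hme.restrict_map, hme.lintegral_map] at h
  simpa [hh_refl] using h

theorem hh_ae_ne' (μ : Measure ℝ) [IsFiniteMeasure μ] : ∀ᵐ s ∂μ, μ (Set.Ici s) ≠ 0 := by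
  have h := hh_ae_ne (μ.map Neg.neg)
  have hme : MeasurableEmbedding (Neg.neg : ℝ → ℝ) := (MeasurableEquiv.neg ℝ).measurableEmbedding
  rw [hme.ae_map_iff] at h
  simpa [hh_refl] using h

theorem hh_minkowski (μ₁ μ₂ : Measure ℝ) [IsFiniteMeasure μ₁] [IsFiniteMeasure μ₂]
    (k : ℝ) (hk : 1 ≤ k) (g : ℝ → ℝ → ℝ≥0∞) (hg : Measurable (Function.uncurry g)) :
    ∫⁻ r, (∫⁻ s, g r s ∂μ₁) ^ k ∂μ₂ ≤ (∫⁻ s, (∫⁻ r, g r s ^ k ∂μ₂) ^ (1 / k) ∂μ₁) ^ k := by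
  rcases hk.eq_or_lt with rfl | hk
  · simp only [ENNReal.rpow_one, div_one]
    exact (lintegral_lintegral_swap hg.aemeasurable).le
  have hk0 : 0 < k := by linarith
  set H : ℝ → ℝ≥0∞ := fun r => ∫⁻ s, g r s ∂μ₁ with hH
  have hHm : Measurable H := hg.lintegral_prod_right'
  set M := ∫⁻ s, (∫⁻ r, g r s ^ k ∂μ₂) ^ (1 / k) ∂μ₁ with hM
  have hn : ∀ n : ℕ, ∫⁻ r, (min (H r) n) ^ k ∂μ₂ ≤ M ^ k := by
    intro n
    set I := ∫⁻ r, (min (H r) n) ^ k ∂μ₂ with hI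
    have hIfin : I ≠ ⊤ := by
      have : I ≤ ∫⁻ _, (n : ℝ≥0∞) ^ k ∂μ₂ := lintegral_mono fun r =>
        ENNReal.rpow_le_rpow (min_le_right _ _) hk0.le
      refine ne_top_of_le_ne_top ?_ this
      rw [lintegral_const]
      exact ENNReal.mul_ne_top (ENNReal.rpow_ne_top_of_nonneg hk0.le (ENNReal.natCast_ne_top n))
        (measure_ne_top _ _)
    have hconj : k.HolderConjugate (k / (k - 1)) := Real.HolderConjugate.conjExponent hk
    have h1 : I ≤ M * I ^ ((k - 1) / k) := by
      have hHn : Measurable fun r => (min (H r) n) ^ (k - 1) :=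
        (hHm.min measurable_const).pow_const _
      calc I ≤ ∫⁻ r, H r * (min (H r) n) ^ (k - 1) ∂μ₂ := by
            apply lintegral_mono
            intro r
            dsimp only
            have : (min (H r) n) ^ k = (min (H r) n) * (min (H r) n) ^ (k - 1) := by
              conv_lhs => rw [show k = 1 + (k - 1) by ring]
              rw [ENNReal.rpow_add_of_nonneg _ _ (by norm_num) (by linarith), ENNReal.rpow_one]
            rw [this]
            gcongr
            exact min_le_left _ _
        _ = ∫⁻ r, ∫⁻ s, g r s * (min (H r) n) ^ (k - 1) ∂μ₁ ∂μ₂ := by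
            apply lintegral_congr
            intro r
            exact (lintegral_mul_const _ (hg.comp (measurable_prodMk_left (x := r)))).symm
        _ = ∫⁻ s, ∫⁻ r, g r s * (min (H r) n) ^ (k - 1) ∂μ₂ ∂μ₁ := by
            apply lintegral_lintegral_swap
            exact (hg.mul (hHn.comp measurable_fst)).aemeasurable
        _ ≤ ∫⁻ s, (∫⁻ r, g r s ^ k ∂μ₂) ^ (1 / k) * I ^ ((k - 1) / k) ∂μ₁ := by
            apply lintegral_mono
            intro s
            have := ENNReal.lintegral_mul_le_Lp_mul_Lq μ₂ hconj
              (f := fun r => g r s) (g := fun r => (min (H r) n) ^ (k - 1))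
              (hg.comp measurable_prodMk_right).aemeasurable hHn.aemeasurable
            have e : ∀ r, ((min (H r) n) ^ (k - 1)) ^ (k / (k - 1)) = (min (H r) n) ^ k := by
              intro r
              rw [← ENNReal.rpow_mul]
              congr 1
              have : k - 1 ≠ 0 := by linarith
              field_simp
            simp only [e, one_div_div, Pi.mul_apply] at this
            exact this
        _ = M * I ^ ((k - 1) / k) := by
            rw [lintegral_mul_const]
            exact (Measurable.lintegral_prod_left' (hg.pow_const k)).pow_const _
    by_cases hI0 : I = 0
    · rw [hI0]; exact bot_le
    have h2 : I ^ (1 / k) ≤ M := by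
      have e : I = I ^ (1 / k) * I ^ ((k - 1) / k) := by
        rw [← ENNReal.rpow_add _ _ hI0 hIfin]
        conv_lhs => rw [← ENNReal.rpow_one I]
        congr 1
        field_simp
        ring
      rw [e] at h1
      have hc0 : I ^ ((k - 1) / k) ≠ 0 := (ENNReal.rpow_pos (pos_iff_ne_zero.2 hI0) hIfin).ne'
      have hct : I ^ ((k - 1) / k) ≠ ⊤ :=
        ENNReal.rpow_ne_top_of_nonneg (div_nonneg (by linarith) hk0.le) hIfin
      rw [← e] at h1
      nth_rewrite 1 [e] at h1
      exact (ENNReal.mul_le_mul_iff_left hc0 hct).1 h1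
    calc I = (I ^ (1 / k)) ^ k := by
          rw [← ENNReal.rpow_mul, one_div_mul_cancel hk0.ne', ENNReal.rpow_one]
      _ ≤ M ^ k := ENNReal.rpow_le_rpow h2 hk0.le
  have hlim : ∀ r, H r ^ k ≤ ⨆ n : ℕ, (min (H r) n) ^ k := by
    intro r
    have ht : Filter.Tendsto (fun n : ℕ => (min (H r) n) ^ k) Filter.atTop (nhds (H r ^ k)) := by
      have h1 : Filter.Tendsto (fun n : ℕ => min (H r) (n : ℝ≥0∞)) Filter.atTop
          (nhds (min (H r) ⊤)) := tendsto_const_nhds.min ENNReal.tendsto_nat_nhds_top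
      rw [min_top_right] at h1
      exact (ENNReal.continuous_rpow_const.tendsto _).comp h1
    exact le_of_tendsto' ht fun n => le_iSup (fun n : ℕ => (min (H r) n) ^ k) n
  calc ∫⁻ r, H r ^ k ∂μ₂ ≤ ∫⁻ r, ⨆ n : ℕ, (min (H r) n) ^ k ∂μ₂ := lintegral_mono hlim
    _ = ⨆ n : ℕ, ∫⁻ r, (min (H r) n) ^ k ∂μ₂ := by
      apply lintegral_iSup
      · exact fun n => (hHm.min measurable_const).pow_const _
      · intro n m hnm r
        dsimp only
        gcongr
    _ ≤ M ^ k := iSup_le hn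

theorem hh_bound (μ₁ μ₂ : Measure ℝ) [IsFiniteMeasure μ₁] [IsFiniteMeasure μ₂]
    (x y : ℝ) (hx : 0 < x) (hy : 0 < y) (B : ℝ≥0∞)
    (hB : ∀ r : ℝ, μ₂ (Set.Ici r) ^ x * μ₁ (Set.Iio r) ^ y ≤ B) (s : ℝ) :
    μ₂ (Set.Ioi s) ^ x * μ₁ (Set.Iic s) ^ y ≤ B := by
  have hmono : Monotone fun n : ℕ => Set.Ici (s + 1 / ((n : ℝ) + 1)) := by
    intro n m h
    apply Set.Ici_subset_Ici.2
    have := Nat.one_div_le_one_div (α := ℝ) h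
    linarith
  have hU : ⋃ n : ℕ, Set.Ici (s + 1 / ((n : ℝ) + 1)) = Set.Ioi s := by
    ext z
    simp only [Set.mem_iUnion, Set.mem_Ici, Set.mem_Ioi]
    constructor
    · rintro ⟨n, hn⟩
      have : 0 < 1 / ((n : ℝ) + 1) := Nat.one_div_pos_of_nat
      linarith
    · intro h
      obtain ⟨n, hn⟩ := exists_nat_one_div_lt (sub_pos.2 h)
      exact ⟨n, by linarith⟩
  have ht := tendsto_measure_iUnion_atTop (μ := μ₂) hmono
  rw [hU] at ht
  have ht2 := ENNReal.Tendsto.mul_const (b := μ₁ (Set.Iic s) ^ y)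
    ((ENNReal.continuous_rpow_const (y := x)).tendsto _ |>.comp ht)
    (Or.inr (ENNReal.rpow_ne_top_of_nonneg hy.le (measure_ne_top _ _)))
  refine le_of_tendsto' ht2 fun n => ?_
  refine le_trans ?_ (hB (s + 1 / ((n : ℝ) + 1)))
  have hs : μ₁ (Set.Iic s) ≤ μ₁ (Set.Iio (s + 1 / ((n : ℝ) + 1))) := by
    apply measure_mono
    intro z hz
    have : 0 < 1 / ((n : ℝ) + 1) := Nat.one_div_pos_of_nat
    have hz : z ≤ s := hz
    show z < _
    linarith
  simp only [Function.comp_apply]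
  gcongr

theorem hh_core (μ₁ μ₂ : Measure ℝ) [IsFiniteMeasure μ₁] [IsFiniteMeasure μ₂]
    (p q p' θ : ℝ) (hp : 1 < p) (hpq : p ≤ q) (hp' : p' = p / (p - 1))
    (hθ0 : 0 < θ) (hθ1 : θ < 1) (B : ℝ≥0∞)
    (hB : ∀ r : ℝ, μ₂ (Set.Ici r) ^ (1 / q) * μ₁ (Set.Iio r) ^ (1 / p') ≤ B)
    (f : ℝ → ℝ≥0∞) (hf : Measurable f) :
    (∫⁻ r, (∫⁻ s in Set.Iio r, f s ∂μ₁) ^ q ∂μ₂) ^ (1 / q) ≤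
        ENNReal.ofReal ((1 / (1 - θ)) ^ (1 / p') * (1 / θ) ^ (1 / q)) * B *
          (∫⁻ s, f s ^ p ∂μ₁) ^ (1 / p) := by
  have hp0 : 0 < p := by linarith
  have hq0 : 0 < q := by linarith
  have hconj : p.HolderConjugate p' := hp' ▸ Real.HolderConjugate.conjExponent hp
  have hp'0 : 0 < p' := hconj.symm.pos
  have hk : 1 ≤ q / p := (one_le_div hp0).2 hpq
  have hk0 : 0 < q / p := by positivity
  have hθ2 : 0 < 1 - θ := by linarith
  set c1 := ENNReal.ofReal (1 / (1 - θ)) with hc1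
  set c2 := ENNReal.ofReal (1 / θ) with hc2
  set V : ℝ → ℝ≥0∞ := fun s => μ₁ (Set.Iic s) with hV
  set W : ℝ → ℝ≥0∞ := fun s => μ₂ (Set.Ici s) with hW
  have hVm : Measurable V := (hh_mono μ₁).measurable
  have hWm : Measurable W :=
    Antitone.measurable fun _ _ h => measure_mono (Set.Ici_subset_Ici.2 h)
  set Φ : ℝ → ℝ≥0∞ := fun s => (f s * V s ^ (θ / p')) ^ p with hΦ
  have hΦm : Measurable Φ := (hf.mul (hVm.pow_const _)).pow_const _
  have hB2 := hh_bound μ₁ μ₂ (1 / q) (1 / p') (by positivity) (by positivity) B hB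
  -- Hölder
  have hol : ∀ r, ∫⁻ s in Set.Iio r, f s ∂μ₁ ≤
      (∫⁻ s in Set.Iio r, Φ s ∂μ₁) ^ (1 / p) * (c1 * μ₁ (Set.Iio r) ^ (1 - θ)) ^ (1 / p') := by
    intro r
    have e1 : ∫⁻ s in Set.Iio r, f s ∂μ₁ =
        ∫⁻ s in Set.Iio r, ((fun s => f s * V s ^ (θ / p')) * (fun s => V s ^ (-(θ / p')))) s ∂μ₁ := by
      apply lintegral_congr_ae
      filter_upwards [ae_restrict_of_ae (hh_ae_ne μ₁)] with s hs
      simp only [Pi.mul_apply]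
      rw [mul_assoc, ← ENNReal.rpow_add _ _ hs (measure_ne_top _ _)]
      simp
    rw [e1]
    refine (ENNReal.lintegral_mul_le_Lp_mul_Lq _ hconj (hf.mul (hVm.pow_const _)).aemeasurable
      (hVm.pow_const _).aemeasurable).trans ?_
    have hl := hh_layer μ₁ θ hθ0 hθ1 r
    have e2 : ∀ s, (V s ^ (-(θ / p'))) ^ p' = μ₁ (Set.Iic s) ^ (-θ) := by
      intro s
      rw [← ENNReal.rpow_mul]
      congr 1
      field_simp
    simp only [e2]
    exact mul_le_mul_right (ENNReal.rpow_le_rpow hl (by positivity)) _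
  set D := c1 ^ (q / p') * B ^ ((1 - θ) * q) with hD
  set g : ℝ → ℝ → ℝ≥0∞ := fun r s => (if s < r then Φ s else 0) * W r ^ (-(1 - θ) / (q / p)) with hg
  have hgm : Measurable (Function.uncurry g) := by
    apply Measurable.mul
    · exact Measurable.ite (measurableSet_lt measurable_snd measurable_fst)
        (hΦm.comp measurable_snd) measurable_const
    · exact (hWm.comp measurable_fst).pow_const _
  have step1 : ∫⁻ r, (∫⁻ s in Set.Iio r, f s ∂μ₁) ^ q ∂μ₂ ≤
      ∫⁻ r, D * (∫⁻ s, g r s ∂μ₁) ^ (q / p) ∂μ₂ := by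
    apply lintegral_mono_ae
    filter_upwards [hh_ae_ne' μ₂] with r hr
    have hr : W r ≠ 0 := hr
    have hrt : W r ≠ ⊤ := measure_ne_top _ _
    have eg : ∫⁻ s, g r s ∂μ₁ = (∫⁻ s in Set.Iio r, Φ s ∂μ₁) * W r ^ (-(1 - θ) / (q / p)) := by
      have hm : Measurable fun s => if s < r then Φ s else 0 :=
        Measurable.ite measurableSet_Iio hΦm measurable_const
      rw [hg]
      dsimp only
      rw [lintegral_mul_const _ hm, ← lintegral_indicator measurableSet_Iio]
      rfl
    have hVW : μ₁ (Set.Iio r) ^ (1 / p') ≤ B * W r ^ (-(1 / q)) := by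
      have := mul_le_mul_left (hB r) (W r ^ (-(1 / q)))
      refine le_trans (le_of_eq ?_) this
      rw [mul_right_comm, ← ENNReal.rpow_add _ _ hr hrt]
      simp
    calc (∫⁻ s in Set.Iio r, f s ∂μ₁) ^ q
        ≤ ((∫⁻ s in Set.Iio r, Φ s ∂μ₁) ^ (1 / p) *
          (c1 * μ₁ (Set.Iio r) ^ (1 - θ)) ^ (1 / p')) ^ q := ENNReal.rpow_le_rpow (hol r) hq0.le
      _ = (∫⁻ s in Set.Iio r, Φ s ∂μ₁) ^ (q / p) *
          (c1 ^ (q / p') * (μ₁ (Set.Iio r) ^ (1 / p')) ^ ((1 - θ) * q)) := by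
          rw [ENNReal.mul_rpow_of_nonneg _ _ hq0.le, ← ENNReal.rpow_mul, ← ENNReal.rpow_mul,
            ENNReal.mul_rpow_of_nonneg _ _ (by positivity), ← ENNReal.rpow_mul,
            ← ENNReal.rpow_mul]
          congr 2
          · ring
          · congr 1; ring
          · congr 1; ring
      _ ≤ (∫⁻ s in Set.Iio r, Φ s ∂μ₁) ^ (q / p) *
          (c1 ^ (q / p') * (B * W r ^ (-(1 / q))) ^ ((1 - θ) * q)) := by
          gcongr
      _ = D * (∫⁻ s, g r s ∂μ₁) ^ (q / p) := by
          rw [eg, ENNReal.mul_rpow_of_nonneg _ _ hk0.le, ← ENNReal.rpow_mul,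
            ENNReal.mul_rpow_of_nonneg _ _ (by positivity), ← ENNReal.rpow_mul, hD,
            div_mul_cancel₀ _ hk0.ne', show -(1 / q) * ((1 - θ) * q) = -(1 - θ) by field_simp]
          ring
  have step2 : ∀ s, (∫⁻ r, g r s ^ (q / p) ∂μ₂) ^ (1 / (q / p)) ≤
      (c2 ^ (p / q) * B ^ (θ * p)) * f s ^ p := by
    intro s
    have eg : ∫⁻ r, g r s ^ (q / p) ∂μ₂ =
        Φ s ^ (q / p) * ∫⁻ r in Set.Ioi s, W r ^ (-(1 - θ)) ∂μ₂ := by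
      rw [← lintegral_const_mul _ (hWm.pow_const _), ← lintegral_indicator measurableSet_Ioi]
      apply lintegral_congr
      intro r
      simp only [hg, Set.indicator_apply, Set.mem_Ioi]
      split_ifs with h
      · rw [ENNReal.mul_rpow_of_nonneg _ _ hk0.le, ← ENNReal.rpow_mul (W r),
          div_mul_cancel₀ _ hk0.ne']
      · rw [zero_mul, ENNReal.zero_rpow_of_pos hk0]
    have hl := hh_layer' μ₂ (1 - θ) (by linarith) (by linarith) s
    rw [_root_.sub_sub_cancel] at hl
    rw [eg]
    calc (Φ s ^ (q / p) * ∫⁻ r in Set.Ioi s, W r ^ (-(1 - θ)) ∂μ₂) ^ (1 / (q / p))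
        ≤ (Φ s ^ (q / p) * (c2 * μ₂ (Set.Ioi s) ^ θ)) ^ (1 / (q / p)) := by
          gcongr
      _ = c2 ^ (p / q) * (μ₂ (Set.Ioi s) ^ (1 / q) * μ₁ (Set.Iic s) ^ (1 / p')) ^ (θ * p) *
          f s ^ p := by
          rw [one_div_div, ENNReal.mul_rpow_of_nonneg _ _ (by positivity), ← ENNReal.rpow_mul,
            show q / p * (p / q) = 1 by field_simp, ENNReal.rpow_one,
            ENNReal.mul_rpow_of_nonneg _ _ (by positivity), ← ENNReal.rpow_mul, hΦ]
          dsimp only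
          rw [ENNReal.mul_rpow_of_nonneg _ _ hp0.le, ← ENNReal.rpow_mul,
            ENNReal.mul_rpow_of_nonneg _ _ (by positivity), ← ENNReal.rpow_mul,
            ← ENNReal.rpow_mul, show 1 / q * (θ * p) = θ * (p / q) by ring,
            show 1 / p' * (θ * p) = θ / p' * p by ring]
          ring
      _ ≤ _ := by
          gcongr
          exact hB2 s
  have hfin : ∫⁻ r, (∫⁻ s in Set.Iio r, f s ∂μ₁) ^ q ∂μ₂ ≤
      D * ((c2 ^ (p / q) * B ^ (θ * p)) * ∫⁻ s, f s ^ p ∂μ₁) ^ (q / p) := by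
    refine step1.trans ?_
    have hHm : Measurable fun r => ∫⁻ s, g r s ∂μ₁ := Measurable.lintegral_prod_right' hgm
    rw [lintegral_const_mul _ (hHm.pow_const _)]
    gcongr
    refine (hh_minkowski μ₁ μ₂ (q / p) hk g hgm).trans ?_
    rw [← lintegral_const_mul _ (hf.pow_const _)]
    exact ENNReal.rpow_le_rpow (lintegral_mono step2) hk0.le
  refine (ENNReal.rpow_le_rpow hfin (by positivity : 0 ≤ 1 / q)).trans (le_of_eq ?_)
  rw [ENNReal.ofReal_mul (by positivity), ← ENNReal.ofReal_rpow_of_pos (by positivity),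
    ← ENNReal.ofReal_rpow_of_pos (by positivity), ← hc1, ← hc2, hD]
  have hBB : B ^ (1 - θ) * B ^ θ = B := by
    rw [← ENNReal.rpow_add_of_nonneg _ _ (by linarith) (by linarith), sub_add_cancel,
      ENNReal.rpow_one]
  have hq1 : 0 ≤ 1 / q := by positivity
  simp only [ENNReal.mul_rpow_of_nonneg _ _ hq1, ENNReal.mul_rpow_of_nonneg _ _ hk0.le,
    ← ENNReal.rpow_mul]
  rw [show q / p' * (1 / q) = 1 / p' by field_simp,
    show (1 - θ) * q * (1 / q) = 1 - θ by field_simp,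
    show p / q * (q / p) * (1 / q) = 1 / q by field_simp,
    show θ * p * (q / p) * (1 / q) = θ by field_simp,
    show q / p * (1 / q) = 1 / p by field_simp]
  nth_rewrite 3 [← hBB]
  ring



/-- One-variable Hardy inequality for compactly supported finite Borel measures,
`μ₂` diffuse, `μ₁` possibly with atoms. -/
theorem hardy_inequality_mu2_diffuse_compact
    (μ₁ μ₂ : Measure ℝ) [IsFiniteMeasure μ₁] [IsFiniteMeasure μ₂]
    (hd₂ : ∀ x : ℝ, μ₂ {x} = 0)
    (K₁ K₂ : Set ℝ) (hK₁ : IsCompact K₁) (hK₂ : IsCompact K₂)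
    (hμ₁K : μ₁ K₁ᶜ = 0) (hμ₂K : μ₂ K₂ᶜ = 0)
    (p q p' q' : ℝ) (hp : 1 < p) (hpq : p ≤ q)
    (hp' : p' = p / (p - 1)) (hq' : q' = q / (q - 1))
    (B : ℝ≥0∞)
    (hB : B = ⨆ r : ℝ, μ₂ (Set.Ici r) ^ (1 / q) * μ₁ (Set.Iio r) ^ (1 / p'))
    (hBfin : B ≠ ⊤) :
    ∀ f : ℝ → ℝ≥0∞, Measurable f →
      (∫⁻ r, (∫⁻ s in Set.Iio r, f s ∂μ₁) ^ q ∂μ₂) ^ (1 / q) ≤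
        ENNReal.ofReal (min (p' ^ (1 / p') * p ^ (1 / q)) (q' ^ (1 / p') * q ^ (1 / q))) * B *
          (∫⁻ s, f s ^ p ∂μ₁) ^ (1 / p) := by
  intro f hf
  have hB' : ∀ r : ℝ, μ₂ (Set.Ici r) ^ (1 / q) * μ₁ (Set.Iio r) ^ (1 / p') ≤ B := fun r => by
    rw [hB]
    exact le_iSup (fun r : ℝ => μ₂ (Set.Ici r) ^ (1 / q) * μ₁ (Set.Iio r) ^ (1 / p')) r
  have hq : 1 < q := by linarith
  have key : ∀ t : ℝ, 1 < t → 0 < 1 / t ∧ 1 / t < 1 ∧ 1 / (1 - 1 / t) = t / (t - 1) ∧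
      1 / (1 / t) = t := by
    intro t ht
    have h0 : 0 < t := by linarith
    have h1 : t - 1 ≠ 0 := by linarith
    refine ⟨by positivity, (div_lt_one h0).2 ht, ?_, by simp⟩
    rw [one_sub_div h0.ne', one_div_div]
  rcases min_choice (p' ^ (1 / p') * p ^ (1 / q)) (q' ^ (1 / p') * q ^ (1 / q)) with h | h
  · rw [h]
    obtain ⟨h1, h2, h3, h4⟩ := key p hp
    have := hh_core μ₁ μ₂ p q p' (1 / p) hp hpq hp' h1 h2 B hB' f hf
    rwa [h3, h4, ← hp'] at this
  · rw [h]
    obtain ⟨h1, h2, h3, h4⟩ := key q hq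
    have := hh_core μ₁ μ₂ p q p' (1 / q) hp hpq hp' h1 h2 B hB' f hf
    rwa [h3, h4, ← hq'] at this
end

section
/- Let μ₁ and μ₂ be finite Borel measures on ℝ with compact support (both possibly with atoms). Let 1 < p ≤ q < ∞ with p' = p/(p−1) and q' = q/(q−1). If B := sup_{r∈ℝ} μ₂([r,+∞))^{1/q} μ₁((−∞,r))^{1/p'} is finite, then for every Borel measurable function f : ℝ → [0,+∞], (∫_ℝ (∫_{(−∞,r)} f dμ₁)^q dμ₂(r))^{1/q} ≤ min((p')^{1/p'} p^{1/q}, (q')^{1/p'} q^{1/q}) B (∫_ℝ f^p dμ₁)^{1/p}. -/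
open MeasureTheory ENNReal
open scoped NNReal

lemma hardy_inner_Iic (μ : Measure ℝ) [IsFiniteMeasure μ] {S : Set ℝ} (hS : MeasurableSet S)
    (t : ℝ≥0∞) (h : ∀ k ∈ S, μ (Set.Iic k) ≤ t) : μ S ≤ t := by
  rw [hS.measure_eq_iSup_isCompact μ]
  refine iSup_le fun K => iSup_le fun hKS => iSup_le fun hK => ?_
  rcases K.eq_empty_or_nonempty with rfl | hne
  · simp
  · obtain ⟨k, hk⟩ := hK.exists_isGreatest hne
    exact (measure_mono fun x hx => hk.2 hx).trans (h k (hKS hk.1))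

lemma hardy_inner_Ici (μ : Measure ℝ) [IsFiniteMeasure μ] {S : Set ℝ} (hS : MeasurableSet S)
    (t : ℝ≥0∞) (h : ∀ k ∈ S, μ (Set.Ici k) ≤ t) : μ S ≤ t := by
  rw [hS.measure_eq_iSup_isCompact μ]
  refine iSup_le fun K => iSup_le fun hKS => iSup_le fun hK => ?_
  rcases K.eq_empty_or_nonempty with rfl | hne
  · simp
  · obtain ⟨k, hk⟩ := hK.exists_isLeast hne
    exact (measure_mono fun x hx => hk.2 hx).trans (h k (hKS hk.1))

lemma hardy_weight {α : Type*} [MeasurableSpace α] (ν : Measure α) [IsFiniteMeasure ν]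
    (g : α → ℝ≥0∞) (hg : Measurable g) (hgt : ∀ x, g x ≠ ⊤)
    (h : ∀ t, ν {x | g x ≤ t} ≤ t) (θ : ℝ) (h0 : 0 < θ) (h1 : θ < 1) :
    ∫⁻ x, g x ^ (-θ) ∂ν ≤ ENNReal.ofReal (1 / (1 - θ)) * ν Set.univ ^ (1 - θ) := by
  rcases eq_or_ne ν 0 with rfl | hν
  · simp
  have hne : ν Set.univ ≠ 0 := by simpa using hν
  set m := (ν Set.univ).toReal with hm
  have hmpos : 0 < m := ENNReal.toReal_pos hne (measure_ne_top _ _)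
  have hmof : ν Set.univ = ENNReal.ofReal m := by rw [hm, ENNReal.ofReal_toReal (measure_ne_top _ _)]
  have hae : ∀ᵐ x ∂ν, g x ≠ 0 := by
    rw [ae_iff]
    simpa using h 0
  have e1 : ∫⁻ x, g x ^ (-θ) ∂ν = ∫⁻ x, ENNReal.ofReal ((g x).toReal ^ (-θ)) ∂ν := by
    apply lintegral_congr_ae
    filter_upwards [hae] with x hx
    rw [ENNReal.toReal_rpow, ENNReal.ofReal_toReal]
    exact ENNReal.rpow_ne_top_of_ne_zero hx (hgt x)
  rw [e1, lintegral_eq_lintegral_meas_lt ν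
    (Filter.Eventually.of_forall fun x => Real.rpow_nonneg ENNReal.toReal_nonneg _)
    (by fun_prop)]
  set c := m ^ (-θ) with hc
  have hcpos : 0 < c := Real.rpow_pos_of_pos hmpos _
  have hθ1 : -(1 / θ) < -1 := by
    have : 1 < 1 / θ := by rw [lt_div_iff₀ h0]; linarith
    linarith
  rw [← Set.Ioc_union_Ioi_eq_Ioi hcpos.le,
    lintegral_union measurableSet_Ioi (Set.Ioc_disjoint_Ioi le_rfl)]
  have b1 : ∫⁻ t in Set.Ioc 0 c, ν {a | t < (g a).toReal ^ (-θ)} ≤ ENNReal.ofReal (m * c) := by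
    calc _ ≤ ∫⁻ t in Set.Ioc 0 c, ENNReal.ofReal m :=
          lintegral_mono fun t => (measure_mono (Set.subset_univ _)).trans hmof.le
      _ = _ := by
          rw [setLIntegral_const, Real.volume_Ioc, sub_zero, ENNReal.ofReal_mul hmpos.le]
  have b2 : ∫⁻ t in Set.Ioi c, ν {a | t < (g a).toReal ^ (-θ)} ≤
      ENNReal.ofReal (-c ^ (-(1 / θ) + 1) / (-(1 / θ) + 1)) := by
    rw [← integral_Ioi_rpow_of_lt hθ1 hcpos, ofReal_integral_eq_lintegral_ofReal
      (integrableOn_Ioi_rpow_of_lt hθ1 hcpos)]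
    · refine setLIntegral_mono (by fun_prop) fun t ht => ?_
      have htpos : 0 < t := hcpos.trans ht
      refine (measure_mono ?_).trans (h _)
      intro a ha
      simp only [Set.mem_ofPred_eq] at ha ⊢
      have hga : 0 < (g a).toReal := by
        rcases ENNReal.toReal_nonneg.lt_or_eq with h' | h'
        · exact h'
        · rw [← h', Real.zero_rpow (by linarith)] at ha
          linarith
      rw [← ENNReal.ofReal_toReal (hgt a)]
      apply ENNReal.ofReal_le_ofReal
      have := Real.rpow_le_rpow_of_nonpos htpos ha.le (z := -(1/θ)) (by linarith)
      rwa [← Real.rpow_mul hga.le, show -θ * -(1 / θ) = 1 by field_simp, Real.rpow_one] at this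
    · filter_upwards [ae_restrict_mem measurableSet_Ioi] with t ht
      exact Real.rpow_nonneg (hcpos.trans ht).le _
  refine (add_le_add b1 b2).trans ?_
  have hmc : m * c = m ^ (1 - θ) := by
    rw [hc, sub_eq_add_neg, Real.rpow_add hmpos, Real.rpow_one]
  have hcc : c ^ (-(1 / θ) + 1) = m ^ (1 - θ) := by
    rw [hc, ← Real.rpow_mul hmpos.le]
    congr 1
    field_simp
    ring
  rw [hmof, ENNReal.ofReal_rpow_of_pos hmpos, ← ENNReal.ofReal_mul (by
    apply div_nonneg <;> linarith), hmc, hcc, ← ENNReal.ofReal_add (by positivity)]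
  · apply le_of_eq
    congr 1
    have : 1 - θ ≠ 0 := by linarith
    have : θ - 1 ≠ 0 := by linarith
    have : -(1 / θ) + 1 = (θ - 1) / θ := by field_simp; ring
    rw [this]
    field_simp
    ring
  · apply div_nonneg_of_nonpos
    · have := Real.rpow_nonneg hmpos.le (1 - θ)
      linarith
    · linarith

lemma hardy_minkowski {α β : Type*} [MeasurableSpace α] [MeasurableSpace β]
    (μ : Measure α) (ν : Measure β) [SFinite μ] [IsFiniteMeasure ν]
    (F : β → α → ℝ≥0∞) (hF : Measurable (Function.uncurry F)) (a : ℝ) (ha : 1 ≤ a) :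
    ∫⁻ r, (∫⁻ s, F r s ∂μ) ^ a ∂ν ≤ (∫⁻ s, (∫⁻ r, F r s ^ a ∂ν) ^ (1 / a) ∂μ) ^ a := by
  rcases ha.eq_or_lt with rfl | ha
  · simp only [ENNReal.rpow_one, div_one]
    rw [lintegral_lintegral_swap hF.aemeasurable]
  have ha0 : 0 < a := by linarith
  set R := ∫⁻ s, (∫⁻ r, F r s ^ a ∂ν) ^ (1 / a) ∂μ with hR
  set G : β → ℝ≥0∞ := fun r => ∫⁻ s, F r s ∂μ with hG
  have hGm : Measurable G := hF.lintegral_prod_right'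
  have hconj : a.HolderConjugate (a / (a - 1)) := Real.HolderConjugate.conjExponent ha
  have key : ∀ n : ℕ, ∫⁻ r, (min (G r) n) ^ a ∂ν ≤ R ^ a := by
    intro n
    set I := ∫⁻ r, (min (G r) n) ^ a ∂ν with hI
    have hItop : I ≠ ⊤ := by
      have : I ≤ ∫⁻ r, (n : ℝ≥0∞) ^ a ∂ν := lintegral_mono fun r => by gcongr; exact min_le_right _ _
      refine ne_top_of_le_ne_top ?_ this
      rw [lintegral_const]
      exact ENNReal.mul_ne_top (ENNReal.rpow_ne_top_of_nonneg ha0.le (by simp)) (measure_ne_top _ _)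
    have hle : I ≤ R * I ^ (1 / (a / (a - 1))) := by
      calc I ≤ ∫⁻ r, G r * (min (G r) n) ^ (a - 1) ∂ν := by
            refine lintegral_mono fun r => ?_
            have : (min (G r) n) ^ a = (min (G r) n) ^ (1 : ℝ) * (min (G r) n) ^ (a - 1) := by
              rw [← ENNReal.rpow_add_of_nonneg _ _ (by norm_num) (by linarith)]
              congr 1; ring
            simp only [this, ENNReal.rpow_one]
            gcongr
            exact min_le_left _ _
        _ = ∫⁻ r, ∫⁻ s, F r s * (min (G r) n) ^ (a - 1) ∂μ ∂ν := by
            refine lintegral_congr fun r => ?_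
            exact (lintegral_mul_const _ (hF.comp (measurable_prodMk_left (x := r)))).symm
        _ = ∫⁻ s, ∫⁻ r, F r s * (min (G r) n) ^ (a - 1) ∂ν ∂μ := by
            apply lintegral_lintegral_swap
            apply Measurable.aemeasurable
            exact hF.mul (((hGm.comp measurable_fst).min measurable_const).pow_const _)
        _ ≤ ∫⁻ s, (∫⁻ r, F r s ^ a ∂ν) ^ (1 / a) * I ^ (1 / (a / (a - 1))) ∂μ := by
            refine lintegral_mono fun s => ?_
            have := ENNReal.lintegral_mul_le_Lp_mul_Lq ν hconj (f := fun r => F r s)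
              (g := fun r => (min (G r) n) ^ (a - 1))
              (hF.comp measurable_prodMk_right).aemeasurable
              ((hGm.min measurable_const).pow_const _).aemeasurable
            refine this.trans (le_of_eq ?_)
            congr 3
            funext r
            rw [← ENNReal.rpow_mul]
            congr 1
            have : a - 1 ≠ 0 := by linarith
            field_simp
        _ = _ := by
            rw [lintegral_mul_const]
            apply Measurable.pow_const
            exact Measurable.lintegral_prod_left' (f := fun z : β × α => F z.1 z.2 ^ a) (hF.pow_const a)
    rcases eq_or_ne I 0 with h0 | h0
    · rw [h0]; exact zero_le
    have hsplit : I = I ^ (1 / a) * I ^ (1 / (a / (a - 1))) := by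
      rw [← ENNReal.rpow_add _ _ h0 hItop, ← ENNReal.rpow_one I, ← ENNReal.rpow_mul]
      congr 1
      have : a - 1 ≠ 0 := by linarith
      field_simp
      ring
    have h2 : I ^ (1 / a) ≤ R := by
      have hx0 : I ^ (1 / (a / (a - 1))) ≠ 0 := (ENNReal.rpow_pos (pos_iff_ne_zero.2 h0) hItop).ne'
      have hxt : I ^ (1 / (a / (a - 1))) ≠ ⊤ := ENNReal.rpow_ne_top_of_ne_zero h0 hItop
      nth_rewrite 1 [hsplit] at hle
      exact (ENNReal.mul_le_mul_iff_left hx0 hxt).1 hle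
    calc I = (I ^ (1 / a)) ^ a := by rw [← ENNReal.rpow_mul, one_div_mul_cancel ha0.ne', ENNReal.rpow_one]
      _ ≤ R ^ a := by gcongr
  have hlim := lintegral_tendsto_of_tendsto_of_monotone (μ := ν)
    (f := fun (n : ℕ) r => (min (G r) n) ^ a) (F := fun r => G r ^ a)
    (fun n => ((hGm.min measurable_const).pow_const _).aemeasurable)
    (Filter.Eventually.of_forall fun r => fun i j hij => by
      have : (i : ℝ≥0∞) ≤ j := by exact_mod_cast hij
      dsimp only
      gcongr)
    (Filter.Eventually.of_forall fun r => by
      have h1 : Filter.Tendsto (fun n : ℕ => min (G r) (n : ℝ≥0∞)) Filter.atTop (nhds (min (G r) ⊤)) :=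
        tendsto_const_nhds.min ENNReal.tendsto_nat_nhds_top
      rw [min_eq_left le_top] at h1
      exact (ENNReal.continuous_rpow_const.tendsto _).comp h1)
  exact le_of_tendsto' hlim key

lemma hardy_B_closed (μ₁ μ₂ : Measure ℝ) [IsFiniteMeasure μ₁] [IsFiniteMeasure μ₂]
    (q p' : ℝ) (hq : 0 < q) (hp' : 0 < p') (B : ℝ≥0∞)
    (hB : ∀ r : ℝ, μ₂ (Set.Ici r) ^ (1 / q) * μ₁ (Set.Iio r) ^ (1 / p') ≤ B) (s : ℝ) :
    μ₂ (Set.Ioi s) ^ (1 / q) * μ₁ (Set.Iic s) ^ (1 / p') ≤ B := by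
  rcases eq_or_ne (μ₁ (Set.Iic s)) 0 with h0 | h0
  · rw [h0, ENNReal.zero_rpow_of_pos (by positivity), mul_zero]; exact zero_le
  have hM0 : μ₁ (Set.Iic s) ^ (1 / p') ≠ 0 :=
    (ENNReal.rpow_pos (pos_iff_ne_zero.2 h0) (measure_ne_top _ _)).ne'
  have hMt : μ₁ (Set.Iic s) ^ (1 / p') ≠ ⊤ :=
    ENNReal.rpow_ne_top_of_ne_zero h0 (measure_ne_top _ _)
  rw [← ENNReal.le_div_iff_mul_le (Or.inl hM0) (Or.inl hMt), one_div q, ENNReal.rpow_inv_le_iff hq]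
  refine hardy_inner_Ici μ₂ measurableSet_Ioi _ fun k hk => ?_
  rw [← ENNReal.rpow_inv_le_iff hq, ← one_div q, ENNReal.le_div_iff_mul_le (Or.inl hM0) (Or.inl hMt)]
  refine le_trans ?_ (hB k)
  gcongr
  exact hk

lemma hardy_theta (μ₁ μ₂ : Measure ℝ) [IsFiniteMeasure μ₁] [IsFiniteMeasure μ₂]
    (p q p' : ℝ) (hp : 1 < p) (hpq : p ≤ q) (hp' : p' = p / (p - 1))
    (B : ℝ≥0∞)
    (hB : ∀ r : ℝ, μ₂ (Set.Ici r) ^ (1 / q) * μ₁ (Set.Iio r) ^ (1 / p') ≤ B)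
    (θ : ℝ) (h0 : 0 < θ) (h1 : θ < 1)
    (f : ℝ → ℝ≥0∞) (hf : Measurable f) :
    (∫⁻ r, (∫⁻ s in Set.Iio r, f s ∂μ₁) ^ q ∂μ₂) ^ (1 / q) ≤
      ENNReal.ofReal (1 / (1 - θ)) ^ (1 / p') * ENNReal.ofReal (1 / θ) ^ (1 / q) * B *
          (∫⁻ s, f s ^ p ∂μ₁) ^ (1 / p) := by
  have hp0 : 0 < p := by linarith
  have hq0 : 0 < q := by linarith
  have hp'0 : 0 < p' := by rw [hp']; apply div_pos <;> linarith
  have h1θ : 0 < 1 - θ := by linarith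
  have hconj : p.HolderConjugate p' := by rw [hp']; exact Real.HolderConjugate.conjExponent hp
  set D := ENNReal.ofReal (1 / (1 - θ)) with hD
  set E := ENNReal.ofReal (1 / θ) with hE
  set M : ℝ → ℝ≥0∞ := fun s => μ₁ (Set.Iic s) with hM
  set m : ℝ → ℝ≥0∞ := fun s => μ₁ (Set.Iio s) with hm
  set N : ℝ → ℝ≥0∞ := fun s => μ₂ (Set.Ici s) with hN
  have hMm : Measurable M :=
    Monotone.measurable fun a b hab => measure_mono (Set.Iic_subset_Iic.2 hab)
  have hmm : Measurable m :=
    Monotone.measurable fun a b hab => measure_mono (Set.Iio_subset_Iio hab)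
  have hNm : Measurable N :=
    Antitone.measurable fun a b hab => measure_mono (Set.Ici_subset_Ici.2 hab)
  have hMt : ∀ s, M s ≠ ⊤ := fun s => measure_ne_top _ _
  have hNt : ∀ s, N s ≠ ⊤ := fun s => measure_ne_top _ _
  have hMle : ∀ t, μ₁ {s | M s ≤ t} ≤ t := fun t =>
    hardy_inner_Iic μ₁ (measurableSet_le hMm measurable_const) t fun k hk => hk
  have hNle : ∀ t, μ₂ {s | N s ≤ t} ≤ t := fun t =>
    hardy_inner_Ici μ₂ (measurableSet_le hNm measurable_const) t fun k hk => hk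
  have hMae : ∀ᵐ s ∂μ₁, M s ≠ 0 := by
    rw [ae_iff]; simpa using hMle 0
  have hNae : ∀ᵐ s ∂μ₂, N s ≠ 0 := by
    rw [ae_iff]; simpa using hNle 0
  -- weights
  have hW1 : ∀ r, ∫⁻ s in Set.Iio r, M s ^ (-θ) ∂μ₁ ≤ D * m r ^ (1 - θ) := by
    intro r
    have := hardy_weight (μ₁.restrict (Set.Iio r)) M hMm hMt
      (fun t => (Measure.restrict_apply_le _ _).trans (hMle t)) θ h0 h1
    simpa [hD, hm] using this
  have hW2 : ∀ s, ∫⁻ r in Set.Ioi s, N r ^ (-(1 - θ)) ∂μ₂ ≤ E * μ₂ (Set.Ioi s) ^ θ := by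
    intro s
    have := hardy_weight (μ₂.restrict (Set.Ioi s)) N hNm hNt
      (fun t => (Measure.restrict_apply_le _ _).trans (hNle t)) (1 - θ) h1θ (by linarith)
    simpa [hE] using this
  set Φ : ℝ → ℝ≥0∞ := fun s => f s ^ p * M s ^ (θ * p / p') with hΦ
  have hΦm : Measurable Φ := (hf.pow_const _).mul (hMm.pow_const _)
  -- Hölder step
  have hH : ∀ r, ∫⁻ s in Set.Iio r, f s ∂μ₁ ≤
      (∫⁻ s in Set.Iio r, Φ s ∂μ₁) ^ (1 / p) * (D * m r ^ (1 - θ)) ^ (1 / p') := by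
    intro r
    have e : ∫⁻ s in Set.Iio r, f s ∂μ₁ =
        ∫⁻ s in Set.Iio r, ((fun s => f s * M s ^ (θ / p')) * (fun s => M s ^ (-(θ / p')))) s ∂μ₁ := by
      apply lintegral_congr_ae
      filter_upwards [ae_restrict_of_ae hMae] with s hs
      simp only [Pi.mul_apply]
      rw [mul_assoc, ← ENNReal.rpow_add _ _ hs (hMt s), add_neg_cancel, ENNReal.rpow_zero, mul_one]
    rw [e]
    refine (ENNReal.lintegral_mul_le_Lp_mul_Lq _ hconj (f := fun s => f s * M s ^ (θ / p'))
      (g := fun s => M s ^ (-(θ / p')))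
      (hf.mul (hMm.pow_const _)).aemeasurable (hMm.pow_const _).aemeasurable).trans ?_
    have e1 : ∀ s, (f s * M s ^ (θ / p')) ^ p = Φ s := by
      intro s
      rw [ENNReal.mul_rpow_of_nonneg _ _ hp0.le, ← ENNReal.rpow_mul, hΦ]
      congr 2
      ring
    have e2 : ∀ s, (M s ^ (-(θ / p'))) ^ p' = M s ^ (-θ) := by
      intro s
      rw [← ENNReal.rpow_mul]
      congr 1
      field_simp
    simp only [e1, e2]
    gcongr
    exact hW1 r
  -- kernel
  set F : ℝ → ℝ → ℝ≥0∞ := fun r s =>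
    (Set.Iio r).indicator Φ s * m r ^ ((1 - θ) * p / p') with hF
  have hFm : Measurable (Function.uncurry F) := by
    refine Measurable.mul ?_ ((hmm.comp measurable_fst).pow_const _)
    have : (fun z : ℝ × ℝ => (Set.Iio z.1).indicator Φ z.2) =
        {z : ℝ × ℝ | z.2 < z.1}.indicator (fun z => Φ z.2) := by
      funext z
      by_cases hz : z.2 < z.1 <;> simp [Set.indicator, hz]
    change Measurable (fun z : ℝ × ℝ => (Set.Iio z.1).indicator Φ z.2)
    rw [this]
    exact (hΦm.comp measurable_snd).indicator (measurableSet_lt measurable_snd measurable_fst)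
  have hA : ∀ r, (∫⁻ s in Set.Iio r, f s ∂μ₁) ^ q ≤
      D ^ (q / p') * (∫⁻ s, F r s ∂μ₁) ^ (q / p) := by
    intro r
    have e : ∫⁻ s, F r s ∂μ₁ = (∫⁻ s in Set.Iio r, Φ s ∂μ₁) * m r ^ ((1 - θ) * p / p') := by
      rw [hF]
      dsimp only
      rw [lintegral_mul_const _ (hΦm.indicator measurableSet_Iio),
        lintegral_indicator measurableSet_Iio]
    rw [e]
    refine (ENNReal.rpow_le_rpow (hH r) hq0.le).trans (le_of_eq ?_)
    rw [ENNReal.mul_rpow_of_nonneg _ _ hq0.le, ENNReal.mul_rpow_of_nonneg _ _ (by positivity),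
      ENNReal.mul_rpow_of_nonneg _ _ hq0.le, ENNReal.mul_rpow_of_nonneg _ _ (by positivity)]
    simp only [← ENNReal.rpow_mul]
    rw [show 1 / p * q = q / p by ring, show 1 / p' * q = q / p' by ring,
      show (1 - θ) * p / p' * (q / p) = (1 - θ) * (1 / p') * q by field_simp]
    ring
  -- inner bound
  have hmN : ∀ r, N r ≠ 0 → m r ^ ((1 - θ) * q / p') ≤ B ^ ((1 - θ) * q) * N r ^ (-(1 - θ)) := by
    intro r hr
    have hx0 : N r ^ (1 / q) ≠ 0 := (ENNReal.rpow_pos (pos_iff_ne_zero.2 hr) (hNt r)).ne'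
    have hxt : N r ^ (1 / q) ≠ ⊤ := ENNReal.rpow_ne_top_of_ne_zero hr (hNt r)
    have h2 : m r ^ (1 / p') ≤ B * N r ^ (-(1 / q)) := by
      rw [ENNReal.rpow_neg, ← div_eq_mul_inv, ENNReal.le_div_iff_mul_le (Or.inl hx0) (Or.inl hxt),
        mul_comm]
      exact hB r
    have h3 := ENNReal.rpow_le_rpow h2 (z := (1 - θ) * q) (by positivity)
    rw [ENNReal.mul_rpow_of_nonneg _ _ (by positivity), ← ENNReal.rpow_mul, ← ENNReal.rpow_mul,
      show 1 / p' * ((1 - θ) * q) = (1 - θ) * q / p' by ring,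
      show -(1 / q) * ((1 - θ) * q) = -(1 - θ) by field_simp] at h3
    exact h3
  have hinner : ∀ s, (∫⁻ r, F r s ^ (q / p) ∂μ₂) ^ (1 / (q / p)) ≤
      B ^ p * E ^ (p / q) * f s ^ p := by
    intro s
    have e : ∀ r, F r s ^ (q / p) =
        Φ s ^ (q / p) * (Set.Ioi s).indicator (fun r => m r ^ ((1 - θ) * q / p')) r := by
      intro r
      rw [hF]
      dsimp only
      by_cases hsr : s < r
      · rw [Set.indicator_of_mem (Set.mem_Iio.2 hsr), Set.indicator_of_mem (Set.mem_Ioi.2 hsr),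
          ENNReal.mul_rpow_of_nonneg _ _ (by positivity), ← ENNReal.rpow_mul]
        congr 2
        field_simp
      · rw [Set.indicator_of_notMem (by simpa using hsr),
          Set.indicator_of_notMem (by simpa using hsr), zero_mul, mul_zero,
          ENNReal.zero_rpow_of_pos (by positivity)]
    have hint : ∫⁻ r, F r s ^ (q / p) ∂μ₂ ≤
        Φ s ^ (q / p) * (B ^ ((1 - θ) * q) * (E * μ₂ (Set.Ioi s) ^ θ)) := by
      simp only [e]
      rw [lintegral_const_mul _ ((hmm.pow_const _).indicator measurableSet_Ioi),
        lintegral_indicator measurableSet_Ioi]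
      gcongr
      calc _ ≤ ∫⁻ r in Set.Ioi s, B ^ ((1 - θ) * q) * N r ^ (-(1 - θ)) ∂μ₂ := by
            apply lintegral_mono_ae
            filter_upwards [ae_restrict_of_ae hNae] with r hr
            exact hmN r hr
        _ = B ^ ((1 - θ) * q) * ∫⁻ r in Set.Ioi s, N r ^ (-(1 - θ)) ∂μ₂ :=
            lintegral_const_mul _ (hNm.pow_const _)
        _ ≤ _ := by gcongr; exact hW2 s
    have hcl := ENNReal.rpow_le_rpow (hardy_B_closed μ₁ μ₂ q p' hq0 hp'0 B hB s)
      (z := θ * p) (by positivity)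
    rw [ENNReal.mul_rpow_of_nonneg _ _ (by positivity), ← ENNReal.rpow_mul, ← ENNReal.rpow_mul,
      show 1 / q * (θ * p) = θ * p / q by ring, show 1 / p' * (θ * p) = θ * p / p' by ring] at hcl
    calc _ ≤ (Φ s ^ (q / p) * (B ^ ((1 - θ) * q) * (E * μ₂ (Set.Ioi s) ^ θ))) ^ (1 / (q / p)) := by
          gcongr
      _ = Φ s * (B ^ ((1 - θ) * p) * (E ^ (p / q) * μ₂ (Set.Ioi s) ^ (θ * p / q))) := by
          generalize Φ s = x
          rw [ENNReal.mul_rpow_of_nonneg _ _ (by positivity),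
            ENNReal.mul_rpow_of_nonneg _ _ (by positivity),
            ENNReal.mul_rpow_of_nonneg _ _ (by positivity)]
          simp only [← ENNReal.rpow_mul]
          rw [show q / p * (1 / (q / p)) = 1 by field_simp, ENNReal.rpow_one,
            show (1 - θ) * q * (1 / (q / p)) = (1 - θ) * p by field_simp,
            show θ * (1 / (q / p)) = θ * p / q by field_simp, show 1 / (q / p) = p / q by field_simp]
      _ = f s ^ p * E ^ (p / q) * (B ^ ((1 - θ) * p) *
            (μ₂ (Set.Ioi s) ^ (θ * p / q) * M s ^ (θ * p / p'))) := by
          rw [hΦ]; ring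
      _ ≤ f s ^ p * E ^ (p / q) * (B ^ ((1 - θ) * p) * B ^ (θ * p)) := by
          gcongr
      _ = _ := by
          rw [← ENNReal.rpow_add_of_nonneg _ _ (by positivity) (by positivity),
            show (1 - θ) * p + θ * p = p by ring]
          ring
  have hfin : ∫⁻ r, (∫⁻ s in Set.Iio r, f s ∂μ₁) ^ q ∂μ₂ ≤
      D ^ (q / p') * (B ^ p * E ^ (p / q) * ∫⁻ s, f s ^ p ∂μ₁) ^ (q / p) := by
    calc _ ≤ ∫⁻ r, D ^ (q / p') * (∫⁻ s, F r s ∂μ₁) ^ (q / p) ∂μ₂ := lintegral_mono hA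
      _ = D ^ (q / p') * ∫⁻ r, (∫⁻ s, F r s ∂μ₁) ^ (q / p) ∂μ₂ :=
          lintegral_const_mul _ (Measurable.pow_const hFm.lintegral_prod_right' _)
      _ ≤ D ^ (q / p') * (∫⁻ s, (∫⁻ r, F r s ^ (q / p) ∂μ₂) ^ (1 / (q / p)) ∂μ₁) ^ (q / p) := by
          gcongr
          exact hardy_minkowski μ₁ μ₂ F hFm (q / p) ((one_le_div hp0).2 hpq)
      _ ≤ D ^ (q / p') * (∫⁻ s, B ^ p * E ^ (p / q) * f s ^ p ∂μ₁) ^ (q / p) := by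
          gcongr with s
          exact hinner s
      _ = _ := by rw [lintegral_const_mul _ (hf.pow_const _)]
  refine (ENNReal.rpow_le_rpow hfin (by positivity)).trans (le_of_eq ?_)
  rw [ENNReal.mul_rpow_of_nonneg _ _ (by positivity), ENNReal.mul_rpow_of_nonneg _ _ (by positivity),
    ENNReal.mul_rpow_of_nonneg _ _ (by positivity), ENNReal.mul_rpow_of_nonneg _ _ (by positivity),
    ENNReal.mul_rpow_of_nonneg _ _ (by positivity)]
  simp only [← ENNReal.rpow_mul]
  rw [show q / p' * (1 / q) = 1 / p' by field_simp, show p * (q / p) * (1 / q) = 1 by field_simp,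
    show p / q * (q / p) * (1 / q) = 1 / q by field_simp,
    show q / p * (1 / q) = 1 / p by field_simp, ENNReal.rpow_one]
  ring

/-- One-variable Hardy inequality for compactly supported finite Borel measures,
both possibly with atoms. -/
theorem hardy_inequality_compact
    (μ₁ μ₂ : Measure ℝ) [IsFiniteMeasure μ₁] [IsFiniteMeasure μ₂]
    (K₁ K₂ : Set ℝ) (hK₁ : IsCompact K₁) (hK₂ : IsCompact K₂)
    (hμ₁K : μ₁ K₁ᶜ = 0) (hμ₂K : μ₂ K₂ᶜ = 0)
    (p q p' q' : ℝ) (hp : 1 < p) (hpq : p ≤ q)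
    (hp' : p' = p / (p - 1)) (hq' : q' = q / (q - 1))
    (B : ℝ≥0∞)
    (hB : B = ⨆ r : ℝ, μ₂ (Set.Ici r) ^ (1 / q) * μ₁ (Set.Iio r) ^ (1 / p'))
    (hBfin : B ≠ ⊤) :
    ∀ f : ℝ → ℝ≥0∞, Measurable f →
      (∫⁻ r, (∫⁻ s in Set.Iio r, f s ∂μ₁) ^ q ∂μ₂) ^ (1 / q) ≤
        ENNReal.ofReal (min (p' ^ (1 / p') * p ^ (1 / q)) (q' ^ (1 / p') * q ^ (1 / q))) * B *
          (∫⁻ s, f s ^ p ∂μ₁) ^ (1 / p) := by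
  intro f hf
  have hB' : ∀ r : ℝ, μ₂ (Set.Ici r) ^ (1 / q) * μ₁ (Set.Iio r) ^ (1 / p') ≤ B := by
    intro r
    rw [hB]
    exact le_iSup (fun r : ℝ => μ₂ (Set.Ici r) ^ (1 / q) * μ₁ (Set.Iio r) ^ (1 / p')) r
  have hp0 : 0 < p := by linarith
  have hq1 : 1 < q := by linarith
  have hq0 : 0 < q := by linarith
  have hp'0 : 0 < p' := by rw [hp']; apply div_pos <;> linarith
  have hq'0 : 0 < q' := by rw [hq']; apply div_pos <;> linarith
  have main : ∀ t t' : ℝ, 1 < t → t' = t / (t - 1) → 0 < t' →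
      (∫⁻ r, (∫⁻ s in Set.Iio r, f s ∂μ₁) ^ q ∂μ₂) ^ (1 / q) ≤
        ENNReal.ofReal (t' ^ (1 / p') * t ^ (1 / q)) * B * (∫⁻ s, f s ^ p ∂μ₁) ^ (1 / p) := by
    intro t t' ht ht' ht'0
    have ht0 : 0 < t := by linarith
    have := hardy_theta μ₁ μ₂ p q p' hp hpq hp' B hB' (1 / t) (by positivity)
      ((div_lt_one ht0).2 ht) f hf
    rw [show 1 / (1 - 1 / t) = t' by
      have : t - 1 ≠ 0 := by linarith
      rw [ht', one_sub_div ht0.ne', one_div_div],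
      one_div_one_div, ENNReal.ofReal_rpow_of_pos ht'0, ENNReal.ofReal_rpow_of_pos ht0,
      ← ENNReal.ofReal_mul (by positivity)] at this
    exact this
  rcases min_choice (p' ^ (1 / p') * p ^ (1 / q)) (q' ^ (1 / p') * q ^ (1 / q)) with h | h
  · rw [h]; exact main p p' hp hp' hp'0
  · rw [h]; exact main q q' hq1 hq' hq'0
end

section
/- Let (X, M) be a measurable space, μ₁ a finite positive measure on (X, M), μ₂ a finite Borel measure on ℝ with compact support, and N : X → ℝ an M-measurable function such that the pushforward measure N_*(μ₁) has compact support. Let 1 < p ≤ q < ∞ with p' = p/(p−1) and q' = q/(q−1). If B := sup_{r∈ℝ} μ₂([r,+∞))^{1/q} μ₁({x : N(x) < r})^{1/p'} is finite, then for every M-measurable function f : X → [0,+∞], (∫_ℝ (∫_{{x : N(x)<r}} f(x) dμ₁(x))^q dμ₂(r))^{1/q} ≤ min((p')^{1/p'} p^{1/q}, (q')^{1/p'} q^{1/q}) B (∫_X f(x)^p dμ₁(x))^{1/p}. -/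
open MeasureTheory ENNReal
open scoped NNReal


lemma tail_le (ν : Measure ℝ) [IsFiniteMeasure ν] (u : ℝ≥0∞) :
    ν {s | ν (Set.Iic s) ≤ u} ≤ u := by
  have hmono : Monotone fun s => ν (Set.Iic s) := fun a b hab => measure_mono (Set.Iic_subset_Iic.2 hab)
  have hm : MeasurableSet {s | ν (Set.Iic s) ≤ u} := measurableSet_le hmono.measurable measurable_const
  rw [hm.measure_eq_iSup_isCompact_of_ne_top (measure_ne_top _ _)]
  refine iSup_le fun K => iSup_le fun hK => iSup_le fun hKc => ?_
  rcases K.eq_empty_or_nonempty with rfl | hne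
  · simp
  · obtain ⟨m, hm1, hm2⟩ := hKc.exists_isGreatest hne
    exact (measure_mono (fun x hx => hm2 hx)).trans (hK hm1)

lemma aux_null (ν : Measure ℝ) [IsFiniteMeasure ν] : ∀ᵐ s ∂ν, ν (Set.Iic s) ≠ 0 := by
  have := tail_le ν 0
  rw [ae_iff]
  simpa using this

lemma aux1 (ν : Measure ℝ) [IsFiniteMeasure ν] (a : ℝ) (ha : 0 < a) (ha1 : a < 1) :
    ∫⁻ s, ν (Set.Iic s) ^ (-a) ∂ν ≤ ENNReal.ofReal (1 / (1 - a)) * ν Set.univ ^ (1 - a) := by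
  have hmono : Monotone fun s => ν (Set.Iic s) := fun a b hab => measure_mono (Set.Iic_subset_Iic.2 hab)
  have hmeas : Measurable fun s => ν (Set.Iic s) := hmono.measurable
  set m : ℝ := (ν Set.univ).toReal with hm
  have hm0 : 0 ≤ m := toReal_nonneg
  have hmU : ν Set.univ = ENNReal.ofReal m := (ofReal_toReal (measure_ne_top _ _)).symm
  have e1 : ∫⁻ s, ν (Set.Iic s) ^ (-a) ∂ν
      = ∫⁻ s, ENNReal.ofReal ((ν (Set.Iic s)).toReal ^ (-a)) ∂ν := by
    refine lintegral_congr_ae ?_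
    filter_upwards [aux_null ν] with s hs
    have h0 : 0 < (ν (Set.Iic s)).toReal := toReal_pos hs (measure_ne_top _ _)
    rw [← ENNReal.ofReal_rpow_of_pos h0, ofReal_toReal (measure_ne_top _ _)]
  have e2 : ∫⁻ u in Set.Ioc 0 m, ENNReal.ofReal (u ^ (-a)) = 
      ENNReal.ofReal (1 / (1 - a)) * ν Set.univ ^ (1 - a) := by
    have hint : IntervalIntegrable (fun u : ℝ => u ^ (-a)) volume 0 m :=
      intervalIntegral.intervalIntegrable_rpow' (by linarith)
    rw [← ofReal_integral_eq_lintegral_ofReal]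
    · rw [← intervalIntegral.integral_of_le hm0, integral_rpow (Or.inl (by linarith)), hmU,
        ENNReal.ofReal_rpow_of_nonneg hm0 (by linarith), ← ENNReal.ofReal_mul (by
          apply div_nonneg <;> linarith)]
      congr 1
      rw [Real.zero_rpow (by linarith), show -a + 1 = 1 - a by ring]
      ring
    · exact (intervalIntegrable_iff_integrableOn_Ioc_of_le hm0).1 hint
    · filter_upwards [ae_restrict_mem measurableSet_Ioc] with u hu
      exact Real.rpow_nonneg hu.1.le _
  rw [e1, ← e2, lintegral_eq_lintegral_meas_lt, lintegral_eq_lintegral_meas_lt]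
  · refine setLIntegral_mono' measurableSet_Ioi fun v hv => ?_
    have hv : 0 < v := hv
    have key : ∀ x : ℝ, 0 < x → (v < x ^ (-a) ↔ x < v ^ (-a⁻¹)) := by
      intro x hx
      have := Real.lt_rpow_inv_iff_of_neg hx hv (show -a < 0 by linarith)
      rw [inv_neg] at this
      exact this.symm
    have hR : Set.Ioo 0 (v ^ (-a⁻¹)) ∩ Set.Ioc 0 m ⊆ {u : ℝ | v < u ^ (-a)} ∩ Set.Ioc 0 m := by
      rintro x ⟨hx, hx2⟩
      exact ⟨(key x hx.1).2 hx.2, hx2⟩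
    have hR2 : min (ENNReal.ofReal (v ^ (-a⁻¹))) (ν Set.univ) ≤
        (volume.restrict (Set.Ioc 0 m)) {u : ℝ | v < u ^ (-a)} := by
      rw [Measure.restrict_apply' measurableSet_Ioc]
      refine le_trans ?_ (measure_mono hR)
      have : Set.Ioo 0 (min (v ^ (-a⁻¹)) m) ⊆ Set.Ioo 0 (v ^ (-a⁻¹)) ∩ Set.Ioc 0 m := by
        rintro x ⟨h1, h2⟩
        exact ⟨⟨h1, h2.trans_le (min_le_left _ _)⟩, h1, (h2.trans_le (min_le_right _ _)).le⟩
      refine le_trans ?_ (measure_mono this)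
      rw [Real.volume_Ioo, sub_zero, hmU, ENNReal.ofReal_min]
    refine le_trans (le_min ?_ (measure_mono (Set.subset_univ _))) hR2
    refine le_trans (measure_mono ?_) (tail_le ν _)
    intro s hs
    have hs : v < (ν (Set.Iic s)).toReal ^ (-a) := hs
    have hpos : 0 < (ν (Set.Iic s)).toReal := by
      rcases (toReal_nonneg (a := ν (Set.Iic s))).eq_or_lt with h | h
      · rw [← h, Real.zero_rpow (by linarith)] at hs; linarith
      · exact h
    show ν (Set.Iic s) ≤ _
    rw [← ofReal_toReal (measure_ne_top ν (Set.Iic s))]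
    exact ENNReal.ofReal_le_ofReal ((key _ hpos).1 hs).le
  · filter_upwards [ae_restrict_mem measurableSet_Ioc] with u hu
    exact Real.rpow_nonneg hu.1.le _
  · fun_prop
  · exact Filter.Eventually.of_forall fun s => Real.rpow_nonneg toReal_nonneg _
  · exact (hmeas.ennreal_toReal.pow_const _).aemeasurable

lemma aux2 (ν : Measure ℝ) [IsFiniteMeasure ν] (a : ℝ) (ha : 0 < a) (ha1 : a < 1) (r : ℝ) :
    ∫⁻ s in Set.Iio r, ν (Set.Iic s) ^ (-a) ∂ν
      ≤ ENNReal.ofReal (1 / (1 - a)) * ν (Set.Iio r) ^ (1 - a) := by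
  have := aux1 (ν.restrict (Set.Iio r)) a ha ha1
  rw [Measure.restrict_apply_univ] at this
  refine le_trans (lintegral_mono fun s => ?_) this
  simp only [ENNReal.rpow_neg]
  exact ENNReal.inv_le_inv.2 (ENNReal.rpow_le_rpow (Measure.restrict_apply_le _ _) ha.le)

lemma neg_Iic (ν : Measure ℝ) (s : ℝ) : (ν.map Neg.neg) (Set.Iic (-s)) = ν (Set.Ici s) := by
  rw [Measure.map_apply measurable_neg measurableSet_Iic]
  congr 1; ext; simp

lemma aux3 (ν : Measure ℝ) [IsFiniteMeasure ν] (a : ℝ) (ha : 0 < a) (ha1 : a < 1) (t : ℝ) :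
    ∫⁻ s in Set.Ioi t, ν (Set.Ici s) ^ (-a) ∂ν
      ≤ ENNReal.ofReal (1 / (1 - a)) * ν (Set.Ioi t) ^ (1 - a) := by
  have := aux2 (ν.map Neg.neg) a ha ha1 (-t)
  have e : (Neg.neg ⁻¹' (Set.Iio (-t)) : Set ℝ) = Set.Ioi t := by ext; simp
  have hmono : Monotone fun s => (ν.map Neg.neg) (Set.Iic s) := fun a b hab => measure_mono (Set.Iic_subset_Iic.2 hab)
  rw [Measure.map_apply measurable_neg measurableSet_Iio, e,
    setLIntegral_map measurableSet_Iio (hmono.measurable.pow_const _) measurable_neg, e] at this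
  simpa only [neg_Iic] using this

lemma aux_null' (ν : Measure ℝ) [IsFiniteMeasure ν] : ∀ᵐ s ∂ν, ν (Set.Ici s) ≠ 0 := by
  have := ae_of_ae_map measurable_neg.aemeasurable (aux_null (ν.map Neg.neg))
  simpa only [neg_Iic] using this

lemma minkowski_int {X : Type*} [MeasurableSpace X] (μ : Measure X) [SFinite μ] (ν : Measure ℝ)
    [IsFiniteMeasure ν] (k : X → ℝ → ℝ≥0∞) (hk : Measurable (Function.uncurry k)) (θ : ℝ)
    (hθ : 1 ≤ θ) :
    (∫⁻ r, (∫⁻ x, k x r ∂μ) ^ θ ∂ν) ^ (1 / θ) ≤ ∫⁻ x, (∫⁻ r, k x r ^ θ ∂ν) ^ (1 / θ) ∂μ := by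
  rcases hθ.eq_or_lt with rfl | hθ1
  · simp only [ENNReal.rpow_one, div_one]
    rw [lintegral_lintegral_swap]
    exact (hk.comp measurable_swap).aemeasurable
  set M := ∫⁻ x, (∫⁻ r, k x r ^ θ ∂ν) ^ (1 / θ) ∂μ with hM
  have hθ0 : 0 < θ := by linarith
  set Φ : ℝ → ℝ≥0∞ := fun r => ∫⁻ x, k x r ∂μ with hΦ
  have hΦm : Measurable Φ := Measurable.lintegral_prod_left' (f := Function.uncurry k) hk
  have hconj : θ.HolderConjugate (Real.conjExponent θ) := Real.HolderConjugate.conjExponent hθ1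
  have hc1 : (θ - 1) * Real.conjExponent θ = θ := hconj.sub_one_mul_conj
  have hstep : ∀ n : ℕ, ∫⁻ r, (min (Φ r) n) ^ θ ∂ν ≤ M ^ θ := by
    intro n
    set g : ℝ → ℝ≥0∞ := fun r => min (Φ r) n with hg
    have hgm : Measurable g := hΦm.min measurable_const
    set I := ∫⁻ r, (g r) ^ θ ∂ν with hI
    have hIfin : I ≠ ⊤ := by
      have : I ≤ ∫⁻ r, (n : ℝ≥0∞) ^ θ ∂ν :=
        lintegral_mono fun r => ENNReal.rpow_le_rpow (min_le_right _ _) hθ0.le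
      refine ne_top_of_le_ne_top ?_ this
      rw [lintegral_const]
      exact ENNReal.mul_ne_top (ENNReal.rpow_ne_top_of_nonneg hθ0.le (by simp)) (measure_ne_top _ _)
    have h1 : I ≤ M * I ^ (1 / Real.conjExponent θ) := by
      calc I ≤ ∫⁻ r, Φ r * g r ^ (θ - 1) ∂ν := by
            refine lintegral_mono fun r => ?_
            have : g r ^ θ = g r * g r ^ (θ - 1) := by
              conv_lhs => rw [show θ = 1 + (θ - 1) by ring]
              rw [ENNReal.rpow_add_of_nonneg _ _ zero_le_one (by linarith), ENNReal.rpow_one]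
            show g r ^ θ ≤ _
            rw [this]
            gcongr
            exact min_le_left _ _
        _ = ∫⁻ r, ∫⁻ x, k x r * g r ^ (θ - 1) ∂μ ∂ν := by
            refine lintegral_congr fun r => ?_
            rw [lintegral_mul_const]
            exact hk.of_uncurry_right
        _ = ∫⁻ x, ∫⁻ r, k x r * g r ^ (θ - 1) ∂ν ∂μ := by
            rw [lintegral_lintegral_swap]
            exact ((hk.comp measurable_swap).mul ((hgm.comp measurable_fst).pow_const _)).aemeasurable
        _ ≤ ∫⁻ x, (∫⁻ r, k x r ^ θ ∂ν) ^ (1 / θ) * I ^ (1 / Real.conjExponent θ) ∂μ := by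
            refine lintegral_mono fun x => ?_
            have := ENNReal.lintegral_mul_le_Lp_mul_Lq ν hconj (f := k x)
              (g := fun r => g r ^ (θ - 1)) hk.of_uncurry_left.aemeasurable
              (hgm.pow_const _).aemeasurable
            simp only [← ENNReal.rpow_mul, hc1] at this
            exact this
        _ = _ := by
            rw [lintegral_mul_const]
            exact (Measurable.lintegral_prod_right' (f := fun z : X × ℝ => Function.uncurry k z ^ θ)
              (hk.pow_const _)).pow_const _
    rcases eq_or_ne I 0 with h0 | h0
    · rw [h0]; exact zero_le
    have h2 : I ^ (1 / θ) ≤ M := by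
      have e : I = I ^ (1 / θ) * I ^ (1 / Real.conjExponent θ) := by
        rw [← ENNReal.rpow_add _ _ h0 hIfin, one_div, one_div, hconj.inv_add_inv_eq_one,
          ENNReal.rpow_one]
      have hn0 : I ^ (1 / Real.conjExponent θ) ≠ 0 := by
        simp [ENNReal.rpow_eq_zero_iff, h0, hIfin]
      have hnt : I ^ (1 / Real.conjExponent θ) ≠ ⊤ := by
        simp [ENNReal.rpow_eq_top_iff, h0, hIfin]
      conv_lhs at h1 => rw [e]
      exact (ENNReal.mul_le_mul_iff_left hn0 hnt).1 h1
    have := ENNReal.rpow_le_rpow h2 hθ0.le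
    rwa [← ENNReal.rpow_mul, one_div_mul_cancel hθ0.ne', ENNReal.rpow_one] at this
  have hlim : ∫⁻ r, Φ r ^ θ ∂ν ≤ M ^ θ := by
    have e : ∀ r, Φ r ^ θ = ⨆ n : ℕ, (min (Φ r) n) ^ θ := by
      intro r
      apply le_antisymm
      · have ht : Filter.Tendsto (fun n : ℕ => (min (Φ r) n) ^ θ) Filter.atTop (nhds (Φ r ^ θ)) := by
          refine ((ENNReal.continuous_rpow_const).tendsto _).comp ?_
          have := (tendsto_const_nhds (x := Φ r)).min ENNReal.tendsto_nat_nhds_top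
          simpa using this
        exact le_of_tendsto ht (Filter.Eventually.of_forall fun n => le_iSup
          (fun n : ℕ => (min (Φ r) n) ^ θ) n)
      · exact iSup_le fun n => ENNReal.rpow_le_rpow (min_le_left _ _) hθ0.le
    simp_rw [e]
    rw [lintegral_iSup]
    · exact iSup_le hstep
    · exact fun n => (hΦm.min measurable_const).pow_const _
    · intro m n hmn r
      exact ENNReal.rpow_le_rpow (min_le_min le_rfl (by exact_mod_cast hmn)) hθ0.le
  have := ENNReal.rpow_le_rpow hlim (show 0 ≤ 1 / θ by positivity)
  rwa [← ENNReal.rpow_mul, mul_one_div_cancel hθ0.ne', ENNReal.rpow_one] at this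

lemma hardy_gen {X : Type*} [MeasurableSpace X]
    (μ₁ : Measure X) [IsFiniteMeasure μ₁] (μ₂ : Measure ℝ) [IsFiniteMeasure μ₂]
    (N : X → ℝ) (hN : Measurable N)
    (p q p' : ℝ) (hp : 1 < p) (hpq : p ≤ q)
    (hp' : p' = p / (p - 1)) (B : ℝ≥0∞)
    (hB : ∀ r : ℝ, μ₂ (Set.Ici r) ^ (1 / q) * μ₁ {x | N x < r} ^ (1 / p') ≤ B)
    (f : X → ℝ≥0∞) (hf : Measurable f) (a : ℝ) (ha : 0 < a) (ha1 : a < 1) :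
    (∫⁻ r, (∫⁻ x in {x | N x < r}, f x ∂μ₁) ^ q ∂μ₂) ^ (1 / q) ≤
        ENNReal.ofReal ((1 / (1 - a)) ^ (1 / p') * (1 / a) ^ (1 / q)) * B *
          (∫⁻ x, f x ^ p ∂μ₁) ^ (1 / p) := by
  have hp0 : 0 < p := by linarith
  have hq0 : 0 < q := by linarith
  have hconj : p.HolderConjugate p' := by
    rw [hp']; exact Real.HolderConjugate.conjExponent hp
  have hp'0 : 0 < p' := hconj.symm.pos
  obtain ⟨b, hb⟩ : ∃ b, b = 1 - a := ⟨_, rfl⟩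
  have hb0 : 0 < b := by linarith
  have hb1 : b < 1 := by linarith
  have hab : 1 - b = a := by linarith
  rw [← hb]
  set ν := μ₁.map N with hν
  have hFmono : Monotone fun s => ν (Set.Iic s) :=
    fun a b hab => measure_mono (Set.Iic_subset_Iic.2 hab)
  have hHanti : Antitone fun s => μ₂ (Set.Ici s) :=
    fun a b hab => measure_mono (Set.Ici_subset_Ici.2 hab)
  have hHm : Measurable fun s => μ₂ (Set.Ici s) := hHanti.measurable
  set F : X → ℝ≥0∞ := fun x => ν (Set.Iic (N x)) with hF
  have hFm : Measurable F := hFmono.measurable.comp hN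
  have hF0 : ∀ᵐ x ∂μ₁, F x ≠ 0 := ae_of_ae_map hN.aemeasurable (aux_null ν)
  have hFt : ∀ x, F x ≠ ⊤ := fun x => measure_ne_top _ _
  have hset : ∀ r : ℝ, MeasurableSet {x | N x < r} := fun r => measurableSet_lt hN measurable_const
  have hG : ∀ r, ν (Set.Iio r) = μ₁ {x | N x < r} := fun r => by
    rw [hν, Measure.map_apply hN measurableSet_Iio]; rfl
  -- the one-dimensional estimate pulled back
  have hA : ∀ r, ∫⁻ x in {x | N x < r}, F x ^ (-a) ∂μ₁ ≤
      ENNReal.ofReal (1 / b) * μ₁ {x | N x < r} ^ b := by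
    intro r
    have := aux2 ν a ha ha1 r
    rw [hG, setLIntegral_map measurableSet_Iio (hFmono.measurable.pow_const _) hN, ← hb] at this
    exact this
  -- limit version of the B bound
  have hB2 : ∀ x, μ₂ (Set.Ioi (N x)) ^ (1 / q) * F x ^ (1 / p') ≤ B := by
    intro x
    obtain ⟨u, hu1, hu2, hu3⟩ := exists_seq_strictAnti_tendsto (N x)
    have hU : Set.Ioi (N x) = ⋃ n, Set.Ici (u n) := (iUnion_Ici_eq_Ioi_of_lt_of_tendsto hu2 hu3).symm
    have hd : Filter.Tendsto (fun n => μ₂ (Set.Ici (u n))) Filter.atTop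
        (nhds (μ₂ (Set.Ioi (N x)))) := by
      rw [hU]
      refine tendsto_measure_iUnion_atTop ?_
      intro m n hmn
      exact Set.Ici_subset_Ici.2 (hu1.antitone hmn)
    have hd2 : Filter.Tendsto (fun n => μ₂ (Set.Ici (u n)) ^ (1 / q) * F x ^ (1 / p')) Filter.atTop
        (nhds (μ₂ (Set.Ioi (N x)) ^ (1 / q) * F x ^ (1 / p'))) := by
      refine ENNReal.Tendsto.mul_const (((ENNReal.continuous_rpow_const).tendsto _).comp hd) ?_
      exact Or.inr (ENNReal.rpow_ne_top_of_nonneg (by positivity) (hFt x))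
    refine le_of_tendsto hd2 (Filter.Eventually.of_forall fun n => ?_)
    refine le_trans ?_ (hB (u n))
    gcongr
    rw [← hG]
    exact measure_mono (Set.Iic_subset_Iio.2 (hu2 n))
  set w : X → ℝ≥0∞ := fun x => f x ^ p * F x ^ (a * p / p') with hw
  have hwm : Measurable w := (hf.pow_const _).mul (hFm.pow_const _)
  -- Hoelder
  have hT : ∀ r, (∫⁻ x in {x | N x < r}, f x ∂μ₁) ^ q ≤
      (∫⁻ x in {x | N x < r}, w x ∂μ₁) ^ (q / p) *
        (ENNReal.ofReal (1 / b) * μ₁ {x | N x < r} ^ b) ^ (q / p') := by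
    intro r
    have h1 : ∫⁻ x in {x | N x < r}, f x ∂μ₁ ≤ 
        (∫⁻ x in {x | N x < r}, w x ∂μ₁) ^ (1 / p) *
        (∫⁻ x in {x | N x < r}, F x ^ (-a) ∂μ₁) ^ (1 / p') := by
      have := ENNReal.lintegral_mul_le_Lp_mul_Lq (μ₁.restrict {x | N x < r}) hconj
        (f := fun x => f x * F x ^ (a / p')) (g := fun x => F x ^ (-a / p'))
        (hf.mul (hFm.pow_const _)).aemeasurable (hFm.pow_const _).aemeasurable
      have e1 : ∀ x, (f x * F x ^ (a / p')) ^ p = w x := fun x => by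
        rw [ENNReal.mul_rpow_of_nonneg _ _ hp0.le, ← ENNReal.rpow_mul]
        simp only [hw]; congr 2; ring
      have e2 : ∀ x, (F x ^ (-a / p')) ^ p' = F x ^ (-a) := fun x => by
        rw [← ENNReal.rpow_mul]; congr 1; field_simp
      simp only [e1, e2] at this
      refine le_trans (le_of_eq ?_) this
      refine lintegral_congr_ae ?_
      filter_upwards [ae_restrict_of_ae hF0] with x hx
      simp only [Pi.mul_apply]
      rw [mul_assoc, ← ENNReal.rpow_add _ _ hx (hFt x), show a / p' + -a / p' = 0 by ring,
        ENNReal.rpow_zero, mul_one]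
    calc _ ≤ ((∫⁻ x in {x | N x < r}, w x ∂μ₁) ^ (1 / p) *
        (ENNReal.ofReal (1 / b) * μ₁ {x | N x < r} ^ b) ^ (1 / p')) ^ q := by
          refine ENNReal.rpow_le_rpow (h1.trans ?_) hq0.le
          gcongr
          exact hA r
      _ = _ := by
          rw [ENNReal.mul_rpow_of_nonneg _ _ hq0.le, ← ENNReal.rpow_mul, ← ENNReal.rpow_mul,
            one_div_mul_eq_div, one_div_mul_eq_div]
  -- bound on G
  have hGB : ∀ᵐ r ∂μ₂, (ENNReal.ofReal (1 / b) * μ₁ {x | N x < r} ^ b) ^ (q / p') ≤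
      ENNReal.ofReal (1 / b) ^ (q / p') * B ^ (b * q) * μ₂ (Set.Ici r) ^ (-b) := by
    filter_upwards [aux_null' μ₂] with r hr
    rw [ENNReal.mul_rpow_of_nonneg _ _ (by positivity), mul_assoc]
    gcongr
    have h := ENNReal.rpow_le_rpow (hB r) (show 0 ≤ b * q by positivity)
    rw [ENNReal.mul_rpow_of_nonneg _ _ (by positivity), ← ENNReal.rpow_mul, ← ENNReal.rpow_mul,
      show 1 / q * (b * q) = b by field_simp] at h
    rw [ENNReal.rpow_neg, ← div_eq_mul_inv, ENNReal.le_div_iff_mul_le, mul_comm, ← ENNReal.rpow_mul]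
    · convert h using 3; ring
    · left; simp [ENNReal.rpow_eq_zero_iff, hr]
    · left; exact ENNReal.rpow_ne_top_of_nonneg hb0.le (measure_ne_top _ _)
  set k : X → ℝ → ℝ≥0∞ := fun x r =>
    Set.indicator {z : X × ℝ | N z.1 < z.2} (fun z => w z.1 * μ₂ (Set.Ici z.2) ^ (-b * (p / q))) (x, r)
    with hk
  have hS : MeasurableSet {z : X × ℝ | N z.1 < z.2} :=
    measurableSet_lt (hN.comp measurable_fst) measurable_snd
  have hkm : Measurable (Function.uncurry k) := by
    refine Measurable.indicator (f := fun z : X × ℝ => w z.1 * μ₂ (Set.Ici z.2) ^ (-b * (p / q))) ?_ hS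
    exact (hwm.comp measurable_fst).mul ((hHm.comp measurable_snd).pow_const _)
  have hθ : 1 ≤ q / p := by rwa [one_le_div hp0]
  have hmink := minkowski_int μ₁ μ₂ k hkm (q / p) hθ
  have hk1 : ∀ r, (∫⁻ x, k x r ∂μ₁) ^ (q / p) =
      (∫⁻ x in {x | N x < r}, w x ∂μ₁) ^ (q / p) * μ₂ (Set.Ici r) ^ (-b) := by
    intro r
    have : ∫⁻ x, k x r ∂μ₁ = (∫⁻ x in {x | N x < r}, w x ∂μ₁) * μ₂ (Set.Ici r) ^ (-b * (p / q)) := by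
      rw [← lintegral_mul_const _ hwm, ← lintegral_indicator (hset r)]
      rfl
    rw [this, ENNReal.mul_rpow_of_nonneg _ _ (by positivity), ← ENNReal.rpow_mul]
    congr 2; field_simp
  have hk2 : ∀ x, (∫⁻ r, k x r ^ (q / p) ∂μ₂) ^ (1 / (q / p)) ≤
      f x ^ p * (ENNReal.ofReal (1 / a) ^ (p / q) * B ^ (a * p)) := by
    intro x
    have e : ∫⁻ r, k x r ^ (q / p) ∂μ₂ ≤
        w x ^ (q / p) * (ENNReal.ofReal (1 / a) * μ₂ (Set.Ioi (N x)) ^ a) := by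
      have h3 := aux3 μ₂ b hb0 hb1 (N x)
      rw [hab] at h3
      refine le_trans (le_of_eq ?_) (mul_le_mul_right h3 _)
      rw [← lintegral_const_mul _ (hHm.pow_const _), ← lintegral_indicator measurableSet_Ioi]
      refine lintegral_congr fun r => ?_
      by_cases h : N x < r
      · simp only [hk, Set.indicator, Set.mem_ofPred_eq, h, Set.mem_Ioi, if_true]
        rw [ENNReal.mul_rpow_of_nonneg _ _ (by positivity), ← ENNReal.rpow_mul]
        congr 2; field_simp
      · simp only [hk, Set.indicator, Set.mem_ofPred_eq, h, Set.mem_Ioi, if_false]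
        exact ENNReal.zero_rpow_of_pos (by positivity)
    refine (ENNReal.rpow_le_rpow e (by positivity)).trans ?_
    rw [one_div_div, ENNReal.mul_rpow_of_nonneg (w x ^ (q / p)) _ (by positivity),
      ENNReal.mul_rpow_of_nonneg (ENNReal.ofReal (1 / a)) _ (by positivity),
      ← ENNReal.rpow_mul (w x), ← ENNReal.rpow_mul,
      show q / p * (p / q) = 1 by field_simp, ENNReal.rpow_one]
    have h := ENNReal.rpow_le_rpow (hB2 x) (show 0 ≤ a * p by positivity)
    rw [ENNReal.mul_rpow_of_nonneg _ _ (by positivity), ← ENNReal.rpow_mul, ← ENNReal.rpow_mul,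
      show 1 / q * (a * p) = a * (p / q) by ring, show 1 / p' * (a * p) = a * p / p' by ring] at h
    calc _ = f x ^ p * (ENNReal.ofReal (1 / a) ^ (p / q) *
          (μ₂ (Set.Ioi (N x)) ^ (a * (p / q)) * F x ^ (a * p / p'))) := by
          simp only [hw]; ring
      _ ≤ _ := by gcongr
  set c := ENNReal.ofReal (1 / b) ^ (q / p') * B ^ (b * q) with hc
  set J := ∫⁻ x, f x ^ p ∂μ₁ with hJ
  have hM : (∫⁻ r, (∫⁻ x, k x r ∂μ₁) ^ (q / p) ∂μ₂) ^ (1 / (q / p)) ≤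
      J * (ENNReal.ofReal (1 / a) ^ (p / q) * B ^ (a * p)) := by
    refine hmink.trans ((lintegral_mono hk2).trans (le_of_eq ?_))
    rw [lintegral_mul_const _ (hf.pow_const _)]
  have hM2 : (∫⁻ r, (∫⁻ x, k x r ∂μ₁) ^ (q / p) ∂μ₂) ^ (1 / q) ≤
      J ^ (1 / p) * (ENNReal.ofReal (1 / a) ^ (1 / q) * B ^ a) := by
    have := ENNReal.rpow_le_rpow hM (show 0 ≤ 1 / p by positivity)
    rw [ENNReal.mul_rpow_of_nonneg _ _ (by positivity),
      ENNReal.mul_rpow_of_nonneg _ _ (by positivity), ← ENNReal.rpow_mul, ← ENNReal.rpow_mul,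
      ← ENNReal.rpow_mul, show 1 / (q / p) * (1 / p) = 1 / q by field_simp,
      show p / q * (1 / p) = 1 / q by field_simp, show a * p * (1 / p) = a by field_simp] at this
    exact this
  have hfin : ∫⁻ r, (∫⁻ x in {x | N x < r}, f x ∂μ₁) ^ q ∂μ₂ ≤
      c * ∫⁻ r, (∫⁻ x, k x r ∂μ₁) ^ (q / p) ∂μ₂ := by
    have hm3 : Measurable fun r => (∫⁻ x, k x r ∂μ₁) ^ (q / p) :=
      (Measurable.lintegral_prod_left' hkm).pow_const _
    rw [← lintegral_const_mul _ hm3]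
    refine lintegral_mono_ae ?_
    filter_upwards [hGB] with r hr
    rw [hk1]
    calc _ ≤ _ := hT r
      _ ≤ (∫⁻ x in {x | N x < r}, w x ∂μ₁) ^ (q / p) * (c * μ₂ (Set.Ici r) ^ (-b)) := by gcongr
      _ = _ := by ring
  calc _ ≤ (c * ∫⁻ r, (∫⁻ x, k x r ∂μ₁) ^ (q / p) ∂μ₂) ^ (1 / q) :=
        ENNReal.rpow_le_rpow hfin (by positivity)
    _ = c ^ (1 / q) * (∫⁻ r, (∫⁻ x, k x r ∂μ₁) ^ (q / p) ∂μ₂) ^ (1 / q) :=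
        ENNReal.mul_rpow_of_nonneg _ _ (by positivity)
    _ ≤ c ^ (1 / q) * (J ^ (1 / p) * (ENNReal.ofReal (1 / a) ^ (1 / q) * B ^ a)) := by gcongr
    _ = ENNReal.ofReal (1 / b) ^ (1 / p') * B ^ b *
          (J ^ (1 / p) * (ENNReal.ofReal (1 / a) ^ (1 / q) * B ^ a)) := by
        congr 1
        rw [hc, ENNReal.mul_rpow_of_nonneg _ _ (by positivity), ← ENNReal.rpow_mul,
          ← ENNReal.rpow_mul, show q / p' * (1 / q) = 1 / p' by field_simp,
          show b * q * (1 / q) = b by field_simp]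
    _ = _ := by
        have hBB : B = B ^ b * B ^ a := by
          rw [← ENNReal.rpow_add_of_nonneg _ _ hb0.le ha.le, hb, sub_add_cancel, ENNReal.rpow_one]
        conv_rhs => rw [hBB]
        rw [ENNReal.ofReal_mul (by positivity), ENNReal.ofReal_rpow_of_nonneg (by positivity)
          (by positivity), ENNReal.ofReal_rpow_of_nonneg (by positivity) (by positivity)]
        ring

/-- Hardy inequality on a general measurable space, `μ₁` finite with `N_*(μ₁)` compactly
supported, `μ₂` a finite compactly supported Borel measure on ℝ, and weight `ψ = 1`. -/
theorem hardy_inequality_pushforward_compact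
    {X : Type*} [MeasurableSpace X]
    (μ₁ : Measure X) [IsFiniteMeasure μ₁] (μ₂ : Measure ℝ) [IsFiniteMeasure μ₂]
    (N : X → ℝ) (hN : Measurable N)
    (K₁ K₂ : Set ℝ) (hK₁ : IsCompact K₁) (hK₂ : IsCompact K₂)
    (hNK : Measure.map N μ₁ K₁ᶜ = 0) (hμ₂K : μ₂ K₂ᶜ = 0)
    (p q p' q' : ℝ) (hp : 1 < p) (hpq : p ≤ q)
    (hp' : p' = p / (p - 1)) (hq' : q' = q / (q - 1))
    (B : ℝ≥0∞)
    (hB : B = ⨆ r : ℝ, μ₂ (Set.Ici r) ^ (1 / q) * μ₁ {x | N x < r} ^ (1 / p'))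
    (hBfin : B ≠ ⊤) :
    ∀ f : X → ℝ≥0∞, Measurable f →
      (∫⁻ r, (∫⁻ x in {x | N x < r}, f x ∂μ₁) ^ q ∂μ₂) ^ (1 / q) ≤
        ENNReal.ofReal (min (p' ^ (1 / p') * p ^ (1 / q)) (q' ^ (1 / p') * q ^ (1 / q))) * B *
          (∫⁻ x, f x ^ p ∂μ₁) ^ (1 / p) := by
  intro f hf
  have hB' : ∀ r : ℝ, μ₂ (Set.Ici r) ^ (1 / q) * μ₁ {x | N x < r} ^ (1 / p') ≤ B := by
    intro r
    rw [hB]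
    exact le_iSup (fun r : ℝ => μ₂ (Set.Ici r) ^ (1 / q) * μ₁ {x | N x < r} ^ (1 / p')) r
  have hq : 1 < q := by linarith
  have key : ∀ t : ℝ, 1 < t → 0 < 1 / t ∧ 1 / t < 1 ∧ 1 / (1 - 1 / t) = t / (t - 1) ∧
      1 / (1 / t) = t := by
    intro t ht
    have h1 : t - 1 ≠ 0 := by linarith
    refine ⟨by positivity, by rw [div_lt_one] <;> linarith, ?_, one_div_one_div t⟩
    rw [one_sub_div (by linarith), one_div_div]
  obtain ⟨a1, a2, a3, a4⟩ := key p hp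
  obtain ⟨b1, b2, b3, b4⟩ := key q hq
  have h1 := hardy_gen μ₁ μ₂ N hN p q p' hp hpq hp' B hB' f hf (1 / p) a1 a2
  have h2 := hardy_gen μ₁ μ₂ N hN p q p' hp hpq hp' B hB' f hf (1 / q) b1 b2
  rw [a3, a4, ← hp'] at h1
  rw [b3, b4, ← hq'] at h2
  rcases min_choice (p' ^ (1 / p') * p ^ (1 / q)) (q' ^ (1 / p') * q ^ (1 / q)) with h | h
  · rw [h]; exact h1
  · rw [h]; exact h2
end

section
/- Let μ be a finite Borel measure on ℝ and for n ∈ ℕ define μₙ := μ + Σ_{r∈ℝ} μ({r}) · (2ⁿ · λ|_{[r, r+2^{−n}]} − δ_r), where λ is Lebesgue measure, δ_r is the Dirac measure at r, and the sum runs over the (at most countably many) atoms of μ. Then: (a) each μₙ is a diffuse finite positive Borel measure; (b) μₙ((−∞,r)) ≤ μ((−∞,r)) for every r ∈ ℝ and n ∈ ℕ; (c) for every r ∈ ℝ and every continuous compactly supported function φ : ℝ → ℝ, ∫_{(−∞,r)} φ dμₙ → ∫_{(−∞,r)} φ dμ as n → ∞; in particular μₙ converges to μ in the vague topology. -/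
open MeasureTheory ENNReal Filter
open scoped NNReal Topology

noncomputable def smearNu (n : ℕ) (r : ℝ) : Measure ℝ :=
  (2 ^ n : ℝ≥0∞) • volume.restrict (Set.Icc r (r + ((2 : ℝ) ^ n)⁻¹))

instance smearNu_prob (n : ℕ) (r : ℝ) : IsProbabilityMeasure (smearNu n r) := by
  constructor
  simp only [smearNu, Measure.smul_apply, Measure.restrict_apply MeasurableSet.univ,
    Set.univ_inter, Real.volume_Icc, smul_eq_mul, add_sub_cancel_left]
  rw [ENNReal.ofReal_inv_of_pos (by positivity), ENNReal.ofReal_pow (by norm_num)]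
  simp only [ENNReal.ofReal_ofNat]
  exact ENNReal.mul_inv_cancel (by positivity) (by finiteness)

theorem smearNu_ae (n : ℕ) (r : ℝ) :
    ∀ᵐ x ∂(smearNu n r), x ∈ Set.Icc r (r + ((2 : ℝ) ^ n)⁻¹) := by
  unfold smearNu
  apply Measure.ae_smul_measure
  exact ae_restrict_mem measurableSet_Icc

theorem smearNu_le (n : ℕ) (r x : ℝ) :
    smearNu n r (Set.Iio x) ≤ Measure.dirac r (Set.Iio x) := by
  by_cases h : r < x
  · rw [Measure.dirac_apply_of_mem (by simpa using h)]
    exact prob_le_one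
  · have : smearNu n r (Set.Iio x) = 0 := by
      rw [measure_eq_zero_iff_ae_notMem]
      filter_upwards [smearNu_ae n r] with y hy hy2
      have := hy.1
      simp only [Set.mem_Iio] at hy2
      linarith
    rw [this]
    exact zero_le

theorem smearNu_tendsto (r : ℝ) (g : ℝ → ℝ) (hm : Measurable g) (C : ℝ) (hC : ∀ x, ‖g x‖ ≤ C)
    (hr : ContinuousWithinAt g (Set.Ici r) r) :
    Tendsto (fun n => ∫ x, g x ∂(smearNu n r)) atTop (𝓝 (g r)) := by
  rw [Metric.tendsto_nhds]
  intro ε hε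
  rw [Metric.continuousWithinAt_iff] at hr
  obtain ⟨δ, hδ, h⟩ := hr (ε / 2) (by positivity)
  have ht : Tendsto (fun n : ℕ => ((2 : ℝ) ^ n)⁻¹) atTop (𝓝 0) :=
    tendsto_inv_atTop_zero.comp (tendsto_pow_atTop_atTop_of_one_lt (by norm_num))
  filter_upwards [ht.eventually (gt_mem_nhds hδ)] with n hn
  have hi : Integrable g (smearNu n r) :=
    Integrable.of_bound hm.aestronglyMeasurable C (Eventually.of_forall hC)
  have e : ∫ x, g x ∂(smearNu n r) - g r = ∫ x, (g x - g r) ∂(smearNu n r) := by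
    rw [integral_sub hi (integrable_const _)]
    simp
  rw [Real.dist_eq, e, ← Real.norm_eq_abs]
  have : ‖∫ x, (g x - g r) ∂(smearNu n r)‖ ≤ ε / 2 * (smearNu n r).real Set.univ := by
    apply norm_integral_le_of_norm_le_const
    filter_upwards [smearNu_ae n r] with y hy
    have h2 := @h y hy.1 (by
      rw [Real.dist_eq, abs_of_nonneg (by linarith [hy.1])]
      linarith [hy.2])
    rw [Real.dist_eq] at h2
    exact h2.le
  simp only [probReal_univ, mul_one] at this
  linarith

theorem smear_countable (μ : Measure ℝ) [IsFiniteMeasure μ] :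
    {r : ℝ | μ {r} ≠ 0}.Countable := by
  have := Measure.countable_meas_pos_of_disjoint_iUnion (μ := μ) (As := fun r : ℝ => {r})
    (fun i => measurableSet_singleton i) (fun i j hij => by simpa [Function.onFun] using hij)
  simpa only [pos_iff_ne_zero] using this

theorem smear_decomp (μ : Measure ℝ) [IsFiniteMeasure μ] :
    μ = μ.restrict {x | μ {x} = 0} +
      Measure.sum (fun r : {r : ℝ // μ {r} ≠ 0} => μ {(r : ℝ)} • Measure.dirac (r : ℝ)) := by
  have hc := smear_countable μ
  have : Countable {r : ℝ // μ {r} ≠ 0} := hc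
  have hu : (⋃ r : {r : ℝ // μ {r} ≠ 0}, ({(r : ℝ)} : Set ℝ)) = {r : ℝ | μ {r} ≠ 0} := by
    ext x; simp
  have h1 := Measure.restrict_iUnion (μ := μ) (s := fun r : {r : ℝ // μ {r} ≠ 0} => {(r : ℝ)})
    (fun i j hij => by simpa [Function.onFun, Subtype.ext_iff] using hij)
    (fun i => measurableSet_singleton _)
  rw [hu] at h1
  simp only [Measure.restrict_singleton] at h1
  rw [← h1]
  have hm : MeasurableSet {x : ℝ | μ {x} = 0} := by
    have := hc.measurableSet.compl
    convert this using 1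
    ext x; simp
  have := Measure.restrict_add_restrict_compl (μ := μ) hm
  exact this.symm

theorem smear_tendsto (μ : Measure ℝ) [IsFiniteMeasure μ] (μn : ℕ → Measure ℝ)
    (hf : ∀ n, IsFiniteMeasure (μn n))
    (hμn : ∀ n : ℕ, μn n = μ.restrict {x | μ {x} = 0} +
      Measure.sum (fun r : {r : ℝ // μ {r} ≠ 0} => μ {(r : ℝ)} • smearNu n r))
    (g : ℝ → ℝ) (hm : Measurable g) (C : ℝ) (hC : ∀ x, ‖g x‖ ≤ C)
    (hr : ∀ r, ContinuousWithinAt g (Set.Ici r) r) :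
    Tendsto (fun n => ∫ x, g x ∂(μn n)) atTop (𝓝 (∫ x, g x ∂μ)) := by
  have hint : ∀ (ρ : Measure ℝ) [IsFiniteMeasure ρ], Integrable g ρ := fun ρ _ =>
    Integrable.of_bound hm.aestronglyMeasurable C (Eventually.of_forall hC)
  have key : ∀ (ρ σ : Measure ℝ) [IsFiniteMeasure ρ] (κ : ℝ → Measure ℝ),
      ρ = σ + Measure.sum (fun r : {r : ℝ // μ {r} ≠ 0} => μ {(r : ℝ)} • κ r) →
      ∫ x, g x ∂ρ = ∫ x, g x ∂σ +
        ∑' r : {r : ℝ // μ {r} ≠ 0}, (μ {(r : ℝ)}).toReal * ∫ x, g x ∂(κ r) := by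
    intro ρ σ _ κ h
    have hi := hint ρ
    rw [h] at hi ⊢
    obtain ⟨h1, h2⟩ := integrable_add_measure.1 hi
    rw [integral_add_measure h1 h2, integral_sum_measure h2]
    simp only [integral_smul_measure, smul_eq_mul]
  rw [key μ _ _ (smear_decomp μ)]
  simp_rw [fun n => key (μn n) _ _ (hμn n)]
  refine tendsto_const_nhds.add ?_
  simp only [integral_dirac]
  have hs : Summable (fun r : {r : ℝ // μ {r} ≠ 0} => (μ {(r : ℝ)}).toReal) := by
    apply ENNReal.summable_toReal
    have h := congrArg (fun ρ : Measure ℝ => ρ Set.univ) (smear_decomp μ)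
    simp only [Measure.add_apply, Measure.sum_apply _ MeasurableSet.univ, Measure.smul_apply,
      measure_univ, smul_eq_mul, mul_one] at h
    exact ne_top_of_le_ne_top (measure_ne_top μ Set.univ) (h ▸ le_add_self)
  refine tendsto_tsum_of_dominated_convergence (hs.mul_right C) ?_ ?_
  · intro r
    exact (smearNu_tendsto r g hm C hC (hr r)).const_mul _
  · refine Eventually.of_forall fun n r => ?_
    rw [norm_mul, Real.norm_of_nonneg ENNReal.toReal_nonneg]
    refine mul_le_mul_of_nonneg_left ?_ ENNReal.toReal_nonneg
    have := norm_integral_le_of_norm_le_const (μ := smearNu n r) (f := g) (C := C)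
      (Eventually.of_forall hC)
    simpa using this

/-- Smearing the atoms of a finite Borel measure `μ` on ℝ: writing `μ` as its diffuse part
plus its atomic part, and replacing each atom `μ({r}) δ_r` by `μ({r}) 2^n λ|_{[r, r+2^{-n}]}`,
we obtain diffuse finite measures `μₙ` with `μₙ((-∞,r)) ≤ μ((-∞,r))` for all `r`, such that
`χ_{(-∞,r)}·μₙ → χ_{(-∞,r)}·μ` vaguely for each `r`, and in particular `μₙ → μ` vaguely. -/
theorem smeared_atoms_vague_convergence
    (μ : Measure ℝ) [IsFiniteMeasure μ]
    (μn : ℕ → Measure ℝ)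
    (hμn : ∀ n : ℕ, μn n = μ.restrict {x | μ {x} = 0} +
      Measure.sum (fun r : {r : ℝ // μ {r} ≠ 0} =>
        μ {(r : ℝ)} • ((2 ^ n : ℝ≥0∞) •
          volume.restrict (Set.Icc (r : ℝ) ((r : ℝ) + ((2 : ℝ) ^ n)⁻¹))))) :
    (∀ n : ℕ, ∀ x : ℝ, μn n {x} = 0) ∧
    (∀ n : ℕ, μn n Set.univ < ⊤) ∧
    (∀ n : ℕ, ∀ r : ℝ, μn n (Set.Iio r) ≤ μ (Set.Iio r)) ∧
    (∀ r : ℝ, ∀ φ : ℝ → ℝ, Continuous φ → HasCompactSupport φ →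
      Tendsto (fun n => ∫ x in Set.Iio r, φ x ∂(μn n)) atTop
        (𝓝 (∫ x in Set.Iio r, φ x ∂μ))) ∧
    (∀ φ : ℝ → ℝ, Continuous φ → HasCompactSupport φ →
      Tendsto (fun n => ∫ x, φ x ∂(μn n)) atTop (𝓝 (∫ x, φ x ∂μ))) := by
  replace hμn : ∀ n : ℕ, μn n = μ.restrict {x | μ {x} = 0} +
      Measure.sum (fun r : {r : ℝ // μ {r} ≠ 0} => μ {(r : ℝ)} • smearNu n r) := hμn
  have hcount : Countable {r : ℝ // μ {r} ≠ 0} := smear_countable μ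
  have hfin : ∀ n : ℕ, μn n Set.univ = μ Set.univ := by
    intro n
    rw [hμn n]
    conv_rhs => rw [smear_decomp μ]
    simp only [Measure.add_apply, Measure.sum_apply _ MeasurableSet.univ, Measure.smul_apply,
      measure_univ]
  have hf : ∀ n, IsFiniteMeasure (μn n) := fun n => ⟨by rw [hfin n]; exact measure_lt_top μ _⟩
  refine ⟨?_, ?_, ?_, ?_, ?_⟩
  · intro n x
    rw [hμn n]
    simp only [Measure.add_apply, Measure.sum_apply _ (measurableSet_singleton x),
      Measure.smul_apply, add_eq_zero, ENNReal.tsum_eq_zero]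
    constructor
    · rw [Measure.restrict_apply (measurableSet_singleton x)]
      by_cases h : μ {x} = 0
      · exact measure_mono_null Set.inter_subset_left h
      · have : ({x} ∩ {x | μ {x} = 0} : Set ℝ) = ∅ := by
          ext y
          simp only [Set.mem_inter_iff, Set.mem_singleton_iff, Set.mem_ofPred_eq,
            Set.mem_empty_iff_false, iff_false]
          rintro ⟨rfl, h2⟩
          exact h h2
        rw [this, measure_empty]
    · intro r
      simp [smearNu]
  · intro n
    exact measure_lt_top _ _
  · intro n r
    rw [hμn n]
    conv_rhs => rw [smear_decomp μ]
    simp only [Measure.add_apply, Measure.sum_apply _ measurableSet_Iio, Measure.smul_apply,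
      smul_eq_mul]
    exact add_le_add_right
      (ENNReal.tsum_le_tsum fun a : {r : ℝ // μ {r} ≠ 0} => mul_le_mul_right (smearNu_le n a r) _) _
  · intro r φ hφ hs
    obtain ⟨C, hC⟩ := hφ.bounded_above_of_compact_support hs
    simp only [← integral_indicator (measurableSet_Iio (a := r))]
    refine smear_tendsto μ μn hf hμn _ (hφ.measurable.indicator measurableSet_Iio) C
      (fun x => (norm_indicator_le_norm_self φ x).trans (hC x)) ?_
    intro a
    by_cases h : a < r
    · refine (hφ.continuousAt.congr ?_).continuousWithinAt
      filter_upwards [Iio_mem_nhds h] with y hy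
      rw [Set.indicator_of_mem hy]
    · have : ∀ y ∈ Set.Ici a, (Set.Iio r).indicator φ y = 0 := fun y hy =>
        Set.indicator_of_notMem (by simp at hy h ⊢; linarith) _
      exact continuousWithinAt_const.congr this (this a Set.self_mem_Ici)
  · intro φ hφ hs
    obtain ⟨C, hC⟩ := hφ.bounded_above_of_compact_support hs
    exact smear_tendsto μ μn hf hμn φ hφ.measurable C hC
      (fun r => hφ.continuousWithinAt)
end

section
/- Let μ be a diffuse finite Borel measure on ℝ (μ({x}) = 0 for all x) and let α ∈ (0,1). Then for every r ∈ ℝ, ∫_{(−∞,r)} μ((−∞,s))^{−α} dμ(s) = (1/(1−α)) · μ((−∞,r))^{1−α}, where the integral is the Lebesgue integral with values in [0,+∞] and the integrand is interpreted as +∞ where μ((−∞,s)) = 0 (a μ-null set, since μ is diffuse). -/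
open MeasureTheory ENNReal
open scoped NNReal

lemma aux_cont (μ : Measure ℝ) [IsFiniteMeasure μ] [NullSingletonClass μ] :
    Continuous (fun s => μ.real (Set.Iic s)) := by
  have h := intervalIntegral.continuous_primitive (μ := μ) (f := fun _ => (1:ℝ))
    (fun a b => by simp) 0
  simp only [intervalIntegral.integral_const_of_cdf, smul_eq_mul, mul_one] at h
  have h2 := h.add (continuous_const (y := μ.real (Set.Iic 0)))
  convert h2 using 1
  funext s
  simp

lemma aux_mono (μ : Measure ℝ) [IsFiniteMeasure μ] :
    Monotone (fun s => μ.real (Set.Iic s)) :=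
  fun _ _ h => measureReal_mono (Set.Iic_subset_Iic.2 h)

lemma aux_map (μ : Measure ℝ) [IsFiniteMeasure μ] [NullSingletonClass μ] (r : ℝ) :
    Measure.map (fun s => μ.real (Set.Iic s)) (μ.restrict (Set.Iio r)) =
      volume.restrict (Set.Ioc 0 (μ.real (Set.Iic r))) := by
  have hc := aux_cont μ
  have hm := aux_mono μ
  set F := fun s => μ.real (Set.Iic s) with hF
  have hFo : ∀ s, ENNReal.ofReal (F s) = μ (Set.Iic s) := fun s => by simp [hF]
  have : IsFiniteMeasure (Measure.map F (μ.restrict (Set.Iio r))) := inferInstance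
  refine Measure.ext_of_Iic _ _ fun t => ?_
  rw [Measure.map_apply hc.measurable measurableSet_Iic,
    Measure.restrict_apply (hc.measurable measurableSet_Iic),
    Measure.restrict_apply measurableSet_Iic]
  have e : Set.Iic t ∩ Set.Ioc 0 (F r) = Set.Ioc 0 (min t (F r)) := by
    ext x; simp; tauto
  change _ = volume (Set.Iic t ∩ Set.Ioc 0 (F r))
  rw [e, Real.volume_Ioc, sub_zero]
  rcases le_or_gt (F r) t with h | h
  · have : F ⁻¹' Set.Iic t ∩ Set.Iio r = Set.Iio r := by
      refine Set.inter_eq_right.2 fun s hs => (hm (le_of_lt hs)).trans h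
    rw [this, min_eq_right h, hFo, measure_congr Iio_ae_eq_Iic]
  · rw [min_eq_left h.le]
    have hlt : ∀ s, F s ≤ t → s < r := fun s hs => by
      by_contra hh
      exact absurd (hm (not_lt.1 hh)) (by simpa using lt_of_le_of_lt hs h)
    have : F ⁻¹' Set.Iic t ∩ Set.Iio r = F ⁻¹' Set.Iic t :=
      Set.inter_eq_left.2 fun s hs => hlt s hs
    rw [this]
    rcases Set.eq_empty_or_nonempty (F ⁻¹' Set.Iic t) with h0 | h0
    · rw [h0, measure_empty, eq_comm, ENNReal.ofReal_eq_zero]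
      by_contra! ht
      have hl : Filter.Tendsto F Filter.atBot (nhds 0) := by
        have h3 : Filter.Tendsto (fun s => μ (Set.Iic s)) Filter.atBot (nhds 0) := by
          have h4 := tendsto_measure_iInter_atBot (μ := μ) (s := fun s : ℝ => Set.Iic s)
            (fun _ => measurableSet_Iic.nullMeasurableSet) (fun _ _ h => Set.Iic_subset_Iic.2 h)
            ⟨0, measure_ne_top _ _⟩
          have h5 : (⋂ s : ℝ, Set.Iic s) = ∅ := by
            ext x
            simpa using exists_lt x
          rw [h5, measure_empty] at h4
          exact h4
        exact (ENNReal.tendsto_toReal ENNReal.zero_ne_top).comp h3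
      obtain ⟨s, hs⟩ := (hl.eventually (gt_mem_nhds ht)).exists
      have : s ∈ F ⁻¹' Set.Iic t := le_of_lt hs
      simp [h0] at this
    · have hb : BddAbove (F ⁻¹' Set.Iic t) := ⟨r, fun s hs => (hlt s hs).le⟩
      have hmem := (isClosed_Iic.preimage hc).csSup_mem h0 hb
      set c := sSup (F ⁻¹' Set.Iic t)
      have hA : F ⁻¹' Set.Iic t = Set.Iic c :=
        Set.Subset.antisymm (fun s hs => le_csSup hb hs) fun s hs => (hm hs).trans hmem
      have hge : t ≤ F c := by
        refine ge_of_tendsto (hc.continuousAt.mono_left nhdsWithin_le_nhds :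
          Filter.Tendsto F (nhdsWithin c (Set.Ioi c)) _) ?_
        filter_upwards [self_mem_nhdsWithin] with s hs
        by_contra! hh
        have : s ∈ F ⁻¹' Set.Iic t := hh.le
        rw [hA] at this
        exact (not_le.2 (Set.mem_Ioi.1 hs)) (Set.mem_Iic.1 this)
      rw [hA, ← hFo, le_antisymm hmem hge]

/-- For a diffuse finite Borel measure `μ` on ℝ and `α ∈ (0,1)`,
`∫_{(-∞,r)} μ((-∞,s))^{-α} dμ(s) = (1/(1-α)) μ((-∞,r))^{1-α}`. -/
theorem lintegral_measure_Iio_rpow_neg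
    (μ : Measure ℝ) [IsFiniteMeasure μ] (hd : ∀ x : ℝ, μ {x} = 0)
    (α : ℝ) (hα0 : 0 < α) (hα1 : α < 1) :
    ∀ r : ℝ,
      ∫⁻ s in Set.Iio r, (μ (Set.Iio s)) ^ (-α) ∂μ =
        ENNReal.ofReal (1 / (1 - α)) * (μ (Set.Iio r)) ^ (1 - α) := by
  intro r
  have : NullSingletonClass μ := ⟨hd⟩
  have hI : ∀ s, μ (Set.Iio s) = ENNReal.ofReal (μ.real (Set.Iic s)) := fun s => by
    rw [measure_congr Iio_ae_eq_Iic]; simp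
  simp only [hI]
  have hM : 0 ≤ μ.real (Set.Iic r) := measureReal_nonneg
  have h1 := lintegral_map (μ := μ.restrict (Set.Iio r))
    (f := fun x : ℝ => ENNReal.ofReal x ^ (-α)) (by fun_prop) (aux_cont μ).measurable
  rw [← h1, aux_map]
  generalize μ.real (Set.Iic r) = M at hM
  have hi : IntervalIntegrable (fun x : ℝ => x ^ (-α)) volume 0 M :=
    intervalIntegral.intervalIntegrable_rpow' (by linarith)
  have h2 : ∫⁻ x in Set.Ioc 0 M, ENNReal.ofReal x ^ (-α) =
      ∫⁻ x in Set.Ioc 0 M, ENNReal.ofReal (x ^ (-α)) :=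
    setLIntegral_congr_fun measurableSet_Ioc fun x hx => ENNReal.ofReal_rpow_of_pos hx.1
  rw [h2, ← ofReal_integral_eq_lintegral_ofReal
    ((intervalIntegrable_iff_integrableOn_Ioc_of_le hM).1 hi),
    ← intervalIntegral.integral_of_le hM, integral_rpow (Or.inl (by linarith)),
    ENNReal.ofReal_rpow_of_nonneg hM (by linarith), ← ENNReal.ofReal_mul
      (by have : 0 < 1 - α := by linarith
          positivity)]
  · rw [neg_add_eq_sub, Real.zero_rpow (by linarith), sub_zero]
    congr 1
    ring
  · filter_upwards [ae_restrict_mem measurableSet_Ioc] with x hx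
    exact Real.rpow_nonneg hx.1.le _
end

section
/- Let f, g : ℝ → [0,+∞) be two functions, with f decreasing (non-increasing) and left-continuous, g increasing (non-decreasing) and right-continuous, and such that the product f·g has compact support. Then lim_{ε→0⁺} sup_{r∈ℝ} f(r−ε) g(r) = sup_{r∈ℝ} f(r) g(r). -/
open Filter
open scoped Topology

/-- Lemma 2: for `f` decreasing and left-continuous, `g` increasing and right-continuous,
both nonnegative, with `f·g` compactly supported,
`lim_{ε→0⁺} sup_r f(r-ε) g(r) = sup_r f(r) g(r)`. -/
theorem tendsto_sup_shifted_product
    (f g : ℝ → ℝ) (hf0 : ∀ r, 0 ≤ f r) (hg0 : ∀ r, 0 ≤ g r)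
    (hf : Antitone f) (hflc : ∀ r : ℝ, ContinuousWithinAt f (Set.Iic r) r)
    (hg : Monotone g) (hgrc : ∀ r : ℝ, ContinuousWithinAt g (Set.Ici r) r)
    (hsupp : HasCompactSupport fun r => f r * g r) :
    Tendsto (fun ε : ℝ => ⨆ r : ℝ, f (r - ε) * g r) (𝓝[>] (0 : ℝ))
      (𝓝 (⨆ r : ℝ, f r * g r)) := by
  by_cases hA : ∃ A, g A = 0
  swap
  · have hgp : ∀ r, g r ≠ 0 := fun r h => hA ⟨r, h⟩
    have hfz : ∀ r, f r = 0 := by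
      obtain ⟨m, hm⟩ := hsupp.isCompact.bddBelow
      intro r
      have h1 : f (min r (m - 1)) * g (min r (m - 1)) = 0 := by
        by_contra hne
        have := hm (subset_tsupport _ (Function.mem_support.2 hne))
        have := min_le_right r (m - 1)
        linarith
      have h2 := (mul_eq_zero.1 h1).resolve_right (hgp _)
      exact le_antisymm (h2 ▸ hf (min_le_left r (m - 1))) (hf0 r)
    simp [hfz]
  by_cases hB : ∃ B, f B = 0
  swap
  · have hfp : ∀ r, f r ≠ 0 := fun r h => hB ⟨r, h⟩
    have hgz : ∀ r, g r = 0 := by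
      obtain ⟨m, hm⟩ := hsupp.isCompact.bddAbove
      intro r
      have h1 : f (max r (m + 1)) * g (max r (m + 1)) = 0 := by
        by_contra hne
        have := hm (subset_tsupport _ (Function.mem_support.2 hne))
        have := le_max_right r (m + 1)
        linarith
      have h2 := (mul_eq_zero.1 h1).resolve_left (hfp _)
      exact le_antisymm (h2 ▸ hg (le_max_left r (m + 1))) (hg0 r)
    simp [hgz]
  obtain ⟨A, hA⟩ := hA
  obtain ⟨B, hB⟩ := hB
  have hgA : ∀ r ≤ A, g r = 0 := fun r hr => le_antisymm (hA ▸ hg hr) (hg0 r)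
  have hfB : ∀ r, B ≤ r → f r = 0 := fun r hr => le_antisymm (hB ▸ hf hr) (hf0 r)
  have hbdd : BddAbove (Set.range fun r => f r * g r) := by
    refine ⟨f A * g B, ?_⟩
    rintro _ ⟨r, rfl⟩
    have h0 := mul_nonneg (hf0 A) (hg0 B)
    rcases le_total r A with h | h
    · simpa [hgA r h] using h0
    rcases le_total B r with h' | h'
    · simpa [hfB r h'] using h0
    exact mul_le_mul (hf h) (hg h') (hg0 r) (hf0 A)
  set S := ⨆ r : ℝ, f r * g r with hS
  have hS0 : 0 ≤ S := (mul_nonneg (hf0 0) (hg0 0)).trans (le_ciSup hbdd 0)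
  have key : ∀ δ > 0, ∀ᶠ ε in 𝓝[>] (0 : ℝ), ∀ r, f (r - ε) * g r ≤ S + δ := by
    intro δ hδ
    have hc : ∀ᶠ ε in 𝓝 (0 : ℝ), ∀ r ∈ Set.Icc A (B + 1), f (r - ε) * g r ≤ S + δ := by
      apply isCompact_Icc.eventually_forall_of_forall_eventually
      intro r0 _
      have t1 : Tendsto (fun η : ℝ => f (r0 - 2 * η)) (𝓝[>] 0) (𝓝 (f r0)) := by
        refine (hflc r0).tendsto.comp (tendsto_nhdsWithin_iff.2 ⟨?_, ?_⟩)
        · have : Continuous fun η : ℝ => r0 - 2 * η := by fun_prop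
          simpa using (this.tendsto 0).mono_left nhdsWithin_le_nhds
        · filter_upwards [self_mem_nhdsWithin] with η hη
          have : 0 < η := hη
          simp only [Set.mem_Iic]; linarith
      have t2 : Tendsto (fun η : ℝ => g (r0 + η)) (𝓝[>] 0) (𝓝 (g r0)) := by
        refine (hgrc r0).tendsto.comp (tendsto_nhdsWithin_iff.2 ⟨?_, ?_⟩)
        · have : Continuous fun η : ℝ => r0 + η := by fun_prop
          simpa using (this.tendsto 0).mono_left nhdsWithin_le_nhds
        · filter_upwards [self_mem_nhdsWithin] with η hη
          have : 0 < η := hη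
          simp only [Set.mem_Ici]; linarith
      have hlt : f r0 * g r0 < S + δ := by
        have : f r0 * g r0 ≤ S := le_ciSup hbdd r0
        linarith
      obtain ⟨η, hη1, hη2⟩ :=
        (((t1.mul t2).eventually_lt_const hlt).and self_mem_nhdsWithin).exists
      have hη : 0 < η := hη2
      filter_upwards [prod_mem_nhds (Iio_mem_nhds hη)
        (Ioo_mem_nhds (show r0 - η < r0 by linarith) (show r0 < r0 + η by linarith))]
      rintro ⟨e, r⟩ ⟨h1, h2, h3⟩
      simp only [Set.mem_Iio] at h1 h2 h3 ⊢
      exact (mul_le_mul (hf (by linarith)) (hg h3.le) (hg0 r) (hf0 _)).trans hη1.le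
    filter_upwards [nhdsWithin_le_nhds hc, nhdsWithin_le_nhds (Iio_mem_nhds one_pos)] with e he h1 r
    have h1 : e < 1 := h1
    rcases le_total r A with h | h
    · rw [hgA r h, mul_zero]; linarith
    rcases le_total (B + 1) r with h' | h'
    · rw [hfB (r - e) (by linarith), zero_mul]; linarith
    exact he r ⟨h, h'⟩
  rw [Metric.tendsto_nhds]
  intro δ hδ
  filter_upwards [key (δ / 2) (by linarith), self_mem_nhdsWithin] with e he he0
  have he0 : 0 < e := he0
  have h1 : (⨆ r : ℝ, f (r - e) * g r) ≤ S + δ / 2 := ciSup_le he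
  have h2 : S ≤ ⨆ r : ℝ, f (r - e) * g r := by
    refine ciSup_mono ⟨S + δ / 2, ?_⟩ fun r =>
      mul_le_mul_of_nonneg_right (hf (by linarith)) (hg0 r)
    rintro _ ⟨r, rfl⟩
    exact he r
  rw [Real.dist_eq, abs_lt]
  constructor <;> linarith
end

section
/- Let f : ℝ → ℝ be a continuous monotone non-decreasing function, let μ_f be the Lebesgue–Stieltjes measure associated with f (so that μ_f((a,b]) = f(b) − f(a) for a ≤ b), and let φ : ℝ → ℝ be continuously differentiable. Then for all a ≤ b, φ(f(b)) − φ(f(a)) = ∫_{(a,b]} φ'(f(s)) dμ_f(s). -/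
open MeasureTheory

theorem stieltjes_map_aux
    (f : ℝ → ℝ) (hf : Continuous f) (hmono : Monotone f)
    (μf : Measure ℝ)
    (hμf : ∀ a b : ℝ, a ≤ b → μf (Set.Ioc a b) = ENNReal.ofReal (f b - f a))
    (a b : ℝ) (hab : a ≤ b) :
    (μf.restrict (Set.Ioc a b)).map f = volume.restrict (Set.Ioc (f a) (f b)) := by
  have hfin : IsFiniteMeasure (μf.restrict (Set.Ioc a b)) := by
    refine ⟨?_⟩
    rw [Measure.restrict_apply_univ, hμf a b hab]
    exact ENNReal.ofReal_lt_top
  have hfin2 : IsFiniteMeasure ((μf.restrict (Set.Ioc a b)).map f) :=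
    Measure.isFiniteMeasure_map _ f
  refine Measure.ext_of_Iic _ _ fun y => ?_
  rw [Measure.map_apply hf.measurable measurableSet_Iic,
    Measure.restrict_apply (hf.measurable measurableSet_Iic),
    Measure.restrict_apply measurableSet_Iic]
  rcases lt_or_ge y (f a) with h1 | h1
  · have e1 : f ⁻¹' Set.Iic y ∩ Set.Ioc a b = ∅ := by
      ext x
      simp only [Set.mem_inter_iff, Set.mem_preimage, Set.mem_Iic, Set.mem_Ioc,
        Set.mem_empty_iff_false, iff_false]
      rintro ⟨hx, hx1, -⟩
      have := hmono hx1.le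
      linarith
    have e2 : Set.Iic y ∩ Set.Ioc (f a) (f b) = ∅ := by
      ext x
      simp only [Set.mem_inter_iff, Set.mem_Iic, Set.mem_Ioc,
        Set.mem_empty_iff_false, iff_false]
      rintro ⟨hx, hx1, -⟩
      linarith
    rw [e1, e2]; simp
  rcases le_or_gt (f b) y with h2 | h2
  · have e1 : f ⁻¹' Set.Iic y ∩ Set.Ioc a b = Set.Ioc a b := by
      refine Set.inter_eq_right.2 fun x hx => ?_
      exact (hmono hx.2).trans h2
    have e2 : Set.Iic y ∩ Set.Ioc (f a) (f b) = Set.Ioc (f a) (f b) := by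
      refine Set.inter_eq_right.2 fun x hx => ?_
      exact hx.2.trans h2
    rw [e1, e2, hμf a b hab, Real.volume_Ioc]
  · have hc : IsCompact (Set.Icc a b ∩ f ⁻¹' Set.Iic y) :=
      isCompact_Icc.inter_right (isClosed_Iic.preimage hf)
    obtain ⟨c, ⟨hcI, hcy⟩, hcmax⟩ := hc.exists_isGreatest ⟨a, ⟨le_rfl, hab⟩, h1⟩
    obtain ⟨d, hd, hdy⟩ := intermediate_value_Icc hab hf.continuousOn ⟨h1, h2.le⟩
    have hdc : d ≤ c := hcmax ⟨hd, hdy.le⟩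
    have hfc : f c = y := le_antisymm hcy (hdy ▸ hmono hdc)
    have e1 : f ⁻¹' Set.Iic y ∩ Set.Ioc a b = Set.Ioc a c := by
      ext x
      constructor
      · rintro ⟨hx, hx1, hx2⟩
        exact ⟨hx1, hcmax ⟨⟨hx1.le, hx2⟩, hx⟩⟩
      · rintro ⟨hx1, hx2⟩
        exact ⟨(hmono hx2).trans hcy, hx1, hx2.trans hcI.2⟩
    have e2 : Set.Iic y ∩ Set.Ioc (f a) (f b) = Set.Ioc (f a) y := by
      ext x
      constructor
      · rintro ⟨hx, hx1, hx2⟩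
        exact ⟨hx1, hx⟩
      · rintro ⟨hx1, hx2⟩
        exact ⟨hx2, hx1, hx2.trans h2.le⟩
    rw [e1, e2, hμf a c hcI.1, Real.volume_Ioc, hfc]

/-- Chain rule for a continuous non-decreasing function `f` and its Lebesgue–Stieltjes
measure `μf`: for `φ` of class `C¹`, `φ(f(b)) - φ(f(a)) = ∫_{(a,b]} φ'(f(s)) dμf(s)`. -/
theorem stieltjes_chain_rule
    (f : ℝ → ℝ) (hf : Continuous f) (hmono : Monotone f)
    (μf : Measure ℝ)
    (hμf : ∀ a b : ℝ, a ≤ b → μf (Set.Ioc a b) = ENNReal.ofReal (f b - f a))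
    (φ : ℝ → ℝ) (hφ : ContDiff ℝ 1 φ) :
    ∀ a b : ℝ, a ≤ b →
      φ (f b) - φ (f a) = ∫ s in Set.Ioc a b, deriv φ (f s) ∂μf := by
  intro a b hab
  have hcd : Continuous (deriv φ) := hφ.continuous_deriv le_rfl
  rw [← integral_map (f := deriv φ) hf.measurable.aemeasurable
    hcd.aestronglyMeasurable, stieltjes_map_aux f hf hmono μf hμf a b hab,
    ← intervalIntegral.integral_of_le (hmono hab)]
  refine (intervalIntegral.integral_deriv_eq_sub
    (fun x _ => (hφ.differentiable one_ne_zero) x) (hcd.intervalIntegrable _ _)).symm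
end

section
/- Let μ and ν be positive Borel measures on (0,+∞), with ν σ-finite, and let ψ : (0,+∞) → [0,∞) be a density of the absolutely continuous part of ν with respect to Lebesgue measure. Let 1 < p < ∞ with p' = p/(p−1). Then there is a finite constant C ≥ 0 such that ∫_0^{+∞} (∫_{(s,+∞)} f(t) dt)^p dμ(s) ≤ C^p ∫_0^{+∞} f(x)^p dν(x) for every Borel measurable f : (0,+∞) → [0,+∞] if and only if B := sup_{s>0} μ((0,s])^{1/p} (∫_{(s,+∞)} ψ(x)^{−p'/p} dx)^{1/p'} is finite; moreover the minimal such C satisfies B ≤ C ≤ (p')^{1/p'} p^{1/p} B. -/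
open MeasureTheory ENNReal
open scoped NNReal

lemma hardy_int1 (T a : ℝ) (hT : 0 < T) (ha : 0 < a) :
    ∫⁻ t in Set.Ioc 0 T⁻¹, ENNReal.ofReal (t ^ (a - 1)) = ENNReal.ofReal (T ^ (-a) / a) := by
  have hT' : (0:ℝ) ≤ T⁻¹ := by positivity
  have hi := (intervalIntegral.intervalIntegrable_rpow' (a := 0) (b := T⁻¹) (r := a - 1) (by linarith))
  rw [intervalIntegrable_iff_integrableOn_Ioc_of_le hT'] at hi
  rw [← ofReal_integral_eq_lintegral_ofReal hi]
  · rw [← intervalIntegral.integral_of_le hT', integral_rpow (Or.inl (by linarith))]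
    congr 1
    rw [sub_add_cancel, Real.zero_rpow ha.ne', sub_zero, Real.inv_rpow hT.le, Real.rpow_neg hT.le]
  · filter_upwards [ae_restrict_mem measurableSet_Ioc] with t ht
    exact Real.rpow_nonneg ht.1.le _

lemma hardy_int2 (T a : ℝ) (hT : 0 < T) (ha : a < 1) :
    ∫⁻ t in Set.Ioi T⁻¹, ENNReal.ofReal (t ^ (a - 2)) = ENNReal.ofReal (T ^ (1 - a) / (1 - a)) := by
  have hT' : (0:ℝ) < T⁻¹ := by positivity
  rw [← ofReal_integral_eq_lintegral_ofReal (integrableOn_Ioi_rpow_of_lt (by linarith) hT')]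
  · rw [integral_Ioi_rpow_of_lt (by linarith) hT']
    congr 1
    rw [Real.inv_rpow hT.le, ← Real.rpow_neg hT.le, show -(a - 2 + 1) = 1 - a by ring,
      show a - 2 + 1 = -(1 - a) by ring, div_neg, neg_div, neg_neg]
  · filter_upwards [ae_restrict_mem measurableSet_Ioi] with t ht
    exact Real.rpow_nonneg (hT'.le.trans (le_of_lt ht)) _

lemma hardy_aux (m : Measure ℝ) [IsFiniteMeasure m] (F : ℝ → ℝ≥0∞) (hF : Measurable F)
    (h : ∀ r, m {x | F x < r} ≤ r) (a : ℝ) (ha : 0 < a) (ha1 : a < 1) :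
    ∫⁻ x, F x ^ (-a) ∂m ≤ ENNReal.ofReal (1 / (1 - a)) * m Set.univ ^ (1 - a) := by
  rcases eq_or_ne (m Set.univ) 0 with h0 | h0
  · rw [Measure.measure_univ_eq_zero] at h0
    simp [h0]
  obtain ⟨T, hT⟩ : ∃ T : ℝ, T = (m Set.univ).toReal := ⟨_, rfl⟩
  have hmT : m Set.univ = ENNReal.ofReal T := by rw [hT, ENNReal.ofReal_toReal (measure_ne_top _ _)]
  have hTpos : 0 < T := by rw [hT]; exact ENNReal.toReal_pos h0 (measure_ne_top _ _)
  have hT' : (0:ℝ) < T⁻¹ := by positivity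
  have hz : ∀ᵐ x ∂m, F x ≠ 0 := by
    rw [ae_iff]
    refine le_antisymm (ENNReal.le_of_forall_pos_le_add fun e he _ => ?_) zero_le
    rw [zero_add]
    refine (measure_mono ?_).trans (h e)
    intro x hx
    simp only [ne_eq, not_not, Set.mem_ofPred_eq] at hx ⊢
    rw [hx]; exact_mod_cast he
  have e1 : ∫⁻ x, F x ^ (-a) ∂m = ∫⁻ x, ENNReal.ofReal (((F x).toReal⁻¹) ^ a) ∂m := by
    refine lintegral_congr_ae ?_
    filter_upwards [hz] with x hx
    rcases eq_or_ne (F x) ⊤ with hx' | hx'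
    · simp [hx', ha, ha.ne', ENNReal.top_rpow_of_neg]
    · rw [← ENNReal.toReal_inv, ENNReal.rpow_neg, ← ENNReal.inv_rpow, ENNReal.toReal_rpow,
        ENNReal.ofReal_toReal]
      exact ENNReal.rpow_ne_top_of_nonneg ha.le (by simpa using hx)
  rw [e1, lintegral_rpow_eq_lintegral_meas_lt_mul m (Filter.Eventually.of_forall fun x => by positivity)
    (by fun_prop) ha, ← Set.Ioc_union_Ioi_eq_Ioi hT'.le, lintegral_union measurableSet_Ioi
      (Set.Ioc_disjoint_Ioi le_rfl)]
  have b1 : ∫⁻ t in Set.Ioc 0 T⁻¹, m {x | t < (F x).toReal⁻¹} * ENNReal.ofReal (t ^ (a - 1))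
      ≤ ENNReal.ofReal T * ENNReal.ofReal (T ^ (-a) / a) := by
    rw [← hardy_int1 T a hTpos ha, ← lintegral_const_mul' _ _ ENNReal.ofReal_ne_top]
    refine lintegral_mono fun t => ?_
    gcongr
    rw [← hmT]; exact measure_mono (Set.subset_univ _)
  have b2 : ∫⁻ t in Set.Ioi T⁻¹, m {x | t < (F x).toReal⁻¹} * ENNReal.ofReal (t ^ (a - 1))
      ≤ ENNReal.ofReal (T ^ (1 - a) / (1 - a)) := by
    rw [← hardy_int2 T a hTpos ha1]
    refine setLIntegral_mono' measurableSet_Ioi fun t ht => ?_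
    have htp : 0 < t := hT'.trans ht
    have : m {x | t < (F x).toReal⁻¹} ≤ ENNReal.ofReal t⁻¹ := by
      refine (measure_mono ?_).trans (h _)
      intro x hx
      simp only [Set.mem_ofPred_eq] at hx ⊢
      have h1 : 0 < (F x).toReal := inv_pos.1 (htp.trans hx)
      have h2 : (F x) ≠ ⊤ := fun h => by simp [h] at h1
      rw [ENNReal.lt_ofReal_iff_toReal_lt h2]
      exact (lt_inv_comm₀ htp h1).1 hx
    refine (mul_le_mul_left this _).trans ?_
    rw [← ENNReal.ofReal_mul (by positivity)]
    refine le_of_eq ?_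
    congr 1
    rw [show a - 2 = (-1) + (a - 1) by ring, Real.rpow_add htp, Real.rpow_neg_one]
  refine (mul_le_mul_right (add_le_add b1 b2) _).trans ?_
  have h1a : 0 < 1 - a := by linarith
  rw [hmT, ENNReal.ofReal_rpow_of_pos hTpos, ← ENNReal.ofReal_mul hTpos.le,
    ← ENNReal.ofReal_add (by positivity) (by positivity), ← ENNReal.ofReal_mul ha.le,
    ← ENNReal.ofReal_mul (by positivity)]
  refine le_of_eq ?_
  congr 1
  have : T ^ (1 - a) = T * T ^ (-a) := by
    rw [show 1 - a = 1 + (-a) by ring, Real.rpow_add hTpos, Real.rpow_one]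
  rw [this]
  field_simp
  ring

lemma hardy_reg (m : Measure ℝ) [IsFiniteMeasure m] (S : Set ℝ) (hS : MeasurableSet S) (r : ℝ≥0∞)
    (h : ∀ K, IsCompact K → K ⊆ S → K.Nonempty → m K ≤ r) : m S ≤ r := by
  rw [hS.measure_eq_iSup_isCompact_of_ne_top (measure_ne_top _ _)]
  refine iSup₂_le fun K hK => iSup_le fun hc => ?_
  rcases K.eq_empty_or_nonempty with h0 | h0
  · simp [h0]
  · exact h K hc hK h0

lemma hardy_pow (x : ℝ≥0∞) (p : ℝ) (hp : 0 < p - 1) : x ^ p = x * x ^ (p - 1) := by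
  have := ENNReal.rpow_add_of_nonneg (x := x) 1 (p - 1) zero_le_one hp.le
  rwa [add_sub_cancel, ENNReal.rpow_one] at this

lemma hardy_M_meas (μ : Measure ℝ) : Measurable (fun s : ℝ => μ (Set.Ioc 0 s)) :=
  Monotone.measurable (fun _ _ h => measure_mono (Set.Ioc_subset_Ioc_right h))

lemma hardy_W_meas (w : ℝ → ℝ≥0∞) : Measurable (fun s : ℝ => ∫⁻ x in Set.Ioi s, w x) :=
  Antitone.measurable (fun _ _ h => lintegral_mono_set (Set.Ioi_subset_Ioi h))

lemma hardy_M_le (μ : Measure ℝ) (t : ℝ) (ht : μ (Set.Ioc 0 t) ≠ ⊤) (r : ℝ≥0∞) :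
    (μ.restrict (Set.Ioc 0 t)) {s | μ (Set.Ioc 0 s) < r} ≤ r := by
  have : IsFiniteMeasure (μ.restrict (Set.Ioc 0 t)) := ⟨by simpa using ht.lt_top⟩
  refine hardy_reg _ _ (measurableSet_lt (hardy_M_meas μ) measurable_const) r fun K hK hKS hne => ?_
  obtain ⟨k, hk, hmax⟩ := hK.exists_isGreatest hne
  rw [Measure.restrict_apply hK.measurableSet]
  refine (measure_mono ?_).trans (le_of_lt (hKS hk))
  rintro x ⟨hx, hx'⟩
  exact ⟨hx'.1, hmax hx⟩

lemma hardy_M_int (μ : Measure ℝ) (t : ℝ) (ht : μ (Set.Ioc 0 t) ≠ ⊤) (a : ℝ)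
    (ha : 0 < a) (ha1 : a < 1) :
    ∫⁻ s in Set.Ioc 0 t, μ (Set.Ioc 0 s) ^ (-a) ∂μ ≤
      ENNReal.ofReal (1 / (1 - a)) * μ (Set.Ioc 0 t) ^ (1 - a) := by
  have : IsFiniteMeasure (μ.restrict (Set.Ioc 0 t)) := ⟨by simpa using ht.lt_top⟩
  simpa using hardy_aux (μ.restrict (Set.Ioc 0 t)) _ (hardy_M_meas μ) (hardy_M_le μ t ht) a ha ha1

lemma hardy_W_int (w : ℝ → ℝ≥0∞) (hw : Measurable w) (s : ℝ) (hs : ∫⁻ x in Set.Ioi s, w x ≠ ⊤)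
    (a : ℝ) (ha : 0 < a) (ha1 : a < 1) :
    ∫⁻ t in Set.Ioi s, w t * (∫⁻ x in Set.Ioi t, w x) ^ (-a) ≤
      ENNReal.ofReal (1 / (1 - a)) * (∫⁻ x in Set.Ioi s, w x) ^ (1 - a) := by
  obtain ⟨m, hm⟩ : ∃ m, m = (volume.restrict (Set.Ioi s)).withDensity w := ⟨_, rfl⟩
  have hmu : m Set.univ = ∫⁻ x in Set.Ioi s, w x := by rw [hm]; simp
  have : IsFiniteMeasure m := ⟨by rw [hmu]; exact hs.lt_top⟩
  have := hardy_aux m _ (hardy_W_meas w) (fun r => by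
    refine hardy_reg _ _ (measurableSet_lt (hardy_W_meas w) measurable_const) r
      fun K hK hKS hne => ?_
    obtain ⟨k, hk, hmin⟩ := hK.exists_isLeast hne
    rw [hm, withDensity_apply _ hK.measurableSet, Measure.restrict_restrict hK.measurableSet]
    refine le_trans ?_ (le_of_lt (hKS hk))
    rw [setLIntegral_congr (Ioi_ae_eq_Ici (a := k))]
    exact lintegral_mono_set (fun x hx => hmin hx.1)) a ha ha1
  rw [hmu, hm, lintegral_withDensity_eq_lintegral_mul _ hw
    ((hardy_W_meas w).pow_const _)] at this
  exact this

lemma hardy_lower (μ ν : Measure ℝ) 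
    (ψ : ℝ → ℝ≥0) (hψ : Measurable ψ)
    (σ : Measure ℝ) (hσ : σ.MutuallySingular (volume.restrict (Set.Ioi 0)))
    (hdec : ν = (volume.restrict (Set.Ioi 0)).withDensity (fun x => (ψ x : ℝ≥0∞)) + σ)
    (p p' : ℝ) (hpq : p.HolderConjugate p') (C : ℝ≥0∞) 
    (hC : ∀ f : ℝ → ℝ≥0∞, Measurable f →
        ∫⁻ s in Set.Ioi 0, (∫⁻ t in Set.Ioi s, f t) ^ p ∂μ ≤
          C ^ p * ∫⁻ x in Set.Ioi 0, f x ^ p ∂ν) (s : ℝ) (hs : 0 < s)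
    (h : ℝ → ℝ≥0∞) (hh : Measurable h) (hle : ∀ x, h x ≤ (ψ x : ℝ≥0∞) ^ (-(p' / p)))
    (hfin : ∫⁻ x in Set.Ioi s, h x ≠ ⊤) :
    μ (Set.Ioc 0 s) * (∫⁻ x in Set.Ioi s, h x) ^ (p - 1) ≤ C ^ p := by
  have hp := hpq.pos
  have hp1 : 0 < p - 1 := hpq.sub_one_pos
  rcases eq_or_ne (∫⁻ x in Set.Ioi s, h x) 0 with h0 | h0
  · simp [h0, hp1]
  obtain ⟨N, hN, hN0, hN1⟩ := hσ
  have hae : ∀ᵐ x ∂volume.restrict (Set.Ioi 0), x ∈ N := by rw [ae_iff]; exact hN1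
  have key := hC (((N ∩ Set.Ioi s)).indicator h) (hh.indicator (hN.inter measurableSet_Ioi))
  have hin : ∀ r ∈ Set.Ioc 0 s, ∫⁻ t in Set.Ioi r, (N ∩ Set.Ioi s).indicator h t
      = ∫⁻ x in Set.Ioi s, h x := by
    intro r hr
    rw [setLIntegral_indicator (hN.inter measurableSet_Ioi), Set.inter_assoc, Set.Ioi_inter_Ioi,
      sup_of_le_left hr.2, ← Measure.restrict_restrict hN, 
      Measure.restrict_eq_self_of_ae_mem]
    exact ae_restrict_of_ae_restrict_of_subset (Set.Ioi_subset_Ioi hs.le) hae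
  have hl : μ (Set.Ioc 0 s) * (∫⁻ x in Set.Ioi s, h x) ^ p ≤
      ∫⁻ r in Set.Ioi 0, (∫⁻ t in Set.Ioi r, (N ∩ Set.Ioi s).indicator h t) ^ p ∂μ := by
    calc _ = ∫⁻ r in Set.Ioc 0 s, (∫⁻ t in Set.Ioi r, (N ∩ Set.Ioi s).indicator h t) ^ p ∂μ := by
          rw [setLIntegral_congr_fun (g := fun _ => (∫⁻ x in Set.Ioi s, h x) ^ p) measurableSet_Ioc
            (fun r hr => by simp only [hin r hr])]
          rw [setLIntegral_const, mul_comm]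
      _ ≤ _ := lintegral_mono_set Set.Ioc_subset_Ioi_self
  have hr : ∫⁻ x in Set.Ioi 0, (N ∩ Set.Ioi s).indicator h x ^ p ∂ν ≤ ∫⁻ x in Set.Ioi s, h x := by
    refine (setLIntegral_le_lintegral _ _).trans ?_
    have hm : Measurable fun x => (N ∩ Set.Ioi s).indicator h x ^ p :=
      (hh.indicator (hN.inter measurableSet_Ioi)).pow_const _
    rw [hdec, lintegral_add_measure]
    have z : ∫⁻ x, (N ∩ Set.Ioi s).indicator h x ^ p ∂σ = 0 := by
      rw [lintegral_eq_zero_iff hm]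
      have : ∀ᵐ x ∂σ, x ∉ N := by rw [ae_iff]; simpa using hN0
      filter_upwards [this] with x hx
      simp [hx, hp]
    rw [z, add_zero, lintegral_withDensity_eq_lintegral_mul _ (by fun_prop) hm,
      ← lintegral_indicator (s := Set.Ioi s) measurableSet_Ioi]
    refine (setLIntegral_le_lintegral _ _).trans (lintegral_mono fun x => ?_)
    simp only [Pi.mul_apply]
    by_cases hx : x ∈ Set.Ioi s
    swap
    · simp [hx, hp]
    by_cases hx' : x ∈ N
    swap
    · simp [hx', hp]
    rw [Set.indicator_of_mem (show x ∈ N ∩ Set.Ioi s from ⟨hx', hx⟩), Set.indicator_of_mem hx]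
    rcases eq_or_ne (ψ x) 0 with hz | hz
    · simp [hz]
    rcases eq_or_ne (h x) ⊤ with hT | hT
    · simp [hT]
    have e : h x ^ p = h x * h x ^ (p - 1) := hardy_pow _ _ hp1
    calc (ψ x : ℝ≥0∞) * h x ^ p = h x * (ψ x * h x ^ (p - 1)) := by rw [e]; ring
      _ ≤ h x * (ψ x * ((ψ x : ℝ≥0∞) ^ (-(p' / p))) ^ (p - 1)) := by gcongr; exact hle x
      _ = h x * 1 := by
        congr 1
        rw [← ENNReal.rpow_mul]
        have : -(p' / p) * (p - 1) = -1 := by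
          rw [hpq.conjugate_eq]; field_simp
        rw [this, ENNReal.rpow_neg_one, ENNReal.mul_inv_cancel (by simpa using hz) (by simp)]
      _ = h x := mul_one _
  have fin := hl.trans (key.trans (mul_le_mul_right hr _))
  have e : (∫⁻ x in Set.Ioi s, h x) ^ p =
      (∫⁻ x in Set.Ioi s, h x) ^ (p - 1) * (∫⁻ x in Set.Ioi s, h x) := by
    rw [mul_comm]; exact hardy_pow _ _ hp1
  rw [e, ← mul_assoc] at fin
  exact (ENNReal.mul_le_mul_iff_left h0 hfin).1 fin

lemma hardy_lower' (μ ν : Measure ℝ) 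
    (ψ : ℝ → ℝ≥0) (hψ : Measurable ψ)
    (σ : Measure ℝ) (hσ : σ.MutuallySingular (volume.restrict (Set.Ioi 0)))
    (hdec : ν = (volume.restrict (Set.Ioi 0)).withDensity (fun x => (ψ x : ℝ≥0∞)) + σ)
    (p p' : ℝ) (hpq : p.HolderConjugate p') (C : ℝ≥0∞) 
    (hC : ∀ f : ℝ → ℝ≥0∞, Measurable f →
        ∫⁻ s in Set.Ioi 0, (∫⁻ t in Set.Ioi s, f t) ^ p ∂μ ≤
          C ^ p * ∫⁻ x in Set.Ioi 0, f x ^ p ∂ν) (s : ℝ) (hs : 0 < s) :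
    μ (Set.Ioc 0 s) ^ (1 / p) *
      (∫⁻ x in Set.Ioi s, ((ψ x : ℝ≥0∞)) ^ (-(p' / p))) ^ (1 / p') ≤ C := by
  have hp := hpq.pos
  have hp1 : 0 < p - 1 := hpq.sub_one_pos
  obtain ⟨w, hw⟩ : ∃ w : ℝ → ℝ≥0∞, w = fun x => (ψ x : ℝ≥0∞) ^ (-(p' / p)) := ⟨_, rfl⟩
  have hwm : Measurable w := by rw [hw]; fun_prop
  let h : ℕ → ℝ → ℝ≥0∞ := fun n => (Set.Iic (n : ℝ)).indicator (fun x => min (w x) n)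
  have hm : ∀ n, Measurable (h n) := fun n =>
    (hwm.min measurable_const).indicator measurableSet_Iic
  have hmono : Monotone h := by
    intro a b hab x
    simp only [h]
    refine (Set.indicator_le_indicator_of_subset (Set.Iic_subset_Iic.2 (by exact_mod_cast hab))
      (fun _ => zero_le) x).trans (Set.indicator_le_indicator ?_)
    gcongr
  have hsup : ∀ x, ⨆ n, h n x = w x := by
    intro x
    refine le_antisymm (iSup_le fun n => ?_) ?_
    · exact (Set.indicator_le_self _ _ x).trans (min_le_left _ _)
    · refine le_of_forall_lt fun c hc => ?_
      obtain ⟨n, hn⟩ := ENNReal.exists_nat_gt (ne_top_of_lt hc)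
      obtain ⟨k, hk⟩ := exists_nat_ge x
      refine lt_of_lt_of_le ?_ (le_iSup _ (max n k))
      have : x ∈ Set.Iic ((max n k : ℕ) : ℝ) := hk.trans (by exact_mod_cast le_max_right n k)
      simp only [h]
      rw [Set.indicator_of_mem this]
      refine lt_min hc (hn.trans_le ?_)
      exact_mod_cast le_max_left n k
  have hWs : ∫⁻ x in Set.Ioi s, w x = ⨆ n, ∫⁻ x in Set.Ioi s, h n x := by
    rw [← lintegral_iSup hm hmono]
    simp only [hsup]
  have hn : ∀ n, μ (Set.Ioc 0 s) * (∫⁻ x in Set.Ioi s, h n x) ^ (p - 1) ≤ C ^ p := by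
    intro n
    refine hardy_lower μ ν ψ hψ σ hσ hdec p p' hpq C hC s hs (h n) (hm n) (fun x => ?_) ?_
    · refine (Set.indicator_le_self _ _ x).trans ((min_le_left _ _).trans_eq ?_)
      rw [hw]
    · have : ∫⁻ x in Set.Ioi s, h n x ≤ n * volume (Set.Ioc s n) := by
        simp only [h]
        rw [setLIntegral_indicator measurableSet_Iic, ← setLIntegral_const, Set.inter_comm,
          Set.Ioi_inter_Iic]
        exact lintegral_mono fun x => min_le_right _ _
      refine ne_top_of_le_ne_top ?_ this
      rw [Real.volume_Ioc]
      exact ENNReal.mul_ne_top (by simp) (by simp)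
  have hW : μ (Set.Ioc 0 s) * (∫⁻ x in Set.Ioi s, w x) ^ (p - 1) ≤ C ^ p := by
    rw [hWs]
    have := (ENNReal.orderIsoRpow (p - 1) hp1).map_iSup (fun n => ∫⁻ x in Set.Ioi s, h n x)
    simp only [ENNReal.orderIsoRpow_apply] at this
    rw [this, ENNReal.mul_iSup]
    exact iSup_le hn
  rw [hw] at hW
  have := ENNReal.rpow_le_rpow hW (z := 1 / p) (by positivity)
  rw [ENNReal.mul_rpow_of_nonneg _ _ (by positivity), ← ENNReal.rpow_mul, ← ENNReal.rpow_mul] at this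
  rw [mul_one_div_cancel hp.ne', ENNReal.rpow_one] at this
  convert this using 3
  rw [hpq.conjugate_eq]; field_simp

lemma hardy_point (ψ : ℝ → ℝ≥0) (hψ : Measurable ψ)
    (p p' : ℝ) (hpq : p.HolderConjugate p') (w W : ℝ → ℝ≥0∞)
    (hw : ∀ x, w x = (ψ x : ℝ≥0∞) ^ (-(p' / p))) (hwm : Measurable w)
    (hW : ∀ s, W s = ∫⁻ x in Set.Ioi s, w x) (hWm : Measurable W) (hW0 : ∀ s, W s ≠ 0)
    (s : ℝ) (hs : W s ≠ ⊤) (f : ℝ → ℝ≥0∞) (hf : Measurable f) :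
    (∫⁻ t in Set.Ioi s, f t) ^ p ≤ ENNReal.ofReal p' ^ (p - 1) * (W s ^ (1 / p')) ^ (p - 1) *
      ∫⁻ t in Set.Ioi s, f t ^ p * ψ t * W t ^ (1 / p') := by
  have hp := hpq.pos
  have hp1 : 0 < p - 1 := hpq.sub_one_pos
  have hq := hpq.symm.pos
  have hc : p / p' = p - 1 := by rw [hpq.conjugate_eq]; field_simp
  have hi : 1 - 1 / p = 1 / p' := by rw [hpq.conjugate_eq]; field_simp
  have hfin : ∀ᵐ t ∂volume.restrict (Set.Ioi s), w t < ⊤ :=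
    ae_lt_top hwm (by rw [← hW]; exact hs)
  have hle : ∫⁻ t in Set.Ioi s, f t ≤ ∫⁻ t in Set.Ioi s,
      ((fun t => f t * (ψ t : ℝ≥0∞) ^ (1 / p) * W t ^ (1 / (p * p'))) *
        (fun t => (ψ t : ℝ≥0∞) ^ (-(1 / p)) * W t ^ (-(1 / (p * p'))))) t := by
    refine lintegral_mono_ae ?_
    filter_upwards [hfin, ae_restrict_mem measurableSet_Ioi] with t ht hts
    have hψ0 : (ψ t : ℝ≥0∞) ≠ 0 := by
      intro h0
      rw [hw, h0, ENNReal.zero_rpow_of_neg (by simp; positivity)] at ht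
      exact lt_irrefl _ ht
    have hWt : W t ≠ ⊤ := by
      refine ne_top_of_le_ne_top hs ?_
      rw [hW, hW]
      exact lintegral_mono_set (Set.Ioi_subset_Ioi (le_of_lt hts))
    have e1 : (ψ t : ℝ≥0∞) ^ (1 / p) * (ψ t : ℝ≥0∞) ^ (-(1 / p)) = 1 := by
      rw [← ENNReal.rpow_add _ _ hψ0 (by simp)]; simp
    have e2 : W t ^ (1 / (p * p')) * W t ^ (-(1 / (p * p'))) = 1 := by
      rw [← ENNReal.rpow_add _ _ (hW0 t) hWt]; simp
    refine le_of_eq ?_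
    simp only [Pi.mul_apply]
    calc f t = f t * ((ψ t : ℝ≥0∞) ^ (1 / p) * (ψ t : ℝ≥0∞) ^ (-(1 / p))) *
          (W t ^ (1 / (p * p')) * W t ^ (-(1 / (p * p')))) := by rw [e1, e2]; simp
      _ = _ := by ring
  have h1 := hle.trans (ENNReal.lintegral_mul_le_Lp_mul_Lq _ hpq (by fun_prop) (by fun_prop))
  have h2 := ENNReal.rpow_le_rpow h1 hp.le
  rw [ENNReal.mul_rpow_of_nonneg _ _ hp.le, ← ENNReal.rpow_mul, ← ENNReal.rpow_mul,
    one_div_mul_cancel hp.ne', ENNReal.rpow_one, one_div_mul_eq_div, hc] at h2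
  refine h2.trans ?_
  rw [mul_comm]
  have g1 : ∫⁻ t in Set.Ioi s, (f t * (ψ t : ℝ≥0∞) ^ (1 / p) * W t ^ (1 / (p * p'))) ^ p
      = ∫⁻ t in Set.Ioi s, f t ^ p * ψ t * W t ^ (1 / p') := by
    refine lintegral_congr fun t => ?_
    rw [ENNReal.mul_rpow_of_nonneg _ _ hp.le, ENNReal.mul_rpow_of_nonneg _ _ hp.le,
      ← ENNReal.rpow_mul, ← ENNReal.rpow_mul, one_div_mul_cancel hp.ne', ENNReal.rpow_one]
    congr 2
    field_simp
  have g2 : ∫⁻ t in Set.Ioi s, ((ψ t : ℝ≥0∞) ^ (-(1 / p)) * W t ^ (-(1 / (p * p')))) ^ p'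
      ≤ ENNReal.ofReal p' * W s ^ (1 / p') := by
    have := hardy_W_int w hwm s (by rw [← hW]; exact hs) (1 / p) (by positivity)
      (by rw [div_lt_one hp]; linarith)
    simp only [← hW] at this
    rw [hi, one_div_one_div] at this
    refine le_trans (le_of_eq (lintegral_congr fun t => ?_)) this
    rw [ENNReal.mul_rpow_of_nonneg _ _ hq.le, ← ENNReal.rpow_mul, ← ENNReal.rpow_mul, hw]
    congr 2 <;> field_simp
  rw [g1]
  gcongr
  refine (ENNReal.rpow_le_rpow g2 hp1.le).trans_eq ?_
  rw [ENNReal.mul_rpow_of_nonneg _ _ hp1.le]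

lemma hardy_upper (μ ν : Measure ℝ) (ψ : ℝ → ℝ≥0) (hψ : Measurable ψ)
    (σ : Measure ℝ)
    (hdec : ν = (volume.restrict (Set.Ioi 0)).withDensity (fun x => (ψ x : ℝ≥0∞)) + σ)
    (p p' : ℝ) (hpq : p.HolderConjugate p') (B : ℝ≥0∞) (hBt : B ≠ ⊤) (w W : ℝ → ℝ≥0∞)
    (hw : ∀ x, w x = (ψ x : ℝ≥0∞) ^ (-(p' / p)))
    (hW : ∀ s, W s = ∫⁻ x in Set.Ioi s, w x)
    (hB : ∀ s, 0 < s → μ (Set.Ioc 0 s) ^ (1 / p) * W s ^ (1 / p') ≤ B)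
    (f : ℝ → ℝ≥0∞) (hf : Measurable f) :
    ∫⁻ s in Set.Ioi 0, (∫⁻ t in Set.Ioi s, f t) ^ p ∂μ ≤
          (ENNReal.ofReal (p' ^ (1 / p') * p ^ (1 / p)) * B) ^ p *
            ∫⁻ x in Set.Ioi 0, f x ^ p ∂ν := by
  have hp := hpq.pos
  have hp1 : 0 < p - 1 := hpq.sub_one_pos
  have hq := hpq.symm.pos
  have hq1 := hpq.symm.lt
  have hc : p / p' = p - 1 := by rw [hpq.conjugate_eq]; field_simp
  have hi : 1 - 1 / p' = 1 / p := by rw [hpq.conjugate_eq]; field_simp; ring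
  have hwm : Measurable w := by
    have : w = fun x => (ψ x : ℝ≥0∞) ^ (-(p' / p)) := funext hw
    rw [this]; fun_prop
  have hWm : Measurable W := by
    rw [show W = _ from funext hW]; exact hardy_W_meas w
  have hw0 : ∀ x, w x ≠ 0 := by
    intro x h0
    rw [hw, ENNReal.rpow_eq_zero_iff] at h0
    rcases h0 with h0 | h0
    · have : 0 < p' / p := by positivity
      linarith [h0.2]
    · exact ENNReal.coe_ne_top h0.1
  have hW0 : ∀ s, W s ≠ 0 := by
    intro s h0
    rw [hW, lintegral_eq_zero_iff hwm] at h0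
    have : ∀ᵐ x ∂volume.restrict (Set.Ioi s), False := by
      filter_upwards [h0] with x hx using hw0 x hx
    rw [ae_iff] at this
    simp at this
  obtain ⟨M, hM⟩ : ∃ M : ℝ → ℝ≥0∞, M = fun s => μ (Set.Ioc 0 s) := ⟨_, rfl⟩
  have hMm : Measurable M := by rw [hM]; exact hardy_M_meas μ
  have hB' : ∀ s, 0 < s → M s ^ (1 / p) * W s ^ (1 / p') ≤ B := by rw [hM]; exact hB
  have hMt : ∀ s, 0 < s → M s ≠ ⊤ := by
    intro s hs h
    have := hB' s hs
    rw [h, ENNReal.top_rpow_of_pos (by positivity), ENNReal.top_mul, top_le_iff] at this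
    · exact hBt this
    · intro h0
      rw [ENNReal.rpow_eq_zero_iff_of_pos (by positivity)] at h0
      exact hW0 s h0
  have hun : Set.Ioi (0:ℝ) = ⋃ n : ℕ, Set.Ioc 0 ((n:ℝ) + 1) := by
    ext x
    simp only [Set.mem_Ioi, Set.mem_iUnion, Set.mem_Ioc]
    refine ⟨fun h => ?_, fun ⟨n, h⟩ => h.1⟩
    obtain ⟨n, hn⟩ := exists_nat_ge x
    exact ⟨n, h, by linarith⟩
  have hMn : ∀ n : ℕ, μ (Set.Ioc 0 ((n:ℝ) + 1)) ≠ ⊤ := by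
    intro n
    have := hMt ((n:ℝ) + 1) (by positivity)
    rwa [hM] at this
  have hM0 : ∀ᵐ s ∂μ.restrict (Set.Ioi 0), M s ≠ 0 := by
    rw [hun, ae_restrict_iUnion_iff]
    intro n
    rw [ae_iff]
    refine le_antisymm (ENNReal.le_of_forall_pos_le_add fun e he _ => ?_) zero_le
    rw [zero_add]
    refine (measure_mono ?_).trans (hardy_M_le μ _ (hMn n) e)
    intro x hx
    simp only [ne_eq, not_not, Set.mem_ofPred_eq, hM] at hx ⊢
    rw [hx]; exact_mod_cast he
  have hsf : SigmaFinite (μ.restrict (Set.Ioi 0)) := by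
    refine ⟨⟨⟨fun n => Set.Iic ((n:ℝ) + 1), fun _ => trivial, fun n => ?_, ?_⟩⟩⟩
    · rw [Measure.restrict_apply measurableSet_Iic, Set.inter_comm, Set.Ioi_inter_Iic]
      exact (hMn n).lt_top
    · refine Set.eq_univ_of_forall fun x => ?_
      obtain ⟨n, hn⟩ := exists_nat_ge x
      exact Set.mem_iUnion.2 ⟨n, by simp only [Set.mem_Iic]; linarith⟩
  obtain ⟨g, hg⟩ : ∃ g : ℝ → ℝ≥0∞, g = fun t => f t ^ p * ψ t * W t ^ (1 / p') := ⟨_, rfl⟩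
  have hgm : Measurable g := by rw [hg]; fun_prop
  obtain ⟨D, hD⟩ : ∃ D, D = ENNReal.ofReal p' ^ (p - 1) * B ^ (p - 1) := ⟨_, rfl⟩
  have hDt : D ≠ ⊤ := by
    rw [hD]
    exact ENNReal.mul_ne_top (ENNReal.rpow_ne_top_of_nonneg hp1.le ENNReal.ofReal_ne_top)
      (ENNReal.rpow_ne_top_of_nonneg hp1.le hBt)
  -- pointwise
  have step1 : ∀ᵐ s ∂μ.restrict (Set.Ioi 0), (∫⁻ t in Set.Ioi s, f t) ^ p ≤
      D * ∫⁻ t in Set.Ioi 0, (if s < t then M s ^ (-(1 / p')) * g t else 0) := by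
    filter_upwards [hM0, ae_restrict_mem measurableSet_Ioi] with s hs0 hs
    have hs' : (0:ℝ) < s := hs
    have hMs := hMt s hs
    have hMp0 : M s ^ (1 / p) ≠ 0 := by
      rw [Ne, ENNReal.rpow_eq_zero_iff_of_pos (by positivity)]; exact hs0
    have hMpt : M s ^ (1 / p) ≠ ⊤ := ENNReal.rpow_ne_top_of_nonneg (by positivity) hMs
    have hWle : W s ^ (1 / p') ≤ B * M s ^ (-(1 / p)) := by
      rw [ENNReal.rpow_neg, ← div_eq_mul_inv, ENNReal.le_div_iff_mul_le (Or.inl hMp0) (Or.inl hMpt),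
        mul_comm]
      exact hB' s hs
    have hWs : W s ≠ ⊤ := by
      intro h
      have h3 := hB' s hs
      rw [h, ENNReal.top_rpow_of_pos (by positivity), ENNReal.mul_top hMp0, top_le_iff] at h3
      exact hBt h3
    refine (hardy_point ψ hψ p p' hpq w W hw hwm hW hWm hW0 s hWs f hf).trans ?_
    have e : ∫⁻ t in Set.Ioi 0, (if s < t then M s ^ (-(1 / p')) * g t else 0) =
        M s ^ (-(1 / p')) * ∫⁻ t in Set.Ioi s, g t := by
      rw [← lintegral_const_mul _ hgm]
      have : (fun t => if s < t then M s ^ (-(1 / p')) * g t else 0) =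
        (Set.Ioi s).indicator (fun t => M s ^ (-(1 / p')) * g t) := by
        ext t; simp [Set.indicator_apply]
      rw [this, setLIntegral_indicator measurableSet_Ioi, Set.Ioi_inter_Ioi, sup_of_le_left hs'.le]
    rw [e, hg, hD, ← mul_assoc]
    refine mul_le_mul_left ?_ _
    rw [mul_assoc]
    gcongr
    refine (ENNReal.rpow_le_rpow hWle hp1.le).trans_eq ?_
    rw [ENNReal.mul_rpow_of_nonneg _ _ hp1.le, ← ENNReal.rpow_mul]
    congr 2
    rw [hpq.conjugate_eq]; field_simp
  have step2 : ∀ t, 0 < t → ∫⁻ s in Set.Ioi 0, (if s < t then M s ^ (-(1 / p')) * g t else 0) ∂μ ≤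
      ENNReal.ofReal p * B * (f t ^ p * ψ t) := by
    intro t ht
    have h1 := hardy_M_int μ t (by have := hMt t ht; rwa [hM] at this) (1 / p') (by positivity)
      (by rw [div_lt_one hq]; exact hq1)
    rw [hi, one_div_one_div] at h1
    calc _ ≤ ∫⁻ s in Set.Ioi 0, (Set.Iic t).indicator (fun s => M s ^ (-(1 / p')) * g t) s ∂μ := by
          refine lintegral_mono fun s => ?_
          by_cases h : s < t
          · simp [h, h.le]
          · simp [h]
      _ = (∫⁻ s in Set.Ioc 0 t, M s ^ (-(1 / p')) ∂μ) * g t := by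
          rw [setLIntegral_indicator measurableSet_Iic, Set.inter_comm, Set.Ioi_inter_Iic,
            lintegral_mul_const _ (by fun_prop)]
      _ ≤ (ENNReal.ofReal p * M t ^ (1 / p)) * g t := by
          gcongr
          rw [hM]; exact h1
      _ = ENNReal.ofReal p * (M t ^ (1 / p) * W t ^ (1 / p')) * (f t ^ p * ψ t) := by
          rw [hg]; ring
      _ ≤ _ := by gcongr; exact hB' t ht
  have step3 : ∫⁻ t in Set.Ioi 0, f t ^ p * ψ t ≤ ∫⁻ x in Set.Ioi 0, f x ^ p ∂ν := by
    rw [hdec, Measure.restrict_add, lintegral_add_measure]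
    refine le_trans (le_of_eq ?_) le_self_add
    rw [restrict_withDensity measurableSet_Ioi, Measure.restrict_restrict measurableSet_Ioi,
      Set.inter_self, lintegral_withDensity_eq_lintegral_mul _ (by fun_prop) (by fun_prop)]
    refine lintegral_congr fun t => ?_
    simp [mul_comm]
  have hconst : (ENNReal.ofReal (p' ^ (1 / p') * p ^ (1 / p)) * B) ^ p =
      D * (ENNReal.ofReal p * B) := by
    rw [hD, ENNReal.mul_rpow_of_nonneg _ _ hp.le, ENNReal.ofReal_rpow_of_nonneg (by positivity) hp.le,
      Real.mul_rpow (by positivity) (by positivity), ← Real.rpow_mul hq.le, ← Real.rpow_mul hp.le,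
      one_div_mul_cancel hp.ne', Real.rpow_one, one_div_mul_eq_div, hc,
      ENNReal.ofReal_mul (by positivity), ENNReal.ofReal_rpow_of_nonneg hq.le hp1.le]
    have e : B ^ p = B ^ (p - 1) * B := by
      rw [mul_comm]; exact hardy_pow _ _ hp1
    rw [e]; ring
  calc _ ≤ ∫⁻ s in Set.Ioi 0,
        (D * ∫⁻ t in Set.Ioi 0, (if s < t then M s ^ (-(1 / p')) * g t else 0)) ∂μ :=
        lintegral_mono_ae step1
    _ = D * ∫⁻ s in Set.Ioi 0, (∫⁻ t in Set.Ioi 0,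
        (if s < t then M s ^ (-(1 / p')) * g t else 0)) ∂μ := lintegral_const_mul' _ _ hDt
    _ = D * ∫⁻ t in Set.Ioi 0, ∫⁻ s in Set.Ioi 0,
        (if s < t then M s ^ (-(1 / p')) * g t else 0) ∂μ := by
        rw [lintegral_lintegral_swap]
        refine Measurable.aemeasurable ?_
        refine Measurable.ite (measurableSet_lt measurable_fst measurable_snd) ?_ measurable_const
        fun_prop
    _ ≤ D * ∫⁻ t in Set.Ioi 0, ENNReal.ofReal p * B * (f t ^ p * ψ t) := by
        refine mul_le_mul_right ?_ _
        exact setLIntegral_mono' measurableSet_Ioi fun t ht => step2 t ht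
    _ = D * (ENNReal.ofReal p * B) * ∫⁻ t in Set.Ioi 0, f t ^ p * ψ t := by
        rw [lintegral_const_mul _ (by fun_prop), ← mul_assoc]
    _ ≤ _ := by
        rw [hconst]
        gcongr


/-- The conjugate (dual) Hardy inequality on `(0,+∞)`: there is a finite constant `C` such
that `∫ (∫_{(s,∞)} f dt)^p dμ(s) ≤ C^p ∫ f^p dν` for all nonnegative Borel `f` iff
`B := sup_{s>0} μ((0,s])^{1/p} (∫_{(s,∞)} ψ^{-p'/p} dx)^{1/p'}` is finite; moreover every
admissible `C` satisfies `B ≤ C`, and `(p')^{1/p'} p^{1/p} B` is admissible. -/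
theorem conjugate_hardy_inequality
    (μ ν : Measure ℝ) [SigmaFinite ν]
    (hμ0 : μ (Set.Iic 0) = 0) (hν0 : ν (Set.Iic 0) = 0)
    (ψ : ℝ → ℝ≥0) (hψ : Measurable ψ)
    (σ : Measure ℝ) (hσ : σ.MutuallySingular (volume.restrict (Set.Ioi 0)))
    (hdec : ν = (volume.restrict (Set.Ioi 0)).withDensity (fun x => (ψ x : ℝ≥0∞)) + σ)
    (p p' : ℝ) (hp : 1 < p) (hp' : p' = p / (p - 1))
    (B : ℝ≥0∞)
    (hB : B = ⨆ s ∈ Set.Ioi (0 : ℝ), μ (Set.Ioc 0 s) ^ (1 / p) *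
      (∫⁻ x in Set.Ioi s, ((ψ x : ℝ≥0∞)) ^ (-(p' / p))) ^ (1 / p')) :
    ((∃ C : ℝ≥0∞, C ≠ ⊤ ∧ ∀ f : ℝ → ℝ≥0∞, Measurable f →
        ∫⁻ s in Set.Ioi 0, (∫⁻ t in Set.Ioi s, f t) ^ p ∂μ ≤
          C ^ p * ∫⁻ x in Set.Ioi 0, f x ^ p ∂ν) ↔ B ≠ ⊤) ∧
    (∀ C : ℝ≥0∞, (∀ f : ℝ → ℝ≥0∞, Measurable f →
        ∫⁻ s in Set.Ioi 0, (∫⁻ t in Set.Ioi s, f t) ^ p ∂μ ≤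
          C ^ p * ∫⁻ x in Set.Ioi 0, f x ^ p ∂ν) → B ≤ C) ∧
    (B ≠ ⊤ → ∀ f : ℝ → ℝ≥0∞, Measurable f →
        ∫⁻ s in Set.Ioi 0, (∫⁻ t in Set.Ioi s, f t) ^ p ∂μ ≤
          (ENNReal.ofReal (p' ^ (1 / p') * p ^ (1 / p)) * B) ^ p *
            ∫⁻ x in Set.Ioi 0, f x ^ p ∂ν) := by
  have hpq : p.HolderConjugate p' := (Real.holderConjugate_iff_eq_conjExponent hp).2 hp'
  have P2 : ∀ C : ℝ≥0∞, (∀ f : ℝ → ℝ≥0∞, Measurable f →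
        ∫⁻ s in Set.Ioi 0, (∫⁻ t in Set.Ioi s, f t) ^ p ∂μ ≤
          C ^ p * ∫⁻ x in Set.Ioi 0, f x ^ p ∂ν) → B ≤ C := by
    intro C hC
    rw [hB]
    exact iSup₂_le fun s hs => hardy_lower' μ ν ψ hψ σ hσ hdec p p' hpq C hC s hs
  have P3 : B ≠ ⊤ → ∀ f : ℝ → ℝ≥0∞, Measurable f →
        ∫⁻ s in Set.Ioi 0, (∫⁻ t in Set.Ioi s, f t) ^ p ∂μ ≤
          (ENNReal.ofReal (p' ^ (1 / p') * p ^ (1 / p)) * B) ^ p *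
            ∫⁻ x in Set.Ioi 0, f x ^ p ∂ν := by
    intro hBt f hf
    refine hardy_upper μ ν ψ hψ σ hdec p p' hpq B hBt _ _ (fun _ => rfl) (fun _ => rfl)
      (fun s hs => ?_) f hf
    rw [hB]
    exact le_iSup₂ (f := fun s (_ : s ∈ Set.Ioi (0:ℝ)) => μ (Set.Ioc 0 s) ^ (1 / p) *
      (∫⁻ x in Set.Ioi s, ((ψ x : ℝ≥0∞)) ^ (-(p' / p))) ^ (1 / p')) s hs
  refine ⟨⟨?_, fun hBt => ⟨_, ENNReal.mul_ne_top ENNReal.ofReal_ne_top hBt, P3 hBt⟩⟩, P2, P3⟩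
  rintro ⟨C, hCt, hC⟩
  exact ne_top_of_le_ne_top hCt (P2 C hC)
end

section
/- Let μ and ν be positive Borel measures on (0,+∞), with ν σ-finite, and let ψ : (0,+∞) → [0,∞) be a density of the absolutely continuous part of ν with respect to Lebesgue measure. Let 1 < p < ∞ with p' = p/(p−1). Then there is a finite constant C ≥ 0 such that ∫_0^{+∞} (∫_{(0,s)} f(t) dt)^p dμ(s) ≤ C^p ∫_0^{+∞} f(x)^p dν(x) for every Borel measurable f : (0,+∞) → [0,+∞] if and only if B := sup_{r>0} μ([r,+∞))^{1/p} (∫_{(0,r)} ψ(x)^{−p'/p} dx)^{1/p'} is finite; moreover the minimal such C satisfies B ≤ C ≤ (p')^{1/p'} p^{1/p} B. -/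
open MeasureTheory ENNReal
open scoped NNReal

theorem meas_Ici_lt (ρ : Measure ℝ) (u : ℝ≥0∞) : ρ {x | ρ (Set.Ici x) < u} ≤ u := by
  set S := {x | ρ (Set.Ici x) < u} with hS
  have hup : ∀ x ∈ S, ∀ y, x ≤ y → y ∈ S := fun x hx y hxy =>
    lt_of_le_of_lt (measure_mono (Set.Ici_subset_Ici.2 hxy)) hx
  by_cases hmin : ∃ a ∈ S, ∀ x ∈ S, a ≤ x
  · obtain ⟨a, ha, hle⟩ := hmin
    exact (measure_mono (fun x hx => hle x hx)).trans (le_of_lt ha)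
  · push Not at hmin
    have hsub : S ⊆ ⋃ q ∈ {q : ℚ | (q : ℝ) ∈ S}, Set.Ici (q : ℝ) := by
      intro x hx
      obtain ⟨y, hy, hyx⟩ := hmin x hx
      obtain ⟨q, h1, h2⟩ := exists_rat_btwn hyx
      simp only [Set.mem_iUnion]
      exact ⟨q, hup y hy q h1.le, h2.le⟩
    refine (measure_mono hsub).trans ?_
    rw [measure_biUnion_eq_iSup (Set.to_countable _)]
    · exact iSup₂_le fun q hq => le_of_lt hq
    · intro a ha b hb
      rcases le_total a b with h | h
      · exact ⟨a, ha, le_rfl, Set.Ici_subset_Ici.2 (by exact_mod_cast h)⟩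
      · exact ⟨b, hb, Set.Ici_subset_Ici.2 (by exact_mod_cast h), le_rfl⟩

theorem meas_Iic_lt (ρ : Measure ℝ) (u : ℝ≥0∞) : ρ {x | ρ (Set.Iic x) < u} ≤ u := by
  set S := {x | ρ (Set.Iic x) < u} with hS
  have hup : ∀ x ∈ S, ∀ y, y ≤ x → y ∈ S := fun x hx y hxy =>
    lt_of_le_of_lt (measure_mono (Set.Iic_subset_Iic.2 hxy)) hx
  by_cases hmin : ∃ a ∈ S, ∀ x ∈ S, x ≤ a
  · obtain ⟨a, ha, hle⟩ := hmin
    exact (measure_mono (fun x hx => hle x hx)).trans (le_of_lt ha)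
  · push Not at hmin
    have hsub : S ⊆ ⋃ q ∈ {q : ℚ | (q : ℝ) ∈ S}, Set.Iic (q : ℝ) := by
      intro x hx
      obtain ⟨y, hy, hyx⟩ := hmin x hx
      obtain ⟨q, h1, h2⟩ := exists_rat_btwn hyx
      simp only [Set.mem_iUnion]
      exact ⟨q, hup y hy q h2.le, h1.le⟩
    refine (measure_mono hsub).trans ?_
    rw [measure_biUnion_eq_iSup (Set.to_countable _)]
    · exact iSup₂_le fun q hq => le_of_lt hq
    · intro a ha b hb
      rcases le_total a b with h | h
      · exact ⟨b, hb, Set.Iic_subset_Iic.2 (by exact_mod_cast h), le_rfl⟩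
      · exact ⟨a, ha, le_rfl, Set.Iic_subset_Iic.2 (by exact_mod_cast h)⟩

theorem lint_neg_pow {α : Type*} [MeasurableSpace α] (ρ : Measure α) (F : α → ℝ≥0∞)
    (hF : Measurable F) (T : ℝ≥0∞) (hu : ∀ u, ρ {x | F x < u} ≤ u) (hT : ρ Set.univ ≤ T)
    (a : ℝ) (ha0 : 0 < a) (ha1 : a < 1) :
    ∫⁻ x, F x ^ (-a) ∂ρ ≤ ENNReal.ofReal (1 / (1 - a)) * T ^ (1 - a) := by
  have h1a : 0 < 1 - a := by linarith
  by_cases hT0 : T = 0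
  · have : ρ = 0 := by
      rw [← Measure.measure_univ_eq_zero]; exact le_antisymm (hT0 ▸ hT) zero_le
    simp [this]
  by_cases hTt : T = ⊤
  · rw [hTt, ENNReal.top_rpow_of_pos h1a, ENNReal.mul_top]
    · exact le_top
    · simpa using ha1
  obtain ⟨τ, hτ, rfl⟩ : ∃ τ : ℝ, 0 < τ ∧ T = ENNReal.ofReal τ :=
    ⟨T.toReal, ENNReal.toReal_pos hT0 hTt, (ENNReal.ofReal_toReal hTt).symm⟩
  have hF0 : ∀ᵐ x ∂ρ, F x ≠ 0 := by
    rw [ae_iff]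
    refine le_antisymm (le_of_forall_gt fun u hu0 => ?_) zero_le
    obtain ⟨v, hv0, hvu⟩ := exists_between hu0
    refine lt_of_le_of_lt ((measure_mono ?_).trans (hu v)) hvu
    intro x hx
    simp only [Set.mem_ofPred_eq, not_not] at hx ⊢
    rwa [hx]
  have e1 : ∫⁻ x, F x ^ (-a) ∂ρ = ∫⁻ x, ENNReal.ofReal ((F x ^ (-a)).toReal) ∂ρ := by
    refine lintegral_congr_ae ?_
    filter_upwards [hF0] with x hx
    rw [ENNReal.ofReal_toReal]
    rw [ENNReal.rpow_neg]
    simp [ENNReal.rpow_eq_zero_iff, hx, ha0.le, ha0.not_gt]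
  rw [e1, lintegral_eq_lintegral_meas_lt ρ (Filter.Eventually.of_forall fun x => toReal_nonneg)
    (hF.pow_const _).ennreal_toReal.aemeasurable]
  have key : ∀ l : ℝ, 0 < l → ρ {x | l < (F x ^ (-a)).toReal} ≤ ENNReal.ofReal (l ^ (-1 / a)) := by
    intro l hl
    refine (measure_mono ?_).trans (hu _)
    intro x hx
    simp only [Set.mem_ofPred_eq] at hx ⊢
    have h2 : ENNReal.ofReal l < F x ^ (-a) := by
      by_contra hcon
      push Not at hcon
      have := ENNReal.toReal_mono ENNReal.ofReal_ne_top hcon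
      rw [ENNReal.toReal_ofReal hl.le] at this
      linarith
    rw [ENNReal.rpow_neg, ENNReal.lt_inv_iff_lt_inv, ← ENNReal.lt_rpow_inv_iff ha0] at h2
    convert h2 using 1
    rw [← ENNReal.ofReal_rpow_of_pos hl, ← ENNReal.rpow_neg_one, ← ENNReal.rpow_mul]
    congr 1
  set c := τ ^ (-a) with hc
  have hcpos : 0 < c := Real.rpow_pos_of_pos hτ _
  rw [← Set.Ioc_union_Ioi_eq_Ioi hcpos.le]
  refine (lintegral_union_le _ _ _).trans ?_
  have b1 : ∫⁻ l in Set.Ioc 0 c, ρ {x | l < (F x ^ (-a)).toReal} ≤ ENNReal.ofReal (τ * c) := by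
    calc _ ≤ ∫⁻ l in Set.Ioc 0 c, ENNReal.ofReal τ :=
          lintegral_mono fun l => (measure_mono (Set.subset_univ _)).trans hT
      _ = _ := by simp [ENNReal.ofReal_mul hτ.le]
  have hlt : -1 / a < -1 := by
    rw [div_lt_iff₀ ha0]; linarith
  have b2 : ∫⁻ l in Set.Ioi c, ρ {x | l < (F x ^ (-a)).toReal} ≤
      ENNReal.ofReal (-c ^ (-1 / a + 1) / (-1 / a + 1)) := by
    calc _ ≤ ∫⁻ l in Set.Ioi c, ENNReal.ofReal (l ^ (-1 / a)) := by
          refine setLIntegral_mono' measurableSet_Ioi fun l hl => key l (hcpos.trans hl)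
      _ = _ := by
          rw [← integral_Ioi_rpow_of_lt hlt hcpos, ofReal_integral_eq_lintegral_ofReal]
          · exact integrableOn_Ioi_rpow_of_lt hlt hcpos
          · refine (ae_restrict_iff' measurableSet_Ioi).2 (Filter.Eventually.of_forall fun l hl => ?_)
            exact Real.rpow_nonneg (hcpos.trans hl).le _
  refine (add_le_add b1 b2).trans ?_
  have e3 : c ^ (-1 / a + 1) = τ ^ (1 - a) := by
    rw [hc, ← Real.rpow_mul hτ.le]; congr 1; field_simp; ring
  have e4 : τ * c = τ ^ (1 - a) := by
    rw [hc, sub_eq_add_neg, Real.rpow_add hτ, Real.rpow_one]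
  rw [e3, e4, ENNReal.ofReal_rpow_of_pos hτ, ← ENNReal.ofReal_mul (by positivity),
    ← ENNReal.ofReal_add (by positivity)]
  · apply le_of_eq
    congr 1
    have : -1 / a + 1 ≠ 0 := by linarith
    have h5 : -1 + a ≠ 0 := by linarith
    have : -1 / a + 1 = (-1 + a) / a := by field_simp
    rw [this]
    field_simp
    ring
  · apply div_nonneg_of_nonpos
    · have := Real.rpow_pos_of_pos hτ (1 - a); linarith
    · linarith

theorem ae_pos_of_lt {α : Type*} [MeasurableSpace α] (ρ : Measure α) (F : α → ℝ≥0∞)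
    (hu : ∀ u, ρ {x | F x < u} ≤ u) : ∀ᵐ x ∂ρ, F x ≠ 0 := by
  rw [ae_iff]
  refine le_antisymm (le_of_forall_gt fun u hu0 => ?_) zero_le
  obtain ⟨v, hv0, hvu⟩ := exists_between hu0
  refine lt_of_le_of_lt ((measure_mono ?_).trans (hu v)) hvu
  intro x hx
  simp only [Set.mem_ofPred_eq, not_not] at hx ⊢
  rwa [hx]

theorem hardy_w_bound (h : ℝ → ℝ≥0∞) (hm : Measurable h) (s : ℝ) (p p' : ℝ)
    (hpq : p.HolderConjugate p') :
    ∫⁻ t in Set.Ioo 0 s, h t * (∫⁻ x in Set.Ioo 0 t, h x) ^ (-(1 / p)) ≤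
      ENNReal.ofReal p' * (∫⁻ x in Set.Ioo 0 s, h x) ^ (1 / p') := by
  set w : ℝ → ℝ≥0∞ := fun r => ∫⁻ x in Set.Ioo 0 r, h x with hw
  have hwm : Measurable w := by
    apply Monotone.measurable
    intro a b hab
    exact lintegral_mono_set (Set.Ioo_subset_Ioo_right hab)
  set ρ := (volume.restrict (Set.Ioo 0 s)).withDensity h with hρ
  have h1 : ∫⁻ t in Set.Ioo 0 s, h t * (w t) ^ (-(1 / p)) = ∫⁻ t, w t ^ (-(1 / p)) ∂ρ := by
    rw [hρ, lintegral_withDensity_eq_lintegral_mul _ hm (hwm.pow_const _)]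
    rfl
  have hp1 := hpq.lt
  have hp0 := hpq.pos
  have hconj : 1 - 1 / p = 1 / p' := by
    have := hpq.inv_add_inv_eq_one
    simp only [one_div]; linarith
  have h2 := lint_neg_pow ρ w hwm (w s) (fun u => ?_) ?_ (1 / p) (by positivity)
    (by rw [div_lt_one hp0]; exact hp1)
  · rw [h1]
    refine h2.trans (le_of_eq ?_)
    rw [hconj]
    simp [hw]
  · refine (measure_mono ?_).trans (meas_Iic_lt ρ u)
    intro x hx
    have hx' : w x < u := hx
    refine lt_of_le_of_lt ?_ hx'
    rw [hρ, withDensity_apply _ measurableSet_Iic, Measure.restrict_restrict measurableSet_Iic]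
    have : w x = ∫⁻ x in Set.Ioc 0 x, h x := by
      simp only [hw]
      exact setLIntegral_congr Ioo_ae_eq_Ioc
    rw [this]
    refine lintegral_mono_set ?_
    rintro y ⟨hy1, hy2⟩
    exact ⟨hy2.1, hy1⟩
  · rw [hρ, withDensity_apply _ MeasurableSet.univ]
    simp [hw]

theorem hardy_suff (μ : Measure ℝ) (hμ0 : μ (Set.Iic 0) = 0)
    (ψ : ℝ → ℝ≥0) (hψ : Measurable ψ) (p p' : ℝ) (hpq : p.HolderConjugate p')
    (B : ℝ≥0∞) (hBt : B ≠ ⊤)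
    (hB : ∀ r : ℝ, 0 < r → μ (Set.Ici r) ^ (1 / p) *
      (∫⁻ x in Set.Ioo 0 r, ((ψ x : ℝ≥0∞)) ^ (-(p' / p))) ^ (1 / p') ≤ B)
    (f : ℝ → ℝ≥0∞) (hf : Measurable f) :
    ∫⁻ s in Set.Ioi 0, (∫⁻ t in Set.Ioo 0 s, f t) ^ p ∂μ ≤
      ENNReal.ofReal p' ^ (p - 1) * ENNReal.ofReal p * B ^ p *
        ∫⁻ x in Set.Ioi 0, ψ x * f x ^ p := by
  set h : ℝ → ℝ≥0∞ := fun x => (ψ x : ℝ≥0∞) ^ (-(p' / p)) with hh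
  have hm : Measurable h := (hψ.coe_nnreal_ennreal).pow_const _
  set w : ℝ → ℝ≥0∞ := fun r => ∫⁻ x in Set.Ioo 0 r, h x with hw
  have hwmono : Monotone w := fun a b hab => lintegral_mono_set (Set.Ioo_subset_Ioo_right hab)
  have hwm : Measurable w := hwmono.measurable
  set M : ℝ → ℝ≥0∞ := fun s => μ (Set.Ici s) with hM
  have hMm : Measurable M := by
    apply Antitone.measurable
    intro a b hab
    exact measure_mono (Set.Ici_subset_Ici.2 hab)
  have hp0 := hpq.pos
  have hp'0 := hpq.symm.pos
  have hp1 := hpq.lt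
  have hp'1 := hpq.symm.lt
  have hconj : 1 / p + 1 / p' = 1 := by
    simpa using hpq.inv_add_inv_eq_one
  have hpp : p / p' = p - 1 := by field_simp at hconj ⊢; linarith
  have wpos : ∀ r, 0 < r → w r ≠ 0 := by
    intro r hr h0
    rw [hw] at h0
    simp only at h0
    rw [lintegral_eq_zero_iff hm] at h0
    have : (volume.restrict (Set.Ioo 0 r)) Set.univ = 0 := by
      refine le_antisymm ((measure_mono ?_).trans (le_of_eq (ae_iff.1 h0))) zero_le
      intro x _
      simp only [Set.mem_ofPred_eq, Pi.zero_apply, hh]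
      rw [ENNReal.rpow_neg]
      simp [ENNReal.rpow_eq_top_iff, (div_pos hp'0 hp0).not_gt]
    simp at this
    linarith
  have Mfin : ∀ r, 0 < r → M r ≠ ⊤ := by
    intro r hr hc
    have h1 := hB r hr
    change M r ^ (1 / p) * w r ^ (1 / p') ≤ B at h1
    rw [hc, ENNReal.top_rpow_of_pos (by positivity), ENNReal.top_mul] at h1
    · exact hBt (top_le_iff.1 h1)
    · have := wpos r hr
      simp [ENNReal.rpow_eq_zero_iff, this, hp'0.not_gt, hp'0.le]
  haveI : SigmaFinite μ := by
    refine ⟨⟨⟨fun n => Set.Iic 0 ∪ Set.Ici (1 / ((n : ℝ) + 1)), fun _ => trivial, fun n => ?_, ?_⟩⟩⟩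
    · refine lt_of_le_of_lt (measure_union_le _ _) ?_
      rw [hμ0, zero_add]
      exact lt_top_iff_ne_top.2 (Mfin _ (by positivity))
    · rw [Set.eq_univ_iff_forall]
      intro x
      rw [Set.mem_iUnion]
      rcases le_or_gt x 0 with hx | hx
      · exact ⟨0, Or.inl hx⟩
      · obtain ⟨n, hn⟩ := exists_nat_one_div_lt hx
        exact ⟨n, Or.inr hn.le⟩
  set G : ℝ → ℝ≥0∞ := fun t => ψ t * f t ^ p * w t ^ (1 / p') with hG
  have hGm : Measurable G :=
    (hψ.coe_nnreal_ennreal.mul (hf.pow_const _)).mul (hwm.pow_const _)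
  set c : ℝ≥0∞ := ENNReal.ofReal p' ^ (p - 1) * B ^ (p - 1) with hc
  have hMae : ∀ᵐ s ∂μ, M s ≠ 0 := ae_pos_of_lt μ M (meas_Ici_lt μ)
  have step1 : ∀ᵐ s ∂(μ.restrict (Set.Ioi 0)), (∫⁻ t in Set.Ioo 0 s, f t) ^ p ≤
      c * (M s ^ (-(1 / p')) * ∫⁻ t in Set.Ioo 0 s, G t) := by
    filter_upwards [ae_restrict_of_ae hMae, ae_restrict_mem measurableSet_Ioi] with s hMs hs
    have hs0 : 0 < s := hs
    have hMst := Mfin s hs0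
    have hBs : M s ^ (1 / p) * w s ^ (1 / p') ≤ B := hB s hs0
    have hM1 : M s ^ (1 / p) ≠ 0 := by
      simp [ENNReal.rpow_eq_zero_iff, hMs, hp0.not_gt, hp0.le]
    have hM2 : M s ^ (1 / p) ≠ ⊤ := ENNReal.rpow_ne_top_of_nonneg (by positivity) hMst
    have hws : w s ^ (1 / p') ≤ B * M s ^ (-(1 / p)) := by
      rw [ENNReal.rpow_neg, ← div_eq_mul_inv, ENNReal.le_div_iff_mul_le (Or.inl hM1) (Or.inl hM2),
        mul_comm]
      exact hBs
    have hwt : w s ≠ ⊤ := by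
      intro hcon
      rw [hcon, ENNReal.top_rpow_of_pos (by positivity), ENNReal.mul_top hM1] at hBs
      exact hBt (top_le_iff.1 hBs)
    set a : ℝ → ℝ≥0∞ := fun t => f t * (ψ t : ℝ≥0∞) ^ (1 / p) * w t ^ (1 / (p * p')) with ha
    set b : ℝ → ℝ≥0∞ := fun t => w t ^ (-(1 / (p * p'))) * (ψ t : ℝ≥0∞) ^ (-(1 / p)) with hb
    have ham : Measurable a :=
      (hf.mul (hψ.coe_nnreal_ennreal.pow_const _)).mul (hwm.pow_const _)
    have hbm : Measurable b := (hwm.pow_const _).mul (hψ.coe_nnreal_ennreal.pow_const _)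
    have e1 : ∫⁻ t in Set.Ioo 0 s, f t = ∫⁻ t in Set.Ioo 0 s, (a * b) t := by
      refine lintegral_congr_ae ?_
      filter_upwards [ae_lt_top hm hwt, ae_restrict_mem measurableSet_Ioo] with t ht hts
      have hw0 : w t ≠ 0 := wpos t hts.1
      have hw1 : w t ≠ ⊤ := ne_top_of_le_ne_top hwt (hwmono hts.2.le)
      have hψ0 : (ψ t : ℝ≥0∞) ≠ 0 := by
        intro h0
        simp only [hh, h0] at ht
        rw [ENNReal.zero_rpow_of_neg (by have := div_pos hp'0 hp0; linarith)] at ht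
        exact lt_irrefl _ ht
      have k1 : (ψ t : ℝ≥0∞) ^ (1 / p) * (ψ t : ℝ≥0∞) ^ (-(1 / p)) = 1 := by
        rw [← ENNReal.rpow_add _ _ hψ0 ENNReal.coe_ne_top]; simp
      have k2 : w t ^ (1 / (p * p')) * w t ^ (-(1 / (p * p'))) = 1 := by
        rw [← ENNReal.rpow_add _ _ hw0 hw1]; simp
      calc f t = f t * ((ψ t : ℝ≥0∞) ^ (1 / p) * (ψ t : ℝ≥0∞) ^ (-(1 / p))) *
            (w t ^ (1 / (p * p')) * w t ^ (-(1 / (p * p')))) := by rw [k1, k2]; simp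
        _ = (a * b) t := by simp only [ha, hb, Pi.mul_apply]; ring
    have e2 : ∀ t, a t ^ p = G t := by
      intro t
      simp only [ha, hG]
      rw [ENNReal.mul_rpow_of_nonneg _ _ hp0.le, ENNReal.mul_rpow_of_nonneg _ _ hp0.le,
        ← ENNReal.rpow_mul, ← ENNReal.rpow_mul]
      have q1 : 1 / p * p = 1 := by field_simp
      have q2 : 1 / (p * p') * p = 1 / p' := by field_simp
      rw [q1, q2, ENNReal.rpow_one, mul_comm (f t ^ p)]
    have e3 : ∀ t, b t ^ p' = h t * w t ^ (-(1 / p)) := by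
      intro t
      simp only [hb, hh]
      rw [ENNReal.mul_rpow_of_nonneg _ _ hp'0.le, ← ENNReal.rpow_mul, ← ENNReal.rpow_mul]
      have q1 : -(1 / p) * p' = -(p' / p) := by field_simp
      have q2 : -(1 / (p * p')) * p' = -(1 / p) := by field_simp
      rw [q1, q2, mul_comm]
    have hol := ENNReal.lintegral_mul_le_Lp_mul_Lq (volume.restrict (Set.Ioo 0 s)) hpq
      ham.aemeasurable hbm.aemeasurable
    simp only [e2, e3] at hol
    rw [← e1] at hol
    have hD := hardy_w_bound h hm s p p' hpq
    change ∫⁻ t in Set.Ioo 0 s, h t * w t ^ (-(1 / p)) ≤ ENNReal.ofReal p' * w s ^ (1 / p') at hD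
    have q1 : 1 / p * p = 1 := by field_simp
    have q2 : 1 / p' * p = p - 1 := by rw [← hpp]; ring
    have q3 : -(1 / p) * (p - 1) = -(1 / p') := by rw [← hpp]; field_simp
    have hp10 : 0 ≤ p - 1 := by linarith
    calc (∫⁻ t in Set.Ioo 0 s, f t) ^ p
        ≤ ((∫⁻ t in Set.Ioo 0 s, G t) ^ (1 / p) *
          (∫⁻ t in Set.Ioo 0 s, h t * w t ^ (-(1 / p))) ^ (1 / p')) ^ p :=
          ENNReal.rpow_le_rpow hol hp0.le
      _ = (∫⁻ t in Set.Ioo 0 s, G t) *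
          (∫⁻ t in Set.Ioo 0 s, h t * w t ^ (-(1 / p))) ^ (p - 1) := by
          rw [ENNReal.mul_rpow_of_nonneg _ _ hp0.le, ← ENNReal.rpow_mul, ← ENNReal.rpow_mul, q1, q2,
            ENNReal.rpow_one]
      _ ≤ (∫⁻ t in Set.Ioo 0 s, G t) *
          (ENNReal.ofReal p' * (B * M s ^ (-(1 / p)))) ^ (p - 1) := by
          gcongr
          exact hD.trans (by gcongr)
      _ = c * (M s ^ (-(1 / p')) * ∫⁻ t in Set.Ioo 0 s, G t) := by
          rw [ENNReal.mul_rpow_of_nonneg _ _ hp10, ENNReal.mul_rpow_of_nonneg _ _ hp10,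
            ← ENNReal.rpow_mul, q3, hc]
          ring
  set K : ℝ → ℝ → ℝ≥0∞ := fun s t =>
    Set.indicator {z : ℝ × ℝ | z.2 < z.1} (fun z => M z.1 ^ (-(1 / p')) * G z.2) (s, t) with hK
  have hKm : Measurable (Function.uncurry K) := by
    have : Function.uncurry K = Set.indicator {z : ℝ × ℝ | z.2 < z.1}
      (fun z => M z.1 ^ (-(1 / p')) * G z.2) := by
      ext ⟨s, t⟩; rfl
    rw [this]
    exact (((hMm.comp measurable_fst).pow_const _).mul (hGm.comp measurable_snd)).indicator
      (measurableSet_lt measurable_snd measurable_fst)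
  have step2 : ∀ s, M s ^ (-(1 / p')) * ∫⁻ t in Set.Ioo 0 s, G t = ∫⁻ t in Set.Ioi 0, K s t := by
    intro s
    rw [← lintegral_const_mul _ hGm]
    have : ∀ t, K s t = (Set.Iio s).indicator (fun t => M s ^ (-(1 / p')) * G t) t := by
      intro t
      simp [hK, Set.indicator]
    simp only [this]
    rw [lintegral_indicator measurableSet_Iio, Measure.restrict_restrict measurableSet_Iio,
      Set.inter_comm, Set.Ioi_inter_Iio]
  have step3 : ∀ t, 0 < t → ∫⁻ s in Set.Ioi 0, K s t ∂μ ≤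
      ENNReal.ofReal p * B * (ψ t * f t ^ p) := by
    intro t ht
    have : ∀ s, K s t = (Set.Ioi t).indicator (fun s => M s ^ (-(1 / p')) * G t) s := by
      intro s
      simp [hK, Set.indicator]
    simp only [this]
    rw [lintegral_indicator measurableSet_Ioi, Measure.restrict_restrict measurableSet_Ioi,
      lintegral_mul_const _ (hMm.pow_const _)]
    have hl := lint_neg_pow (μ.restrict (Set.Ioi t ∩ Set.Ioi 0)) M hMm (M t) (fun u =>
      (Measure.restrict_le_self _).trans (meas_Ici_lt μ u)) (by
        rw [Measure.restrict_apply_univ]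
        exact measure_mono (fun x hx => Set.mem_Ici.2 (le_of_lt (Set.mem_Ioi.1 hx.1)))) (1 / p') (by positivity)
        (by rw [div_lt_one hp'0]; exact hp'1)
    have q : 1 - 1 / p' = 1 / p := by linarith
    rw [q, one_div_one_div] at hl
    calc _ ≤ ENNReal.ofReal p * M t ^ (1 / p) * G t := by gcongr
      _ = ENNReal.ofReal p * (M t ^ (1 / p) * w t ^ (1 / p')) * (ψ t * f t ^ p) := by
        simp only [hG]; ring
      _ ≤ _ := by
        gcongr
        exact hB t ht
  have hBB : B ^ (p - 1) * B = B ^ p := by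
    have hp10 : 0 ≤ p - 1 := by linarith
    have := ENNReal.rpow_add_of_nonneg (x := B) (p - 1) 1 hp10 zero_le_one
    rw [ENNReal.rpow_one] at this
    rw [← this]; congr 1; ring
  calc ∫⁻ s in Set.Ioi 0, (∫⁻ t in Set.Ioo 0 s, f t) ^ p ∂μ
      ≤ ∫⁻ s in Set.Ioi 0, c * (∫⁻ t in Set.Ioi 0, K s t) ∂μ := by
        refine lintegral_mono_ae ?_
        filter_upwards [step1] with s hs
        rwa [← step2]
    _ = c * ∫⁻ s in Set.Ioi 0, (∫⁻ t in Set.Ioi 0, K s t) ∂μ :=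
        lintegral_const_mul _ hKm.lintegral_prod_right'
    _ = c * ∫⁻ t in Set.Ioi 0, ∫⁻ s in Set.Ioi 0, K s t ∂μ := by
        rw [lintegral_lintegral_swap hKm.aemeasurable]
    _ ≤ c * ∫⁻ t in Set.Ioi 0, ENNReal.ofReal p * B * (ψ t * f t ^ p) := by
        gcongr c * ?_
        exact setLIntegral_mono' measurableSet_Ioi fun t ht => step3 t ht
    _ = _ := by
        have hmm : Measurable fun t => (ψ t : ℝ≥0∞) * f t ^ p :=
          hψ.coe_nnreal_ennreal.mul (hf.pow_const _)
        rw [lintegral_const_mul _ hmm, hc, ← hBB]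
        ring

theorem hardy_nec (μ ν : Measure ℝ)
    (ψ : ℝ → ℝ≥0) (hψ : Measurable ψ)
    (σ : Measure ℝ) (hσ : σ.MutuallySingular (volume.restrict (Set.Ioi 0)))
    (hdec : ν = (volume.restrict (Set.Ioi 0)).withDensity (fun x => (ψ x : ℝ≥0∞)) + σ)
    (p p' : ℝ) (hpq : p.HolderConjugate p') (C : ℝ≥0∞)
    (hC : ∀ f : ℝ → ℝ≥0∞, Measurable f →
        ∫⁻ s in Set.Ioi 0, (∫⁻ t in Set.Ioo 0 s, f t) ^ p ∂μ ≤
          C ^ p * ∫⁻ x in Set.Ioi 0, f x ^ p ∂ν) (r : ℝ) (hr : 0 < r) :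
    μ (Set.Ici r) ^ (1 / p) *
      (∫⁻ x in Set.Ioo 0 r, ((ψ x : ℝ≥0∞)) ^ (-(p' / p))) ^ (1 / p') ≤ C := by
  set h : ℝ → ℝ≥0∞ := fun x => (ψ x : ℝ≥0∞) ^ (-(p' / p)) with hh
  have hm : Measurable h := (hψ.coe_nnreal_ennreal).pow_const _
  have hp0 := hpq.pos
  have hp'0 := hpq.symm.pos
  have hp1 := hpq.lt
  have hconj : 1 / p + 1 / p' = 1 := by
    simpa using hpq.inv_add_inv_eq_one
  have hpp : p / p' = p - 1 := by field_simp at hconj ⊢; linarith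
  have hp10 : 0 < p - 1 := by linarith
  have hψh : ∀ x, (ψ x : ℝ≥0∞) * h x ^ (p - 1) ≤ 1 := by
    intro x
    simp only [hh]
    rw [← ENNReal.rpow_mul]
    have q : -(p' / p) * (p - 1) = -1 := by rw [← hpp]; field_simp
    rw [q, ENNReal.rpow_neg_one]
    exact ENNReal.mul_inv_le_one _
  obtain ⟨S, hS, hσS, hvS⟩ := hσ
  set hn : ℕ → ℝ → ℝ≥0∞ := fun n x => min (h x) n with hhn
  have hnm : ∀ n, Measurable (hn n) := fun n => hm.min measurable_const
  set W : ℕ → ℝ≥0∞ := fun n => ∫⁻ x in Set.Ioo 0 r, hn n x with hW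
  have hWt : ∀ n, W n ≠ ⊤ := by
    intro n
    have : W n ≤ ∫⁻ x in Set.Ioo 0 r, (n : ℝ≥0∞) := lintegral_mono fun x => min_le_right _ _
    refine ne_top_of_le_ne_top ?_ this
    simp [ENNReal.mul_eq_top]
  have hpow : ∀ x : ℝ≥0∞, x ^ p = x ^ (p - 1) * x := by
    intro x
    have := ENNReal.rpow_add_of_nonneg (x := x) (p - 1) 1 hp10.le zero_le_one
    rw [ENNReal.rpow_one] at this
    rw [← this]; congr 1; ring
  have main : ∀ n, μ (Set.Ici r) * W n ^ (p - 1) ≤ C ^ p := by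
    intro n
    set f : ℝ → ℝ≥0∞ := (S ∩ Set.Ioo 0 r).indicator (hn n) with hf
    have hSm : MeasurableSet (S ∩ Set.Ioo 0 r) := hS.inter measurableSet_Ioo
    have hfm : Measurable f := (hnm n).indicator hSm
    have h1 := hC f hfm
    have hfW : ∀ s, r ≤ s → W n ≤ ∫⁻ t in Set.Ioo 0 s, f t := by
      intro s hrs
      have hae : ∀ᵐ x ∂(volume.restrict (Set.Ioo 0 r)), hn n x = f x := by
        have hx1 : ∀ᵐ x ∂(volume.restrict (Set.Ioi (0:ℝ))), x ∈ S := by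
          rw [ae_iff]; exact hvS
        have hx2 := ae_restrict_of_ae_restrict_of_subset
          (Set.Ioo_subset_Ioi_self : Set.Ioo 0 r ⊆ Set.Ioi 0) hx1
        filter_upwards [hx2, ae_restrict_mem measurableSet_Ioo] with x hx hxr
        have hx3 : x ∈ S ∩ Set.Ioo 0 r := ⟨hx, hxr⟩
        rw [hf, Set.indicator_of_mem hx3]
      calc W n = ∫⁻ t in Set.Ioo 0 r, f t := lintegral_congr_ae hae
        _ ≤ _ := lintegral_mono_set (Set.Ioo_subset_Ioo_right hrs)
    have hL : μ (Set.Ici r) * W n ^ p ≤ ∫⁻ s in Set.Ioi 0, (∫⁻ t in Set.Ioo 0 s, f t) ^ p ∂μ := by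
      calc μ (Set.Ici r) * W n ^ p = ∫⁻ s in Set.Ici r, W n ^ p ∂μ := by
            simp [mul_comm]
        _ ≤ ∫⁻ s in Set.Ici r, (∫⁻ t in Set.Ioo 0 s, f t) ^ p ∂μ :=
            setLIntegral_mono' measurableSet_Ici fun s hs =>
              ENNReal.rpow_le_rpow (hfW s hs) hp0.le
        _ ≤ _ := lintegral_mono_set fun s hs => lt_of_lt_of_le hr hs
    have hσ0 : ∫⁻ x, f x ^ p ∂σ = 0 := by
      rw [lintegral_eq_zero_iff (hfm.pow_const _)]
      have hx1 : ∀ᵐ x ∂σ, x ∉ S := by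
        rw [ae_iff]; simpa using hσS
      filter_upwards [hx1] with x hx
      have : f x = 0 := by
        rw [hf, Set.indicator_of_notMem (fun hc => hx hc.1)]
      simp [this, hp0]
    have hR : ∫⁻ x in Set.Ioi 0, f x ^ p ∂ν ≤ W n := by
      calc _ ≤ ∫⁻ x, f x ^ p ∂ν := lintegral_mono' Measure.restrict_le_self le_rfl
        _ = ∫⁻ x in Set.Ioi 0, ψ x * f x ^ p := by
          rw [hdec, lintegral_add_measure, hσ0, add_zero,
            lintegral_withDensity_eq_lintegral_mul _ hψ.coe_nnreal_ennreal (hfm.pow_const _)]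
          rfl
        _ ≤ ∫⁻ x in Set.Ioi 0, (Set.Ioo 0 r).indicator (hn n) x := by
          refine lintegral_mono fun x => ?_
          by_cases hx : x ∈ S ∩ Set.Ioo 0 r
          · rw [hf]
            simp only [Set.indicator_of_mem hx, Set.indicator_of_mem hx.2]
            rw [hpow, ← mul_assoc]
            calc (ψ x : ℝ≥0∞) * hn n x ^ (p - 1) * hn n x
                ≤ ψ x * h x ^ (p - 1) * hn n x := by
                  gcongr
                  exact min_le_left _ _
              _ ≤ 1 * hn n x := by gcongr; exact hψh x
              _ = _ := one_mul _
          · rw [hf]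
            simp only [Set.indicator_of_notMem hx]
            simp [hp0]
        _ ≤ ∫⁻ x, (Set.Ioo 0 r).indicator (hn n) x := lintegral_mono' Measure.restrict_le_self le_rfl
        _ = W n := lintegral_indicator measurableSet_Ioo _
    have h2 : μ (Set.Ici r) * W n ^ p ≤ C ^ p * W n :=
      hL.trans (h1.trans (by gcongr))
    by_cases hW0 : W n = 0
    · rw [hW0, ENNReal.zero_rpow_of_pos hp10]; simp
    · rw [hpow, ← mul_assoc] at h2
      exact (ENNReal.mul_le_mul_iff_left hW0 (hWt n)).1 h2
  have hsup : ∫⁻ x in Set.Ioo 0 r, h x = ⨆ n, W n := by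
    simp only [hW]
    rw [← lintegral_iSup hnm]
    · refine lintegral_congr fun x => ?_
      simp only [hhn]
      rw [← inf_iSup_eq, ENNReal.iSup_natCast]; simp
    · intro a b hab x
      simp only [hhn]
      exact min_le_min le_rfl (by exact_mod_cast hab)
  have hfin : μ (Set.Ici r) * (∫⁻ x in Set.Ioo 0 r, h x) ^ (p - 1) ≤ C ^ p := by
    rw [hsup]
    have : (⨆ n, W n) ^ (p - 1) = ⨆ n, W n ^ (p - 1) :=
      (ENNReal.orderIsoRpow (p - 1) hp10).map_iSup W
    rw [this, ENNReal.mul_iSup]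
    exact iSup_le main
  have h3 := ENNReal.rpow_le_rpow hfin (z := 1 / p) (by positivity)
  rw [ENNReal.mul_rpow_of_nonneg _ _ (by positivity), ← ENNReal.rpow_mul, ← ENNReal.rpow_mul] at h3
  have q1 : (p - 1) * (1 / p) = 1 / p' := by rw [← hpp]; field_simp
  have q2 : p * (1 / p) = 1 := by field_simp
  rwa [q1, q2, ENNReal.rpow_one] at h3

/-- The weighted Hardy inequality on `(0,+∞)` (Muckenhoupt's characterization): there is a
finite constant `C` such that `∫ (∫_{(0,s)} f dt)^p dμ(s) ≤ C^p ∫ f^p dν` for all nonnegative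
Borel `f` iff `B := sup_{r>0} μ([r,∞))^{1/p} (∫_{(0,r)} ψ^{-p'/p} dx)^{1/p'}` is finite;
moreover every admissible `C` satisfies `B ≤ C`, and `(p')^{1/p'} p^{1/p} B` is admissible. -/
theorem weighted_hardy_inequality
    (μ ν : Measure ℝ) [SigmaFinite ν]
    (hμ0 : μ (Set.Iic 0) = 0) (hν0 : ν (Set.Iic 0) = 0)
    (ψ : ℝ → ℝ≥0) (hψ : Measurable ψ)
    (σ : Measure ℝ) (hσ : σ.MutuallySingular (volume.restrict (Set.Ioi 0)))
    (hdec : ν = (volume.restrict (Set.Ioi 0)).withDensity (fun x => (ψ x : ℝ≥0∞)) + σ)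
    (p p' : ℝ) (hp : 1 < p) (hp' : p' = p / (p - 1))
    (B : ℝ≥0∞)
    (hB : B = ⨆ r ∈ Set.Ioi (0 : ℝ), μ (Set.Ici r) ^ (1 / p) *
      (∫⁻ x in Set.Ioo 0 r, ((ψ x : ℝ≥0∞)) ^ (-(p' / p))) ^ (1 / p')) :
    ((∃ C : ℝ≥0∞, C ≠ ⊤ ∧ ∀ f : ℝ → ℝ≥0∞, Measurable f →
        ∫⁻ s in Set.Ioi 0, (∫⁻ t in Set.Ioo 0 s, f t) ^ p ∂μ ≤
          C ^ p * ∫⁻ x in Set.Ioi 0, f x ^ p ∂ν) ↔ B ≠ ⊤) ∧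
    (∀ C : ℝ≥0∞, (∀ f : ℝ → ℝ≥0∞, Measurable f →
        ∫⁻ s in Set.Ioi 0, (∫⁻ t in Set.Ioo 0 s, f t) ^ p ∂μ ≤
          C ^ p * ∫⁻ x in Set.Ioi 0, f x ^ p ∂ν) → B ≤ C) ∧
    (B ≠ ⊤ → ∀ f : ℝ → ℝ≥0∞, Measurable f →
        ∫⁻ s in Set.Ioi 0, (∫⁻ t in Set.Ioo 0 s, f t) ^ p ∂μ ≤
          (ENNReal.ofReal (p' ^ (1 / p') * p ^ (1 / p)) * B) ^ p *
            ∫⁻ x in Set.Ioi 0, f x ^ p ∂ν) := by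
  have hpq : p.HolderConjugate p' := by
    rw [Real.holderConjugate_iff]
    refine ⟨hp, ?_⟩
    have : p - 1 ≠ 0 := by linarith
    rw [hp']; field_simp; ring
  have hnec : ∀ C : ℝ≥0∞, (∀ f : ℝ → ℝ≥0∞, Measurable f →
        ∫⁻ s in Set.Ioi 0, (∫⁻ t in Set.Ioo 0 s, f t) ^ p ∂μ ≤
          C ^ p * ∫⁻ x in Set.Ioi 0, f x ^ p ∂ν) → B ≤ C := by
    intro C hC
    rw [hB]
    exact iSup₂_le fun r hr => hardy_nec μ ν ψ hψ σ hσ hdec p p' hpq C hC r hr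
  have hsuff : B ≠ ⊤ → ∀ f : ℝ → ℝ≥0∞, Measurable f →
        ∫⁻ s in Set.Ioi 0, (∫⁻ t in Set.Ioo 0 s, f t) ^ p ∂μ ≤
          (ENNReal.ofReal (p' ^ (1 / p') * p ^ (1 / p)) * B) ^ p *
            ∫⁻ x in Set.Ioi 0, f x ^ p ∂ν := by
    intro hBt f hf
    have hp0 := hpq.pos
    have hp'0 := hpq.symm.pos
    refine (hardy_suff μ hμ0 ψ hψ p p' hpq B hBt (fun r hr => ?_) f hf).trans ?_
    · rw [hB]
      exact le_iSup₂ (f := fun r (_ : r ∈ Set.Ioi (0 : ℝ)) => μ (Set.Ici r) ^ (1 / p) *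
        (∫⁻ x in Set.Ioo 0 r, ((ψ x : ℝ≥0∞)) ^ (-(p' / p))) ^ (1 / p')) r hr
    · have hconj : 1 / p + 1 / p' = 1 := by
        simpa using hpq.inv_add_inv_eq_one
      have hpp : 1 / p' * p = p - 1 := by field_simp at hconj ⊢; linarith
      have q1 : 1 / p * p = 1 := by field_simp
      have e : (ENNReal.ofReal (p' ^ (1 / p') * p ^ (1 / p)) * B) ^ p =
          ENNReal.ofReal p' ^ (p - 1) * ENNReal.ofReal p * B ^ p := by
        rw [ENNReal.mul_rpow_of_nonneg _ _ hp0.le, ENNReal.ofReal_mul (by positivity),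
          ENNReal.mul_rpow_of_nonneg _ _ hp0.le, ← ENNReal.ofReal_rpow_of_pos hp0,
          ← ENNReal.ofReal_rpow_of_pos hp'0, ← ENNReal.rpow_mul, ← ENNReal.rpow_mul, hpp, q1,
          ENNReal.rpow_one]
      rw [e]
      gcongr _ * ?_
      have : ∫⁻ x in Set.Ioi 0, ψ x * f x ^ p =
          ∫⁻ x in Set.Ioi 0, f x ^ p
            ∂((volume.restrict (Set.Ioi 0)).withDensity (fun x => (ψ x : ℝ≥0∞))) := by
        rw [restrict_withDensity measurableSet_Ioi, Measure.restrict_restrict measurableSet_Ioi,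
          Set.inter_self,
          lintegral_withDensity_eq_lintegral_mul _ hψ.coe_nnreal_ennreal (hf.pow_const _)]
        rfl
      rw [this]
      refine lintegral_mono' (Measure.restrict_mono le_rfl ?_) le_rfl
      rw [hdec]
      exact Measure.le_add_right le_rfl
  refine ⟨⟨?_, fun hBt => ⟨_, ?_, hsuff hBt⟩⟩, hnec, hsuff⟩
  · rintro ⟨C, hCt, hC⟩
    exact ne_top_of_le_ne_top hCt (hnec C hC)
  · exact ENNReal.mul_ne_top ENNReal.ofReal_ne_top hBt
end
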